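/- Let q be a braiding matrix with connected Dynkin diagram such that B_q is finite dimensional, let B be a pre-Nichols algebra of q with finite GKdim, and let i,j ∈ I_θ. Assume the rank-two Dynkin diagram (q_{ii}, q̃_{ij}, q_{jj}) of vertices i,j is one of: (−ζ^{−2}, ζ^{−1}, ζ) with ζ ∈ G_12' (type ufo(7)); (−ζ², ζ³, −1) with ζ ∈ G_12' (type ufo(8)); (ζ⁶, ζ, ζ^{−1}) with ζ ∈ G_24' (type ufo(9)); (−ζ, −ζ^{−3}, ζ⁵) with ζ ∈ G_15' (type ufo(11)); (−ζ, ζ^{−2}, ζ³) with ζ ∈ G_9' (type brj(2,3)); (ζ, −1, −1) with ζ ∈ G_6' (type G_2). Then [x_{3α_i+2α_j}, x_{ij}]_c = 0 in B. -/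

import Mathlib

/-
Common framework for formalizing statements from
"Finite GK-dimensional pre-Nichols algebras of (super)modular and unidentified type"
(Angiono, Campagnolo, Sanmarco).

We work over `ℂ` (an algebraically closed field of characteristic zero).
A braiding matrix is `q : Fin θ → Fin θ → ℂˣ`.  The tensor algebra `T(V)` of the
associated braided vector space of diagonal type is realized as the free algebra
on `Fin θ`.  The braided bialgebra structure on `T(V)` (the braided coproduct,
uniquely determined by the braiding matrix) is packaged in the structure
`BraidedStr`: its fields characterize it uniquely, so quantifying over
`S : BraidedStr θ q` is equivalent to using "the" braided coproduct.

A pre-Nichols algebra of `q` is the quotient `T(V)/I` by an ℕ₀-homogeneous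
(two-sided) braided bi-ideal `I` generated in degrees ≥ 2 (`IsPreNicholsIdeal`);
such an ideal is automatically contained in the defining ideal `Jq` of the
Nichols algebra, which is the largest such ideal.  A statement
"`x = 0` holds in the pre-Nichols algebra `T(V)/I`" is formalized as `x ∈ I`.
-/

open scoped TensorProduct

noncomputable section

namespace PreNicholsPaper

/-- The tensor algebra `T(V)` of the braided vector space of diagonal type of rank `θ`. -/
abbrev TV (θ : ℕ) := FreeAlgebra ℂ (Fin θ)

/-- The generator `x_i` of `T(V)`. -/
def gen (θ : ℕ) (i : Fin θ) : TV θ := FreeAlgebra.ι ℂ i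

/-- The monomial `x_{i_1} ⋯ x_{i_n}` associated to a word. -/
def wordElem (θ : ℕ) (w : List (Fin θ)) : TV θ := (w.map (gen θ)).prod

/-- The multidegree in `ℕ₀^θ` of a word. -/
def degW (θ : ℕ) (w : List (Fin θ)) : Fin θ → ℕ := fun i => w.count i

/-- `α_i`, the `i`-th canonical basis vector of `ℕ₀^θ`. -/
def δ (θ : ℕ) (i : Fin θ) : Fin θ → ℕ := fun k => if k = i then 1 else 0

/-- The bilinear form `ℕ₀^θ × ℕ₀^θ → ℂˣ` attached to the braiding matrix,
`q(α_i, α_j) = q_{ij}`, evaluated in `ℂ`. -/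
def qf {θ : ℕ} (q : Fin θ → Fin θ → ℂˣ) (a b : Fin θ → ℕ) : ℂ :=
  ∏ i : Fin θ, ∏ j : Fin θ, (q i j : ℂ) ^ (a i * b j)

/-- `q̃_{ij} = q_{ij} q_{ji}`. -/
def qtil {θ : ℕ} (q : Fin θ → Fin θ → ℂˣ) (i j : Fin θ) : ℂ := (q i j : ℂ) * (q j i : ℂ)

/-- The braided commutator `[u,v]_c = uv - q(a,b) vu` of elements `u, v`
which are homogeneous of multidegrees `a`, `b` respectively. -/
def brk {θ : ℕ} (q : Fin θ → Fin θ → ℂˣ) (a b : Fin θ → ℕ) (u v : TV θ) : TV θ :=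
  u * v - qf q a b • (v * u)

/-- `(ad_c x_i) y = x_i y - q(α_i, b) y x_i` for `y` homogeneous of multidegree `b`. -/
def ad1 {θ : ℕ} (q : Fin θ → Fin θ → ℂˣ) (i : Fin θ) (b : Fin θ → ℕ) (y : TV θ) : TV θ :=
  brk q (δ θ i) b (gen θ i) y

/-- The iterated braided adjoint `x_{i_1 i_2 ⋯ i_k} = (ad_c x_{i_1}) x_{i_2 ⋯ i_k}`. -/
def xw {θ : ℕ} (q : Fin θ → Fin θ → ℂˣ) : List (Fin θ) → TV θ
  | [] => 1
  | [i] => gen θ i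
  | i :: w => ad1 q i (degW θ w) (xw q w)

/-- `(ad_c x_i)^m x_j`. -/
def adpow {θ : ℕ} (q : Fin θ → Fin θ → ℂˣ) (i j : Fin θ) : ℕ → TV θ
  | 0 => gen θ j
  | m + 1 => ad1 q i (fun k => m * δ θ i k + δ θ j k) (adpow q i j m)

/-- The homogeneous component of total degree `n` of `T(V)`. -/
def homogTot (θ : ℕ) (n : ℕ) : Submodule ℂ (TV θ) :=
  Submodule.span ℂ {x | ∃ w : List (Fin θ), w.length = n ∧ x = wordElem θ w}

/-- The homogeneous component of multidegree `d ∈ ℕ₀^θ` of `T(V)`. -/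
def homogD (θ : ℕ) (d : Fin θ → ℕ) : Submodule ℂ (TV θ) :=
  Submodule.span ℂ {x | ∃ w : List (Fin θ), degW θ w = d ∧ x = wordElem θ w}

/-- The braided bialgebra structure on `T(V)` determined by the braiding matrix `q`:
the braided coproduct `Δ` together with the multiplication `mulB` of the braided
tensor product `T(V) ⊗ T(V)`.  These axioms determine `Δ` and `mulB` uniquely. -/
structure BraidedStr (θ : ℕ) (q : Fin θ → Fin θ → ℂˣ) where
  Δ : TV θ →ₗ[ℂ] TensorProduct ℂ (TV θ) (TV θ)
  mulB : TensorProduct ℂ (TV θ) (TV θ) →ₗ[ℂ]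
    TensorProduct ℂ (TV θ) (TV θ) →ₗ[ℂ] TensorProduct ℂ (TV θ) (TV θ)
  mulB_spec : ∀ (a d : TV θ) (wb wc : List (Fin θ)),
    mulB (a ⊗ₜ[ℂ] wordElem θ wb) (wordElem θ wc ⊗ₜ[ℂ] d)
      = qf q (degW θ wb) (degW θ wc) • ((a * wordElem θ wc) ⊗ₜ[ℂ] (wordElem θ wb * d))
  Δ_one : Δ 1 = 1 ⊗ₜ[ℂ] 1
  Δ_gen : ∀ i, Δ (gen θ i) = gen θ i ⊗ₜ[ℂ] 1 + 1 ⊗ₜ[ℂ] gen θ i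
  Δ_mul : ∀ u v : TV θ, Δ (u * v) = mulB (Δ u) (Δ v)

variable {θ : ℕ} {q : Fin θ → Fin θ → ℂˣ}

/-- `x` is a primitive element. -/
def IsPrimitiveIn (S : BraidedStr θ q) (x : TV θ) : Prop :=
  S.Δ x = x ⊗ₜ[ℂ] (1 : TV θ) + (1 : TV θ) ⊗ₜ[ℂ] x

/-- The submodule `I ⊗ T(V) + T(V) ⊗ J` of `T(V) ⊗ T(V)`. -/
def mixedPair (I J : Submodule ℂ (TV θ)) : Submodule ℂ (TensorProduct ℂ (TV θ) (TV θ)) :=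
  Submodule.span ℂ
    ({x | ∃ a b : TV θ, a ∈ I ∧ x = a ⊗ₜ[ℂ] b} ∪ {x | ∃ a b : TV θ, b ∈ J ∧ x = a ⊗ₜ[ℂ] b})

/-- The submodule `I ⊗ T(V) + T(V) ⊗ I` of `T(V) ⊗ T(V)`. -/
def mixedSub (I : Submodule ℂ (TV θ)) : Submodule ℂ (TensorProduct ℂ (TV θ) (TV θ)) :=
  mixedPair I I

/-- `I` is the defining ideal of a pre-Nichols algebra of `q`：an ℕ₀-homogeneous
two-sided (bi-)ideal of `T(V)` generated in degrees `≥ 2` which is also a coideal.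
Such an ideal is automatically contained in the defining ideal `Jq` of the Nichols
algebra, and the pre-Nichols algebra is the quotient `T(V)/I`. -/
structure IsPreNicholsIdeal (S : BraidedStr θ q) (I : Submodule ℂ (TV θ)) : Prop where
  mul_left : ∀ a x : TV θ, x ∈ I → a * x ∈ I
  mul_right : ∀ a x : TV θ, x ∈ I → x * a ∈ I
  homog_ge2 : I = Submodule.span ℂ {x | x ∈ I ∧ ∃ n, 2 ≤ n ∧ x ∈ homogTot θ n}
  coideal : ∀ x ∈ I, S.Δ x ∈ mixedSub I

/-- The defining ideal `J_q` of the Nichols algebra `B_q = T(V)/J_q`: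
the maximal homogeneous braided Hopf ideal generated in degrees `≥ 2`. -/
def Jq (S : BraidedStr θ q) : Submodule ℂ (TV θ) := sSup {I | IsPreNicholsIdeal S I}

/-- The standard filtration of `T(V)`: span of words of length `≤ n`. -/
def Wfil (θ : ℕ) (n : ℕ) : Submodule ℂ (TV θ) :=
  Submodule.span ℂ {x | ∃ w : List (Fin θ), w.length ≤ n ∧ x = wordElem θ w}

/-- The quotient algebra `T(V)/I` has finite Gelfand–Kirillov dimension, i.e.
the standard filtration of the (finitely generated) quotient has polynomial growth. -/
def FinGK (I : Submodule ℂ (TV θ)) : Prop :=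
  ∃ C d : ℕ, ∀ n : ℕ, Module.finrank ℂ ((Wfil θ n).map I.mkQ) ≤ C * (n + 1) ^ d

/-- The Gelfand–Kirillov dimension of the quotient algebra `T(V)/I`. -/
def GKdim (I : Submodule ℂ (TV θ)) : ℝ :=
  Filter.limsup
    (fun n : ℕ => Real.log (Module.finrank ℂ ((Wfil θ n).map I.mkQ)) / Real.log n)
    Filter.atTop

/-- `I` defines an eminent pre-Nichols algebra: it is a finite-GKdim pre-Nichols
algebra, and every finite-GKdim pre-Nichols algebra of `q` is a quotient of it. -/
def IsEminent (S : BraidedStr θ q) (I : Submodule ℂ (TV θ)) : Prop :=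
  IsPreNicholsIdeal S I ∧ FinGK I ∧
    ∀ I' : Submodule ℂ (TV θ), IsPreNicholsIdeal S I' → FinGK I' → I ≤ I'

/-- The Dynkin diagram of the braiding matrix `q`: vertices `Fin θ`, an edge between
`i ≠ j` iff `q̃_{ij} ≠ 1`. -/
def dynkin {θ : ℕ} (q : Fin θ → Fin θ → ℂˣ) : SimpleGraph (Fin θ) :=
  SimpleGraph.fromRel (fun i j => qtil q i j ≠ 1)

/-- The quantum number `(m)_t = 1 + t + ⋯ + t^{m-1}`. -/
def qnum (t : ℂ) (m : ℕ) : ℂ := ∑ k ∈ Finset.range m, t ^ k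

/-- The set of `n ∈ ℕ₀` such that `(n+1)_{q_{ii}} (1 - q_{ii}^n q̃_{ij}) = 0`,
i.e. such that `(ad_c x_i)^{n+1} x_j = 0` in the Nichols algebra.  The entry
`c_{ij}` of the generalized Cartan matrix is `-(min of this set)`. -/
def cSet {θ : ℕ} (q : Fin θ → Fin θ → ℂˣ) (i j : Fin θ) : Set ℕ :=
  {n | qnum (q i i : ℂ) (n + 1) * (1 - (q i i : ℂ) ^ n * qtil q i j) = 0}

/-- The generalized Cartan matrix of `q`. -/
def cij {θ : ℕ} (q : Fin θ → Fin θ → ℂˣ) (i j : Fin θ) : ℤ :=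
  if i = j then 2 else -(Int.ofNat (sInf (cSet q i j)))

/-- All entries `c_{ij}` are defined at the vertex `i`. -/
def reflectable {θ : ℕ} (q : Fin θ → Fin θ → ℂˣ) (i : Fin θ) : Prop :=
  ∀ j, j ≠ i → (cSet q i j).Nonempty

/-- The `i`-th reflection of the braiding matrix:
`(r_i q)_{jk} = q(s_i α_j, s_i α_k)` where `s_i α_j = α_j - c_{ij} α_i`. -/
def reflectMat {θ : ℕ} (q : Fin θ → Fin θ → ℂˣ) (i : Fin θ) : Fin θ → Fin θ → ℂˣ :=
  fun j k =>
    q j k * q j i ^ (-(cij q i k)) * q i k ^ (-(cij q i j)) * q i i ^ (cij q i j * cij q i k)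

/-- The reflection `s_i` acting on `ℤ^θ`. -/
def sRefl {θ : ℕ} (q : Fin θ → Fin θ → ℂˣ) (i : Fin θ) (β : Fin θ → ℤ) : Fin θ → ℤ :=
  fun k => β k - (if k = i then ∑ j, cij q i j * β j else 0)

/-- The (real) roots of `q`, together with the base points of the Weyl groupoid at
which they live: pairs `(q', β)` obtained from a simple root of `q` by iterated
reflections. -/
inductive ReachRoot {θ : ℕ} (q₀ : Fin θ → Fin θ → ℂˣ) :
    (Fin θ → Fin θ → ℂˣ) → (Fin θ → ℤ) → Prop
  | simple (j : Fin θ) : ReachRoot q₀ q₀ (fun k => if k = j then 1 else 0)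
  | reflect {q' : Fin θ → Fin θ → ℂˣ} {β : Fin θ → ℤ} (i : Fin θ) :
      ReachRoot q₀ q' β → ReachRoot q₀ (reflectMat q' i) (sRefl q' i β)

/-- `q` has a finite (generalized) root system: all reflections are defined at every
point of the Weyl groupoid, and the set of roots so obtained is finite. -/
def FiniteRootSystem {θ : ℕ} (q : Fin θ → Fin θ → ℂˣ) : Prop :=
  (∀ q' i, (∃ β, ReachRoot q q' β) → reflectable q' i) ∧
    Set.Finite {β : Fin θ → ℤ | ∃ q', ReachRoot q q' β}

/-- Conjecture (Andruskiewitsch–Angiono–Heckenberger): the root system of a Nichols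
algebra of diagonal type with finite Gelfand–Kirillov dimension is finite. -/
def AAH : Prop :=
  ∀ (θ : ℕ) (q : Fin θ → Fin θ → ℂˣ) (S : BraidedStr θ q), FinGK (Jq S) → FiniteRootSystem q

/-- The two-sided ideal of `T(V)` generated by a set. -/
def idealGen (θ : ℕ) (s : Set (TV θ)) : Submodule ℂ (TV θ) :=
  Submodule.span ℂ {x | ∃ g ∈ s, ∃ a b : TV θ, x = a * g * b}

end PreNicholsPaper

namespace PreNicholsPaper

/-! ### Words -/

/-- The basis of `T(V)` given by words. -/
def wordBasis (θ : ℕ) : Module.Basis (List (Fin θ)) ℂ (TV θ) :=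
  (FreeAlgebra.basisFreeMonoid ℂ (Fin θ)).reindex FreeMonoid.toList

lemma wordElem_nil (θ : ℕ) : wordElem θ [] = 1 := rfl

lemma wordElem_cons (θ : ℕ) (i : Fin θ) (w : List (Fin θ)) :
    wordElem θ (i :: w) = gen θ i * wordElem θ w := by simp [wordElem]

lemma wordElem_append (θ : ℕ) (v w : List (Fin θ)) :
    wordElem θ (v ++ w) = wordElem θ v * wordElem θ w := by simp [wordElem]

lemma wordElem_singleton (θ : ℕ) (i : Fin θ) : wordElem θ [i] = gen θ i := by simp [wordElem]

lemma wordBasis_apply {θ : ℕ} (w : List (Fin θ)) : wordBasis θ w = wordElem θ w := by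
  have h : ∀ w : List (Fin θ), (FreeAlgebra.equivMonoidAlgebraFreeMonoid (R := ℂ))
      (wordElem θ w) = MonoidAlgebra.single (FreeMonoid.ofList w) 1 := by
    intro w
    induction w with
    | nil => rw [wordElem_nil, map_one]; rfl
    | cons i w ih =>
      rw [wordElem_cons, map_mul, ih]
      have : (FreeAlgebra.equivMonoidAlgebraFreeMonoid (R := ℂ)) (gen θ i)
          = MonoidAlgebra.single (FreeMonoid.of i) 1 := by
        simp [gen, FreeAlgebra.equivMonoidAlgebraFreeMonoid, MonoidAlgebra.of_apply]
      rw [this, MonoidAlgebra.single_mul_single, one_mul]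
      rfl
  have h2 := h w
  rw [← AlgEquiv.eq_symm_apply] at h2
  rw [h2]
  simp [wordBasis, FreeAlgebra.basisFreeMonoid]

lemma word_induction {θ : ℕ} {P : TV θ → Prop} (x : TV θ)
    (hw : ∀ w, P (wordElem θ w)) (h0 : P 0) (ha : ∀ x y, P x → P y → P (x + y))
    (hs : ∀ (c : ℂ) x, P x → P (c • x)) : P x := by
  have hx : x ∈ Submodule.span ℂ (Set.range (wordBasis θ)) := by
    rw [(wordBasis θ).span_eq]; trivial
  induction hx using Submodule.span_induction with
  | mem x h => obtain ⟨w, rfl⟩ := h; rw [wordBasis_apply]; exact hw w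
  | zero => exact h0
  | add x y _ _ h1 h2 => exact ha x y h1 h2
  | smul c x _ h => exact hs c x h

lemma word_ext {θ : ℕ} {M : Type*} [AddCommMonoid M] [Module ℂ M] {f g : TV θ →ₗ[ℂ] M}
    (h : ∀ w, f (wordElem θ w) = g (wordElem θ w)) : f = g :=
  (wordBasis θ).ext fun w => by rw [wordBasis_apply]; exact h w

lemma tensor_word_ext {θ : ℕ} {M : Type*} [AddCommMonoid M] [Module ℂ M]
    {f g : TV θ ⊗[ℂ] TV θ →ₗ[ℂ] M}
    (h : ∀ v w, f (wordElem θ v ⊗ₜ wordElem θ w) = g (wordElem θ v ⊗ₜ wordElem θ w)) : f = g :=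
  TensorProduct.ext (word_ext fun v => word_ext fun w => h v w)

/-! ### The bicharacter -/

lemma degW_append {θ : ℕ} (v w : List (Fin θ)) : degW θ (v ++ w) = degW θ v + degW θ w := by
  funext i; simp [degW]

lemma degW_nil {θ : ℕ} : degW θ [] = 0 := by funext i; simp [degW]

lemma degW_singleton {θ : ℕ} (i : Fin θ) : degW θ [i] = δ θ i := by
  funext k
  by_cases h : k = i
  · simp [degW, δ, h]
  · simp [degW, δ, h, Ne.symm h]

section

variable {θ : ℕ} (q : Fin θ → Fin θ → ℂˣ)

lemma qf_add_left (a b c : Fin θ → ℕ) : qf q (a + b) c = qf q a c * qf q b c := by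
  simp [qf, add_mul, pow_add, Finset.prod_mul_distrib]

lemma qf_add_right (a b c : Fin θ → ℕ) : qf q a (b + c) = qf q a b * qf q a c := by
  simp [qf, mul_add, pow_add, Finset.prod_mul_distrib]

lemma qf_zero_left (a : Fin θ → ℕ) : qf q 0 a = 1 := by simp [qf]

lemma qf_zero_right (a : Fin θ → ℕ) : qf q a 0 = 1 := by simp [qf]

lemma qf_ne_zero (a b : Fin θ → ℕ) : qf q a b ≠ 0 := by
  simp [qf, Finset.prod_ne_zero_iff]

lemma qf_δ (i j : Fin θ) : qf q (δ θ i) (δ θ j) = q i j := by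
  unfold qf
  rw [Finset.prod_eq_single i, Finset.prod_eq_single j]
  · simp [δ]
  · intro b _ hb; simp [δ, hb]
  · simp
  · intro b _ hb; simp [δ, hb]
  · simp

/-! ### The braided tensor square -/

/-- The multiplication of the braided tensor product `T(V) ⊗ T(V)`. -/
def braidedMul : TV θ ⊗[ℂ] TV θ →ₗ[ℂ] TV θ ⊗[ℂ] TV θ →ₗ[ℂ] TV θ ⊗[ℂ] TV θ :=
  ((wordBasis θ).tensorProduct (wordBasis θ)).constr ℂ fun v =>
    ((wordBasis θ).tensorProduct (wordBasis θ)).constr ℂ fun w =>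
      qf q (degW θ v.2) (degW θ w.1) • (wordElem θ (v.1 ++ w.1) ⊗ₜ[ℂ] wordElem θ (v.2 ++ w.2))

lemma braidedMul_word (u v w x : List (Fin θ)) :
    braidedMul q (wordElem θ u ⊗ₜ wordElem θ v) (wordElem θ w ⊗ₜ wordElem θ x) =
      qf q (degW θ v) (degW θ w) • ((wordElem θ u * wordElem θ w) ⊗ₜ[ℂ]
        (wordElem θ v * wordElem θ x)) := by
  have h : ∀ a b : List (Fin θ), wordElem θ a ⊗ₜ[ℂ] wordElem θ b =
      ((wordBasis θ).tensorProduct (wordBasis θ)) (a, b) := by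
    intro a b; simp [Module.Basis.tensorProduct_apply, wordBasis_apply]
  rw [h u v, h w x, braidedMul, Module.Basis.constr_basis, Module.Basis.constr_basis]
  simp only [wordElem_append]

lemma braidedMul_spec (a d : TV θ) (v w : List (Fin θ)) :
    braidedMul q (a ⊗ₜ wordElem θ v) (wordElem θ w ⊗ₜ d) =
      qf q (degW θ v) (degW θ w) • ((a * wordElem θ w) ⊗ₜ[ℂ] (wordElem θ v * d)) := by
  induction a using word_induction with
  | hw u =>
    induction d using word_induction with
    | hw x => exact braidedMul_word q u v w x
    | h0 => simp
    | ha x y hx hy => simp only [TensorProduct.tmul_add, mul_add, map_add, hx, hy, smul_add]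
    | hs c x hx =>
      simp only [TensorProduct.tmul_smul, mul_smul_comm, map_smul, hx, smul_comm c]
  | h0 => simp
  | ha x y hx hy =>
    simp only [TensorProduct.add_tmul, add_mul, map_add, LinearMap.add_apply, hx, hy, smul_add]
  | hs c x hx =>
    simp only [← TensorProduct.smul_tmul', smul_mul_assoc, map_smul, LinearMap.smul_apply, hx,
      smul_comm c]

lemma tensor_word_induction {P : TV θ ⊗[ℂ] TV θ → Prop} (x : TV θ ⊗[ℂ] TV θ)
    (hw : ∀ v w, P (wordElem θ v ⊗ₜ wordElem θ w)) (h0 : P 0)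
    (ha : ∀ x y, P x → P y → P (x + y)) (hs : ∀ (c : ℂ) x, P x → P (c • x)) : P x := by
  induction x using TensorProduct.induction_on with
  | zero => exact h0
  | add x y hx hy => exact ha x y hx hy
  | tmul a b =>
    induction a using word_induction with
    | hw v =>
      induction b using word_induction with
      | hw w => exact hw v w
      | h0 => simpa using h0
      | ha x y hx hy => rw [TensorProduct.tmul_add]; exact ha _ _ hx hy
      | hs c x hx => rw [TensorProduct.tmul_smul]; exact hs c _ hx
    | h0 => simpa using h0
    | ha x y hx hy => rw [TensorProduct.add_tmul]; exact ha _ _ hx hy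
    | hs c x hx => rw [← TensorProduct.smul_tmul']; exact hs c _ hx

lemma braidedMul_assoc (x y z : TV θ ⊗[ℂ] TV θ) :
    braidedMul q (braidedMul q x y) z = braidedMul q x (braidedMul q y z) := by
  induction x using tensor_word_induction with
  | hw a b =>
    induction y using tensor_word_induction with
    | hw c d =>
      induction z using tensor_word_induction with
      | hw e f =>
        simp only [braidedMul_word, map_smul, LinearMap.smul_apply, ← wordElem_append,
          degW_append, qf_add_left, qf_add_right, smul_smul, List.append_assoc]
        congr 1; ring
      | h0 => simp
      | ha x y hx hy => simp only [map_add, hx, hy]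
      | hs k x hx => simp only [map_smul, hx]
    | h0 => simp
    | ha x y hx hy => simp only [map_add, LinearMap.add_apply, hx, hy]
    | hs k x hx => simp only [map_smul, LinearMap.smul_apply, hx]
  | h0 => simp
  | ha x y hx hy => simp only [map_add, LinearMap.add_apply, hx, hy]
  | hs k x hx => simp only [map_smul, LinearMap.smul_apply, hx]

lemma braidedMul_one_left (x : TV θ ⊗[ℂ] TV θ) : braidedMul q (1 ⊗ₜ 1) x = x := by
  induction x using tensor_word_induction with
  | hw a b =>
    rw [← wordElem_nil, braidedMul_word, degW_nil, qf_zero_left]; simp [wordElem_nil]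
  | h0 => simp
  | ha x y hx hy => simp only [map_add, hx, hy]
  | hs k x hx => simp only [map_smul, hx]

lemma braidedMul_one_right (x : TV θ ⊗[ℂ] TV θ) : braidedMul q x (1 ⊗ₜ 1) = x := by
  induction x using tensor_word_induction with
  | hw a b =>
    rw [← wordElem_nil, braidedMul_word, degW_nil, qf_zero_right]; simp [wordElem_nil]
  | h0 => simp
  | ha x y hx hy => simp only [map_add, LinearMap.add_apply, hx, hy]
  | hs k x hx => simp only [map_smul, LinearMap.smul_apply, hx]

/-- `T(V) ⊗ T(V)` with the braided multiplication. -/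
def BT (_q : Fin θ → Fin θ → ℂˣ) : Type := TV θ ⊗[ℂ] TV θ

instance : AddCommGroup (BT q) := inferInstanceAs (AddCommGroup (TV θ ⊗[ℂ] TV θ))

instance : Module ℂ (BT q) := inferInstanceAs (Module ℂ (TV θ ⊗[ℂ] TV θ))

/-- The identification of the underlying space of the braided tensor square. -/
def BT.of : TV θ ⊗[ℂ] TV θ ≃ₗ[ℂ] BT q := LinearEquiv.refl ℂ _

instance : Mul (BT q) := ⟨fun x y => braidedMul q x y⟩

instance : One (BT q) := ⟨((1 : TV θ) ⊗ₜ[ℂ] (1 : TV θ) : TV θ ⊗[ℂ] TV θ)⟩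

lemma BT.of_mul_of (x y : TV θ ⊗[ℂ] TV θ) :
    BT.of q x * BT.of q y = BT.of q (braidedMul q x y) := rfl

lemma BT.one_def : (1 : BT q) = BT.of q (1 ⊗ₜ 1) := rfl

instance : Ring (BT q) :=
  { (inferInstance : AddCommGroup (BT q)), (inferInstance : Mul (BT q)),
    (inferInstance : One (BT q)) with
    left_distrib := fun x y z => map_add (braidedMul q x) y z
    right_distrib := fun x y z => LinearMap.map_add₂ (braidedMul q) x y z
    zero_mul := fun x => LinearMap.map_zero₂ (braidedMul q) x
    mul_zero := fun x => map_zero (braidedMul q x)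
    mul_assoc := braidedMul_assoc q
    one_mul := braidedMul_one_left q
    mul_one := braidedMul_one_right q }

instance : Algebra ℂ (BT q) :=
  Algebra.ofModule (fun r x y => LinearMap.map_smul₂ (braidedMul q) r x y)
    (fun r x y => map_smul (braidedMul q x) r y)

/-- The first embedding of `T(V)` in the braided tensor square. -/
def BT.inl : TV θ →ₐ[ℂ] BT q :=
  AlgHom.ofLinearMap ((BT.of q).toLinearMap ∘ₗ (TensorProduct.mk ℂ _ _).flip 1) rfl
    fun x y => by
      simp only [LinearMap.comp_apply, LinearMap.flip_apply, TensorProduct.mk_apply,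
        LinearEquiv.coe_coe, BT.of_mul_of]
      induction y using word_induction with
      | hw w =>
        rw [← wordElem_nil, braidedMul_spec, degW_nil, qf_zero_left, one_smul, ← wordElem_append]
        rfl
      | h0 => simp
      | ha x y hx hy => simp only [mul_add, TensorProduct.add_tmul, map_add, hx, hy]
      | hs c x hx =>
        simp only [mul_smul_comm, ← TensorProduct.smul_tmul', map_smul, hx]

/-- The second embedding of `T(V)` in the braided tensor square. -/
def BT.inr : TV θ →ₐ[ℂ] BT q :=
  AlgHom.ofLinearMap ((BT.of q).toLinearMap ∘ₗ TensorProduct.mk ℂ _ _ 1) rfl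
    fun x y => by
      simp only [LinearMap.comp_apply, TensorProduct.mk_apply,
        LinearEquiv.coe_coe, BT.of_mul_of]
      induction x using word_induction with
      | hw w =>
        rw [← wordElem_nil, braidedMul_spec, degW_nil, qf_zero_right, one_smul, ← wordElem_append]
        rfl
      | h0 => simp
      | ha x y hx hy =>
        simp only [add_mul, TensorProduct.tmul_add, map_add, LinearMap.add_apply, hx, hy]
      | hs c x hx =>
        simp only [smul_mul_assoc, TensorProduct.tmul_smul, map_smul, LinearMap.smul_apply, hx]

lemma BT.inl_apply (x : TV θ) : BT.inl q x = BT.of q (x ⊗ₜ 1) := rfl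

lemma BT.inr_apply (x : TV θ) : BT.inr q x = BT.of q (1 ⊗ₜ x) := rfl

lemma BT.inl_mul_inr (x y : TV θ) : BT.inl q x * BT.inr q y = BT.of q (x ⊗ₜ y) := by
  rw [BT.inl_apply, BT.inr_apply, BT.of_mul_of, ← wordElem_nil, braidedMul_spec, degW_nil,
    qf_zero_left, one_smul, wordElem_nil, one_mul, mul_one]

lemma BT.inr_mul_inl_word (v w : List (Fin θ)) :
    BT.inr q (wordElem θ v) * BT.inl q (wordElem θ w) =
      qf q (degW θ v) (degW θ w) • (BT.inl q (wordElem θ w) * BT.inr q (wordElem θ v)) := by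
  rw [BT.inl_mul_inr, BT.inl_apply, BT.inr_apply, BT.of_mul_of, braidedMul_spec, map_smul,
    one_mul, mul_one]

lemma BT.inr_mul_inl {a b : Fin θ → ℕ} {x y : TV θ} (hx : x ∈ homogD θ a) (hy : y ∈ homogD θ b) :
    BT.inr q x * BT.inl q y = qf q a b • (BT.inl q y * BT.inr q x) := by
  induction hx using Submodule.span_induction with
  | mem x h =>
    obtain ⟨v, rfl, rfl⟩ := h
    induction hy using Submodule.span_induction with
    | mem y h => obtain ⟨w, rfl, rfl⟩ := h; exact BT.inr_mul_inl_word q v w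
    | zero => simp
    | add x y _ _ h1 h2 => simp only [map_add, mul_add, add_mul, h1, h2, smul_add]
    | smul c x _ h => simp only [map_smul, mul_smul_comm, smul_mul_assoc, h, smul_comm c]
  | zero => simp
  | add x y _ _ h1 h2 => simp only [map_add, mul_add, add_mul, h1, h2, smul_add]
  | smul c x _ h => simp only [map_smul, mul_smul_comm, smul_mul_assoc, h, smul_comm c]

lemma BT.inl_inr_mul_inl_inr {β γ : Fin θ → ℕ} {b c : TV θ} (hb : b ∈ homogD θ β)
    (hc : c ∈ homogD θ γ) (a d : TV θ) :
    BT.inl q a * BT.inr q b * (BT.inl q c * BT.inr q d) =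
      qf q β γ • (BT.inl q (a * c) * BT.inr q (b * d)) := by
  rw [mul_assoc, ← mul_assoc (BT.inr q b), BT.inr_mul_inl q hb hc, map_mul, map_mul,
    smul_mul_assoc, mul_smul_comm]
  simp only [mul_assoc]

lemma wordElem_mem_homogD (w : List (Fin θ)) : wordElem θ w ∈ homogD θ (degW θ w) :=
  Submodule.subset_span ⟨w, rfl, rfl⟩

/-- The braided coproduct as an algebra morphism into the braided tensor square. -/
def braidedΔ : TV θ →ₐ[ℂ] BT q :=
  FreeAlgebra.lift ℂ fun i => BT.inl q (gen θ i) + BT.inr q (gen θ i)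

lemma braidedΔ_gen (i : Fin θ) :
    braidedΔ q (gen θ i) = BT.inl q (gen θ i) + BT.inr q (gen θ i) :=
  FreeAlgebra.lift_ι_apply _ _

/-- The braided bialgebra structure of `T(V)`. -/
def braidedStr : BraidedStr θ q where
  Δ := (BT.of q).symm.toLinearMap ∘ₗ (braidedΔ q).toLinearMap
  mulB := braidedMul q
  mulB_spec a d v w := braidedMul_spec q a d v w
  Δ_one := by
    simp only [LinearMap.comp_apply, AlgHom.toLinearMap_apply, map_one, BT.one_def,
      LinearEquiv.coe_coe, LinearEquiv.symm_apply_apply]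
  Δ_gen i := by
    simp only [LinearMap.comp_apply, AlgHom.toLinearMap_apply, braidedΔ_gen, BT.inl_apply,
      BT.inr_apply, LinearEquiv.coe_coe, map_add, LinearEquiv.symm_apply_apply]
  Δ_mul u v := by
    simp only [LinearMap.comp_apply, AlgHom.toLinearMap_apply, map_mul, LinearEquiv.coe_coe]
    rw [LinearEquiv.symm_apply_eq, ← BT.of_mul_of, LinearEquiv.apply_symm_apply,
      LinearEquiv.apply_symm_apply]

variable {q}

lemma BraidedStr.mulB_eq (S : BraidedStr θ q) : S.mulB = braidedMul q := by
  refine tensor_word_ext fun a b => tensor_word_ext fun c d => ?_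
  rw [S.mulB_spec, braidedMul_spec]

lemma BraidedStr.of_Δ (S : BraidedStr θ q) (x : TV θ) : BT.of q (S.Δ x) = braidedΔ q x := by
  induction x using word_induction with
  | hw w =>
    induction w with
    | nil => rw [wordElem_nil, S.Δ_one, map_one, BT.one_def]
    | cons i w ih =>
      rw [wordElem_cons, S.Δ_mul, map_mul, S.mulB_eq, ← BT.of_mul_of, ih, S.Δ_gen, braidedΔ_gen,
        map_add, BT.inl_apply, BT.inr_apply]
  | h0 => simp
  | ha x y hx hy => rw [map_add, map_add, map_add, hx, hy]
  | hs c x hx => rw [map_smul, map_smul, map_smul, hx]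

end

section

variable {θ : ℕ} {q : Fin θ → Fin θ → ℂˣ}

/-! ### Coefficients of words -/

/-- The coefficient of a word. -/
def coef {θ : ℕ} (v : List (Fin θ)) : TV θ →ₗ[ℂ] ℂ := (wordBasis θ).coord v

lemma coef_wordElem (v w : List (Fin θ)) : coef v (wordElem θ w) = if w = v then 1 else 0 := by
  rw [coef, ← wordBasis_apply, Module.Basis.coord_apply, Module.Basis.repr_self,
    Finsupp.single_apply]

lemma coef_of_mem_homogTot {n : ℕ} {x : TV θ} (hx : x ∈ homogTot θ n) {v : List (Fin θ)}
    (hv : v.length ≠ n) : coef v x = 0 := by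
  induction hx using Submodule.span_induction with
  | mem x h =>
    obtain ⟨w, hw, rfl⟩ := h
    rw [coef_wordElem, if_neg]
    rintro rfl; exact hv hw
  | zero => simp
  | add x y _ _ h1 h2 => rw [map_add, h1, h2, add_zero]
  | smul c x _ h => rw [map_smul, h, smul_zero]

lemma IsPreNicholsIdeal.coef_eq_zero {S : BraidedStr θ q} {I : Submodule ℂ (TV θ)}
    (hI : IsPreNicholsIdeal S I) {x : TV θ} (hx : x ∈ I) {v : List (Fin θ)}
    (hv : v.length ≤ 1) : coef v x = 0 := by
  rw [hI.homog_ge2] at hx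
  induction hx using Submodule.span_induction with
  | mem x h =>
    obtain ⟨_, n, hn, hx⟩ := h
    exact coef_of_mem_homogTot hx (by omega)
  | zero => simp
  | add x y _ _ h1 h2 => rw [map_add, h1, h2, add_zero]
  | smul c x _ h => rw [map_smul, h, smul_zero]

lemma coef_nil_mul (x y : TV θ) : coef [] (x * y) = coef [] x * coef [] y := by
  induction x using word_induction with
  | hw v =>
    induction y using word_induction with
    | hw w =>
      simp only [← wordElem_append, coef_wordElem, List.append_eq_nil_iff]
      split_ifs <;> simp_all
    | h0 => simp
    | ha x y hx hy => simp only [mul_add, map_add, hx, hy]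
    | hs c x hx => simp only [mul_smul_comm, map_smul, hx, smul_eq_mul]; ring
  | h0 => simp
  | ha x y hx hy => simp only [add_mul, map_add, hx, hy]
  | hs c x hx => simp only [smul_mul_assoc, map_smul, hx, smul_eq_mul]; ring

lemma coef_mul_gen (k : Fin θ) (x : TV θ) : coef [k] (x * gen θ k) = coef [] x := by
  induction x using word_induction with
  | hw v =>
    rw [← wordElem_singleton, ← wordElem_append, coef_wordElem, coef_wordElem]
    have : v ++ [k] = [k] ↔ v = [] := by simp
    simp only [this]
  | h0 => simp
  | ha x y hx hy => simp only [add_mul, map_add, hx, hy]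
  | hs c x hx => simp only [smul_mul_assoc, map_smul, hx]

lemma coef_gen_mul (k : Fin θ) (x : TV θ) : coef [k] (gen θ k * x) = coef [] x := by
  induction x using word_induction with
  | hw v =>
    rw [← wordElem_cons, coef_wordElem, coef_wordElem]
    simp
  | h0 => simp
  | ha x y hx hy => simp only [mul_add, map_add, hx, hy]
  | hs c x hx => simp only [mul_smul_comm, map_smul, hx]

/-! ### Slices of the braided tensor square -/

/-- Evaluation of a functional on the first tensor factor. -/
def sliceL (q : Fin θ → Fin θ → ℂˣ) (f : TV θ →ₗ[ℂ] ℂ) : BT q →ₗ[ℂ] TV θ :=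
  (TensorProduct.lid ℂ (TV θ)).toLinearMap ∘ₗ TensorProduct.map f LinearMap.id ∘ₗ
    (BT.of q).symm.toLinearMap

/-- Evaluation of a functional on the second tensor factor. -/
def sliceR (q : Fin θ → Fin θ → ℂˣ) (f : TV θ →ₗ[ℂ] ℂ) : BT q →ₗ[ℂ] TV θ :=
  (TensorProduct.rid ℂ (TV θ)).toLinearMap ∘ₗ TensorProduct.map LinearMap.id f ∘ₗ
    (BT.of q).symm.toLinearMap

lemma sliceL_inl_mul_inr (f : TV θ →ₗ[ℂ] ℂ) (x y : TV θ) :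
    sliceL q f (BT.inl q x * BT.inr q y) = f x • y := by
  rw [BT.inl_mul_inr]; simp [sliceL]

lemma sliceR_inl_mul_inr (f : TV θ →ₗ[ℂ] ℂ) (x y : TV θ) :
    sliceR q f (BT.inl q x * BT.inr q y) = f y • x := by
  rw [BT.inl_mul_inr]; simp [sliceR]

lemma BT.induction {P : BT q → Prop} (x : BT q)
    (hw : ∀ v w, P (BT.inl q (wordElem θ v) * BT.inr q (wordElem θ w))) (h0 : P 0)
    (ha : ∀ x y, P x → P y → P (x + y)) (hs : ∀ (c : ℂ) x, P x → P (c • x)) : P x := by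
  obtain ⟨x, rfl⟩ := (BT.of q).surjective x
  induction x using tensor_word_induction with
  | hw v w => rw [← BT.inl_mul_inr]; exact hw v w
  | h0 => simpa using h0
  | ha x y hx hy => rw [map_add]; exact ha _ _ hx hy
  | hs c x hx => rw [map_smul]; exact hs c _ hx

lemma sliceL_mul_inr (f : TV θ →ₗ[ℂ] ℂ) (x : BT q) (y : TV θ) :
    sliceL q f (x * BT.inr q y) = sliceL q f x * y := by
  induction x using BT.induction with
  | hw v w =>
    rw [mul_assoc, ← map_mul, sliceL_inl_mul_inr, sliceL_inl_mul_inr, smul_mul_assoc]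
  | h0 => simp
  | ha x y hx hy => simp only [add_mul, map_add, hx, hy]
  | hs c x hx => simp only [smul_mul_assoc, map_smul, hx]

lemma sliceR_inl_mul (f : TV θ →ₗ[ℂ] ℂ) (x : BT q) (y : TV θ) :
    sliceR q f (BT.inl q y * x) = y * sliceR q f x := by
  induction x using BT.induction with
  | hw v w =>
    rw [← mul_assoc, ← map_mul, sliceR_inl_mul_inr, sliceR_inl_mul_inr, mul_smul_comm]
  | h0 => simp
  | ha x y hx hy => simp only [mul_add, map_add, hx, hy]
  | hs c x hx => simp only [mul_smul_comm, map_smul, hx]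

/-- The automorphism `x_l ↦ q_{lk} x_l`. -/
def twistR (q : Fin θ → Fin θ → ℂˣ) (k : Fin θ) : TV θ →ₐ[ℂ] TV θ :=
  FreeAlgebra.lift ℂ fun l => (q l k : ℂ) • gen θ l

/-- The automorphism `x_l ↦ q_{kl} x_l`. -/
def twistL (q : Fin θ → Fin θ → ℂˣ) (k : Fin θ) : TV θ →ₐ[ℂ] TV θ :=
  FreeAlgebra.lift ℂ fun l => (q k l : ℂ) • gen θ l

lemma degW_cons (i : Fin θ) (w : List (Fin θ)) : degW θ (i :: w) = δ θ i + degW θ w := by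
  rw [← degW_singleton, ← degW_append]; rfl

lemma twistR_word (k : Fin θ) (w : List (Fin θ)) :
    twistR q k (wordElem θ w) = qf q (degW θ w) (δ θ k) • wordElem θ w := by
  induction w with
  | nil => rw [wordElem_nil, map_one, degW_nil, qf_zero_left, one_smul]
  | cons i w ih =>
    have : twistR q k (gen θ i) = (q i k : ℂ) • gen θ i := FreeAlgebra.lift_ι_apply _ _
    rw [wordElem_cons, map_mul, ih, this, degW_cons, qf_add_left, qf_δ, smul_mul_smul_comm]

lemma twistL_word (k : Fin θ) (w : List (Fin θ)) :
    twistL q k (wordElem θ w) = qf q (δ θ k) (degW θ w) • wordElem θ w := by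
  induction w with
  | nil => rw [wordElem_nil, map_one, degW_nil, qf_zero_right, one_smul]
  | cons i w ih =>
    have : twistL q k (gen θ i) = (q k i : ℂ) • gen θ i := FreeAlgebra.lift_ι_apply _ _
    rw [wordElem_cons, map_mul, ih, this, degW_cons, qf_add_right, qf_δ, smul_mul_smul_comm]

lemma inr_mul_inl_gen (k : Fin θ) (x : TV θ) :
    BT.inr q x * BT.inl q (gen θ k) = BT.inl q (gen θ k) * BT.inr q (twistR q k x) := by
  induction x using word_induction with
  | hw w =>
    rw [← wordElem_singleton, BT.inr_mul_inl_word, twistR_word, degW_singleton, map_smul,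
      mul_smul_comm]
  | h0 => simp
  | ha x y hx hy => simp only [add_mul, mul_add, map_add, hx, hy]
  | hs c x hx => simp only [mul_smul_comm, smul_mul_assoc, map_smul, hx]

lemma inr_gen_mul_inl (k : Fin θ) (x : TV θ) :
    BT.inr q (gen θ k) * BT.inl q x = BT.inl q (twistL q k x) * BT.inr q (gen θ k) := by
  induction x using word_induction with
  | hw w =>
    rw [← wordElem_singleton, BT.inr_mul_inl_word, twistL_word, degW_singleton, map_smul,
      smul_mul_assoc]
  | h0 => simp
  | ha x y hx hy => simp only [add_mul, mul_add, map_add, hx, hy]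
  | hs c x hx => simp only [mul_smul_comm, smul_mul_assoc, map_smul, hx]

lemma sliceL_mul_inl_gen (k : Fin θ) (x : BT q) :
    sliceL q (coef [k]) (x * BT.inl q (gen θ k)) = twistR q k (sliceL q (coef []) x) := by
  induction x using BT.induction with
  | hw v w =>
    rw [mul_assoc, inr_mul_inl_gen, ← mul_assoc, ← map_mul, sliceL_inl_mul_inr, coef_mul_gen,
      sliceL_inl_mul_inr, map_smul]
  | h0 => simp
  | ha x y hx hy => simp only [add_mul, map_add, hx, hy]
  | hs c x hx => simp only [smul_mul_assoc, map_smul, hx]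

lemma sliceR_inr_gen_mul (k : Fin θ) (x : BT q) :
    sliceR q (coef [k]) (BT.inr q (gen θ k) * x) = twistL q k (sliceR q (coef []) x) := by
  induction x using BT.induction with
  | hw v w =>
    rw [← mul_assoc, inr_gen_mul_inl, mul_assoc, ← map_mul, sliceR_inl_mul_inr, coef_gen_mul,
      sliceR_inl_mul_inr, map_smul]
  | h0 => simp
  | ha x y hx hy => simp only [mul_add, map_add, hx, hy]
  | hs c x hx => simp only [mul_smul_comm, map_smul, hx]

lemma sliceL_nil_mul (x y : BT q) :
    sliceL q (coef []) (x * y) = sliceL q (coef []) x * sliceL q (coef []) y := by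
  induction x using BT.induction with
  | hw a b =>
    induction y using BT.induction with
    | hw c d =>
      rw [BT.inl_inr_mul_inl_inr q (wordElem_mem_homogD b) (wordElem_mem_homogD c), map_smul,
        sliceL_inl_mul_inr, sliceL_inl_mul_inr, sliceL_inl_mul_inr,
        coef_nil_mul, coef_wordElem, coef_wordElem]
      by_cases hc : c = []
      · simp [hc, degW_nil, qf_zero_right]
      · simp [hc]
    | h0 => simp
    | ha x y hx hy => simp only [mul_add, map_add, hx, hy]
    | hs c x hx => simp only [mul_smul_comm, map_smul, hx]
  | h0 => simp
  | ha x y hx hy => simp only [add_mul, map_add, hx, hy]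
  | hs c x hx => simp only [smul_mul_assoc, map_smul, hx]

lemma sliceR_nil_mul (x y : BT q) :
    sliceR q (coef []) (x * y) = sliceR q (coef []) x * sliceR q (coef []) y := by
  induction x using BT.induction with
  | hw a b =>
    induction y using BT.induction with
    | hw c d =>
      rw [BT.inl_inr_mul_inl_inr q (wordElem_mem_homogD b) (wordElem_mem_homogD c), map_smul,
        sliceR_inl_mul_inr, sliceR_inl_mul_inr, sliceR_inl_mul_inr,
        coef_nil_mul, coef_wordElem, coef_wordElem]
      by_cases hb : b = []
      · simp [hb, degW_nil, qf_zero_left]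
      · simp [hb]
    | h0 => simp
    | ha x y hx hy => simp only [mul_add, map_add, hx, hy]
    | hs c x hx => simp only [mul_smul_comm, map_smul, hx]
  | h0 => simp
  | ha x y hx hy => simp only [add_mul, map_add, hx, hy]
  | hs c x hx => simp only [smul_mul_assoc, map_smul, hx]

lemma coef_nil_gen (i : Fin θ) : coef [] (gen θ i) = 0 := by
  rw [← wordElem_singleton, coef_wordElem]; simp

lemma coef_nil_one : coef [] (1 : TV θ) = 1 := by
  rw [← wordElem_nil, coef_wordElem]; simp

lemma sliceL_inl (f : TV θ →ₗ[ℂ] ℂ) (x : TV θ) : sliceL q f (BT.inl q x) = f x • 1 := by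
  rw [← sliceL_inl_mul_inr (q := q), map_one, mul_one]

lemma sliceL_inr (f : TV θ →ₗ[ℂ] ℂ) (x : TV θ) : sliceL q f (BT.inr q x) = f 1 • x := by
  rw [← sliceL_inl_mul_inr (q := q), map_one, one_mul]

lemma sliceR_inl (f : TV θ →ₗ[ℂ] ℂ) (x : TV θ) : sliceR q f (BT.inl q x) = f 1 • x := by
  rw [← sliceR_inl_mul_inr (q := q), map_one, mul_one]

lemma sliceR_inr (f : TV θ →ₗ[ℂ] ℂ) (x : TV θ) : sliceR q f (BT.inr q x) = f x • 1 := by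
  rw [← sliceR_inl_mul_inr (q := q), map_one, one_mul]

lemma sliceL_nil_one : sliceL q (coef []) 1 = 1 := by
  rw [← map_one (BT.inl q), sliceL_inl, coef_nil_one, one_smul]

lemma sliceR_nil_one : sliceR q (coef []) 1 = 1 := by
  rw [← map_one (BT.inl q), sliceR_inl, coef_nil_one, one_smul]

lemma sliceL_nil_Δ (x : TV θ) : sliceL q (coef []) (braidedΔ q x) = x := by
  have : (AlgHom.ofLinearMap (sliceL q (coef [])) sliceL_nil_one sliceL_nil_mul).comp
      (braidedΔ q) = AlgHom.id ℂ (TV θ) := by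
    refine FreeAlgebra.hom_ext (funext fun i => ?_)
    change sliceL q (coef []) (braidedΔ q (gen θ i)) = gen θ i
    rw [braidedΔ_gen, map_add, sliceL_inl, sliceL_inr, coef_nil_gen, coef_nil_one, zero_smul,
      zero_add, one_smul]
  exact DFunLike.congr_fun this x

lemma sliceR_nil_Δ (x : TV θ) : sliceR q (coef []) (braidedΔ q x) = x := by
  have : (AlgHom.ofLinearMap (sliceR q (coef [])) sliceR_nil_one sliceR_nil_mul).comp
      (braidedΔ q) = AlgHom.id ℂ (TV θ) := by
    refine FreeAlgebra.hom_ext (funext fun i => ?_)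
    change sliceR q (coef []) (braidedΔ q (gen θ i)) = gen θ i
    rw [braidedΔ_gen, map_add, sliceR_inl, sliceR_inr, coef_nil_gen, coef_nil_one, zero_smul,
      add_zero, one_smul]
  exact DFunLike.congr_fun this x

/-! ### The ideal `I ⊗ T(V) + T(V) ⊗ I` -/

/-- The subspace `I ⊗ T(V) + T(V) ⊗ I` of the braided tensor square. -/
def mixBT (q : Fin θ → Fin θ → ℂˣ) (I : Submodule ℂ (TV θ)) : Submodule ℂ (BT q) :=
  (mixedSub I).map (BT.of q).toLinearMap

lemma inl_mul_inr_mem_mixBT_left {I : Submodule ℂ (TV θ)} {x : TV θ} (hx : x ∈ I) (y : TV θ) :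
    BT.inl q x * BT.inr q y ∈ mixBT q I := by
  rw [BT.inl_mul_inr]
  exact Submodule.mem_map_of_mem (Submodule.subset_span (Or.inl ⟨x, y, hx, rfl⟩))

lemma inl_mul_inr_mem_mixBT_right {I : Submodule ℂ (TV θ)} (x : TV θ) {y : TV θ} (hy : y ∈ I) :
    BT.inl q x * BT.inr q y ∈ mixBT q I := by
  rw [BT.inl_mul_inr]
  exact Submodule.mem_map_of_mem (Submodule.subset_span (Or.inr ⟨x, y, hy, rfl⟩))

lemma mixBT_induction {I : Submodule ℂ (TV θ)} {P : ∀ x : BT q, x ∈ mixBT q I → Prop}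
    (hl : ∀ a b (h : a ∈ I), P (BT.inl q a * BT.inr q b) (inl_mul_inr_mem_mixBT_left h b))
    (hr : ∀ a b (h : b ∈ I), P (BT.inl q a * BT.inr q b) (inl_mul_inr_mem_mixBT_right a h))
    (h0 : P 0 (Submodule.zero_mem _))
    (ha : ∀ x y hx hy, P x hx → P y hy → P (x + y) (Submodule.add_mem _ hx hy))
    (hs : ∀ (c : ℂ) x hx, P x hx → P (c • x) (Submodule.smul_mem _ c hx))
    {x : BT q} (hx : x ∈ mixBT q I) : P x hx := by
  suffices h : ∃ hx, P x hx from h.2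
  obtain ⟨x, hx, rfl⟩ := hx
  induction hx using Submodule.span_induction with
  | mem x h =>
    rcases h with ⟨a, b, h, rfl⟩ | ⟨a, b, h, rfl⟩
    · have := Exists.intro _ (hl a b h); rwa [BT.inl_mul_inr] at this
    · have := Exists.intro _ (hr a b h); rwa [BT.inl_mul_inr] at this
  | zero => rw [map_zero]; exact ⟨_, h0⟩
  | add x y _ _ h1 h2 => rw [map_add]; exact ⟨_, ha _ _ _ _ h1.2 h2.2⟩
  | smul c x _ h => rw [map_smul]; exact ⟨_, hs c _ _ h.2⟩

lemma sliceL_mem {I : Submodule ℂ (TV θ)} {f : TV θ →ₗ[ℂ] ℂ} (hf : ∀ x ∈ I, f x = 0)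
    {x : BT q} (hx : x ∈ mixBT q I) : sliceL q f x ∈ I := by
  induction hx using mixBT_induction with
  | hl a b h => rw [sliceL_inl_mul_inr, hf a h, zero_smul]; exact I.zero_mem
  | hr a b h => rw [sliceL_inl_mul_inr]; exact I.smul_mem _ h
  | h0 => simp
  | ha x y _ _ hx hy => rw [map_add]; exact I.add_mem hx hy
  | hs c x _ hx => rw [map_smul]; exact I.smul_mem c hx

lemma sliceR_mem {I : Submodule ℂ (TV θ)} {f : TV θ →ₗ[ℂ] ℂ} (hf : ∀ x ∈ I, f x = 0)
    {x : BT q} (hx : x ∈ mixBT q I) : sliceR q f x ∈ I := by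
  induction hx using mixBT_induction with
  | hl a b h => rw [sliceR_inl_mul_inr]; exact I.smul_mem _ h
  | hr a b h => rw [sliceR_inl_mul_inr, hf b h, zero_smul]; exact I.zero_mem
  | h0 => simp
  | ha x y _ _ hx hy => rw [map_add]; exact I.add_mem hx hy
  | hs c x _ hx => rw [map_smul]; exact I.smul_mem c hx

namespace IsPreNicholsIdeal

variable {S : BraidedStr θ q} {I : Submodule ℂ (TV θ)}

lemma Δ_mem (hI : IsPreNicholsIdeal S I) {x : TV θ} (hx : x ∈ I) : braidedΔ q x ∈ mixBT q I := by
  rw [← S.of_Δ]; exact Submodule.mem_map_of_mem (hI.coideal x hx)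

lemma twistR_mem (hI : IsPreNicholsIdeal S I) (k : Fin θ) {x : TV θ} (hx : x ∈ I) :
    twistR q k x ∈ I := by
  have hf : ∀ x ∈ I, coef [k] x = 0 := fun x hx => hI.coef_eq_zero hx (by simp)
  have h1 := sliceL_mem hf (hI.Δ_mem (hI.mul_right (gen θ k) x hx))
  rw [map_mul, braidedΔ_gen, mul_add, map_add, sliceL_mul_inl_gen, sliceL_mul_inr,
    sliceL_nil_Δ] at h1
  exact (I.add_mem_iff_left (hI.mul_right _ _ (sliceL_mem hf (hI.Δ_mem hx)))).1 h1

lemma twistL_mem (hI : IsPreNicholsIdeal S I) (k : Fin θ) {x : TV θ} (hx : x ∈ I) :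
    twistL q k x ∈ I := by
  have hf : ∀ x ∈ I, coef [k] x = 0 := fun x hx => hI.coef_eq_zero hx (by simp)
  have h1 := sliceR_mem hf (hI.Δ_mem (hI.mul_left (gen θ k) x hx))
  rw [map_mul, braidedΔ_gen, add_mul, map_add, sliceR_inr_gen_mul, sliceR_inl_mul,
    sliceR_nil_Δ] at h1
  exact (I.add_mem_iff_right (hI.mul_left _ _ (sliceR_mem hf (hI.Δ_mem hx)))).1 h1

lemma mixBT_mul_inl_gen (hI : IsPreNicholsIdeal S I) (k : Fin θ) {x : BT q} (hx : x ∈ mixBT q I) :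
    x * BT.inl q (gen θ k) ∈ mixBT q I := by
  induction hx using mixBT_induction with
  | hl a b h =>
    rw [mul_assoc, inr_mul_inl_gen, ← mul_assoc, ← map_mul]
    exact inl_mul_inr_mem_mixBT_left (hI.mul_right _ _ h) _
  | hr a b h =>
    rw [mul_assoc, inr_mul_inl_gen, ← mul_assoc, ← map_mul]
    exact inl_mul_inr_mem_mixBT_right _ (hI.twistR_mem k h)
  | h0 => simp
  | ha x y _ _ hx hy => rw [add_mul]; exact add_mem hx hy
  | hs c x _ hx => rw [smul_mul_assoc]; exact Submodule.smul_mem _ c hx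

lemma inr_gen_mul_mixBT (hI : IsPreNicholsIdeal S I) (k : Fin θ) {x : BT q} (hx : x ∈ mixBT q I) :
    BT.inr q (gen θ k) * x ∈ mixBT q I := by
  induction hx using mixBT_induction with
  | hl a b h =>
    rw [← mul_assoc, inr_gen_mul_inl, mul_assoc, ← map_mul]
    exact inl_mul_inr_mem_mixBT_left (hI.twistL_mem k h) _
  | hr a b h =>
    rw [← mul_assoc, inr_gen_mul_inl, mul_assoc, ← map_mul]
    exact inl_mul_inr_mem_mixBT_right _ (hI.mul_left _ _ h)
  | h0 => simp
  | ha x y _ _ hx hy => rw [mul_add]; exact add_mem hx hy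
  | hs c x _ hx => rw [mul_smul_comm]; exact Submodule.smul_mem _ c hx

lemma mixBT_mul_inr (hI : IsPreNicholsIdeal S I) (y : TV θ) {x : BT q} (hx : x ∈ mixBT q I) :
    x * BT.inr q y ∈ mixBT q I := by
  induction hx using mixBT_induction with
  | hl a b h => rw [mul_assoc, ← map_mul]; exact inl_mul_inr_mem_mixBT_left h _
  | hr a b h =>
    rw [mul_assoc, ← map_mul]; exact inl_mul_inr_mem_mixBT_right _ (hI.mul_right _ _ h)
  | h0 => simp
  | ha x y _ _ hx hy => rw [add_mul]; exact add_mem hx hy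
  | hs c x _ hx => rw [smul_mul_assoc]; exact Submodule.smul_mem _ c hx

lemma inl_mul_mixBT (hI : IsPreNicholsIdeal S I) (y : TV θ) {x : BT q} (hx : x ∈ mixBT q I) :
    BT.inl q y * x ∈ mixBT q I := by
  induction hx using mixBT_induction with
  | hl a b h =>
    rw [← mul_assoc, ← map_mul]; exact inl_mul_inr_mem_mixBT_left (hI.mul_left _ _ h) _
  | hr a b h => rw [← mul_assoc, ← map_mul]; exact inl_mul_inr_mem_mixBT_right _ h
  | h0 => simp
  | ha x y _ _ hx hy => rw [mul_add]; exact add_mem hx hy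
  | hs c x _ hx => rw [mul_smul_comm]; exact Submodule.smul_mem _ c hx

lemma mixBT_mul_right (hI : IsPreNicholsIdeal S I) (y : BT q) {x : BT q} (hx : x ∈ mixBT q I) :
    x * y ∈ mixBT q I := by
  induction y using BT.induction with
  | hw v w =>
    rw [← mul_assoc]
    refine hI.mixBT_mul_inr _ ?_
    induction v generalizing x with
    | nil => rw [wordElem_nil, map_one, mul_one]; exact hx
    | cons i v ih =>
      rw [wordElem_cons, map_mul, ← mul_assoc]; exact ih (hI.mixBT_mul_inl_gen i hx)
  | h0 => simp
  | ha y z hy hz => rw [mul_add]; exact add_mem hy hz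
  | hs c y hy => rw [mul_smul_comm]; exact Submodule.smul_mem _ c hy

lemma mixBT_mul_left (hI : IsPreNicholsIdeal S I) (y : BT q) {x : BT q} (hx : x ∈ mixBT q I) :
    y * x ∈ mixBT q I := by
  induction y using BT.induction with
  | hw v w =>
    rw [mul_assoc]
    refine hI.inl_mul_mixBT _ ?_
    induction w with
    | nil => rw [wordElem_nil, map_one, one_mul]; exact hx
    | cons i w ih =>
      rw [wordElem_cons, map_mul, mul_assoc]; exact hI.inr_gen_mul_mixBT i ih
  | h0 => simp
  | ha y z hy hz => rw [add_mul]; exact add_mem hy hz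
  | hs c y hy => rw [smul_mul_assoc]; exact Submodule.smul_mem _ c hy

end IsPreNicholsIdeal

end

section

variable {θ : ℕ} {q : Fin θ → Fin θ → ℂˣ}

/-! ### Separating points by functionals -/

/-- The functional `f ⊗ g` on the braided tensor square. -/
def evalBT (q : Fin θ → Fin θ → ℂˣ) (f g : TV θ →ₗ[ℂ] ℂ) : BT q →ₗ[ℂ] ℂ :=
  LinearMap.mul' ℂ ℂ ∘ₗ TensorProduct.map f g ∘ₗ (BT.of q).symm.toLinearMap

lemma evalBT_inl_mul_inr (f g : TV θ →ₗ[ℂ] ℂ) (x y : TV θ) :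
    evalBT q f g (BT.inl q x * BT.inr q y) = f x * g y := by
  rw [BT.inl_mul_inr]; simp [evalBT]

lemma evalBT_mixBT {I : Submodule ℂ (TV θ)} {f g : TV θ →ₗ[ℂ] ℂ} (hf : ∀ x ∈ I, f x = 0)
    (hg : ∀ x ∈ I, g x = 0) {x : BT q} (hx : x ∈ mixBT q I) : evalBT q f g x = 0 := by
  induction hx using mixBT_induction with
  | hl a b h => rw [evalBT_inl_mul_inr, hf a h, zero_mul]
  | hr a b h => rw [evalBT_inl_mul_inr, hg b h, mul_zero]
  | h0 => simp
  | ha x y _ _ hx hy => rw [map_add, hx, hy, add_zero]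
  | hs c x _ hx => rw [map_smul, hx, smul_zero]

lemma mem_mixedSub_of_map_mkQ {I : Submodule ℂ (TV θ)} {x : TV θ ⊗[ℂ] TV θ}
    (hx : TensorProduct.map I.mkQ I.mkQ x = 0) : x ∈ mixedSub I := by
  have h : x ∈ LinearMap.ker (TensorProduct.map I.mkQ I.mkQ) := hx
  rw [TensorProduct.map_ker (f := I.subtype) (f' := I.subtype)
    (LinearMap.exact_subtype_mkQ I) I.mkQ_surjective
    (LinearMap.exact_subtype_mkQ I) I.mkQ_surjective] at h
  have hl : LinearMap.range (LinearMap.lTensor (TV θ) I.subtype) ≤ mixedSub I := by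
    rintro _ ⟨y, rfl⟩
    induction y using TensorProduct.induction_on with
    | zero => simp
    | tmul a b => exact Submodule.subset_span (Or.inr ⟨a, b, b.2, by simp⟩)
    | add x y hx hy => rw [map_add]; exact add_mem hx hy
  have hr : LinearMap.range (LinearMap.rTensor (TV θ) I.subtype) ≤ mixedSub I := by
    rintro _ ⟨y, rfl⟩
    induction y using TensorProduct.induction_on with
    | zero => simp
    | tmul a b => exact Submodule.subset_span (Or.inl ⟨a, b, a.2, by simp⟩)
    | add x y hx hy => rw [map_add]; exact add_mem hx hy
  exact (sup_le hl hr) h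

lemma mem_mixedSub_of_eval {I : Submodule ℂ (TV θ)} {x : TV θ ⊗[ℂ] TV θ}
    (h : ∀ f g : TV θ →ₗ[ℂ] ℂ, (∀ x ∈ I, f x = 0) → (∀ x ∈ I, g x = 0) →
      evalBT q f g (BT.of q x) = 0) : x ∈ mixedSub I := by
  apply mem_mixedSub_of_map_mkQ
  let b := Module.Basis.ofVectorSpace ℂ (TV θ ⧸ I)
  apply (b.tensorProduct b).ext_elem
  rintro ⟨m, n⟩
  rw [map_zero, Finsupp.zero_apply]
  have h2 := h (b.coord m ∘ₗ I.mkQ) (b.coord n ∘ₗ I.mkQ)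
    (fun y hy => by simp [(Submodule.Quotient.mk_eq_zero I).2 hy])
    (fun y hy => by simp [(Submodule.Quotient.mk_eq_zero I).2 hy])
  rw [← h2]
  have : (b.tensorProduct b).coord (m, n) ∘ₗ TensorProduct.map I.mkQ I.mkQ =
      evalBT q (b.coord m ∘ₗ I.mkQ) (b.coord n ∘ₗ I.mkQ) ∘ₗ (BT.of q).toLinearMap := by
    ext a b'
    simp [evalBT, mul_comm]
  exact DFunLike.congr_fun this x

lemma exists_factor {M N : Type*} [AddCommGroup M] [Module ℂ M] [AddCommGroup N] [Module ℂ N]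
    (p : M →ₗ[ℂ] N) (f : M →ₗ[ℂ] ℂ) (h : ∀ x, p x = 0 → f x = 0) :
    ∃ g : N →ₗ[ℂ] ℂ, ∀ x, g (p x) = f x := by
  have hf : f ∈ LinearMap.range p.dualMap := by
    rw [LinearMap.range_dualMap_eq_dualAnnihilator_ker, Submodule.mem_dualAnnihilator]
    exact h
  obtain ⟨g, hg⟩ := hf
  exact ⟨g, fun x => DFunLike.congr_fun hg x⟩

lemma finrank_map_le_of_inf_ker_le {M N N' : Type*} [AddCommGroup M] [Module ℂ M]
    [AddCommGroup N] [Module ℂ N] [AddCommGroup N'] [Module ℂ N'] (P : Submodule ℂ M)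
    [FiniteDimensional ℂ P] (f : M →ₗ[ℂ] N) (g : M →ₗ[ℂ] N')
    (h : ∀ x ∈ P, f x = 0 → g x = 0) :
    Module.finrank ℂ (P.map g) ≤ Module.finrank ℂ (P.map f) := by
  have e1 := (f.domRestrict P).finrank_range_add_finrank_ker
  have e2 := (g.domRestrict P).finrank_range_add_finrank_ker
  have hk : LinearMap.ker (f.domRestrict P) ≤ LinearMap.ker (g.domRestrict P) :=
    fun x hx => h x x.2 hx
  have e3 := Submodule.finrank_mono hk
  rw [LinearMap.range_domRestrict] at e1 e2
  omega

/-! ### Gradings and filtrations -/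

lemma wordElem_mem_homogTot (w : List (Fin θ)) : wordElem θ w ∈ homogTot θ w.length :=
  Submodule.subset_span ⟨w, rfl, rfl⟩

lemma wordElem_mem_Wfil {n : ℕ} {w : List (Fin θ)} (h : w.length ≤ n) :
    wordElem θ w ∈ Wfil θ n := Submodule.subset_span ⟨w, h, rfl⟩

instance (n : ℕ) : FiniteDimensional ℂ (Wfil θ n) := by
  have : {x | ∃ w : List (Fin θ), w.length ≤ n ∧ x = wordElem θ w} =
      wordElem θ '' {w | w.length ≤ n} := by
    ext x; simp [eq_comm]
  unfold Wfil
  rw [this]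
  exact FiniteDimensional.span_of_finite ℂ ((List.finite_length_le (Fin θ) n).image _)

lemma homogTot_le_Wfil (n : ℕ) : homogTot θ n ≤ Wfil θ n :=
  Submodule.span_mono fun _ ⟨w, hw, h⟩ => ⟨w, hw.le, h⟩

instance (n : ℕ) : FiniteDimensional ℂ (homogTot θ n) :=
  Submodule.finiteDimensional_of_le (homogTot_le_Wfil n)

lemma Wfil_mono {m n : ℕ} (h : m ≤ n) : Wfil θ m ≤ Wfil θ n :=
  Submodule.span_mono fun _ ⟨w, hw, e⟩ => ⟨w, hw.trans h, e⟩

lemma Wfil_mul {m n : ℕ} {x y : TV θ} (hx : x ∈ Wfil θ m) (hy : y ∈ Wfil θ n) :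
    x * y ∈ Wfil θ (m + n) := by
  induction hx using Submodule.span_induction with
  | mem x h =>
    obtain ⟨v, hv, rfl⟩ := h
    induction hy using Submodule.span_induction with
    | mem y h =>
      obtain ⟨w, hw, rfl⟩ := h
      rw [← wordElem_append]
      exact wordElem_mem_Wfil (by rw [List.length_append]; omega)
    | zero => simp
    | add x y _ _ h1 h2 => rw [mul_add]; exact add_mem h1 h2
    | smul c x _ h => rw [mul_smul_comm]; exact Submodule.smul_mem _ c h
  | zero => simp
  | add x y _ _ h1 h2 => rw [add_mul]; exact add_mem h1 h2
  | smul c x _ h => rw [smul_mul_assoc]; exact Submodule.smul_mem _ c h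

lemma homogTot_mul {m n : ℕ} {x y : TV θ} (hx : x ∈ homogTot θ m) (hy : y ∈ homogTot θ n) :
    x * y ∈ homogTot θ (m + n) := by
  induction hx using Submodule.span_induction with
  | mem x h =>
    obtain ⟨v, hv, rfl⟩ := h
    induction hy using Submodule.span_induction with
    | mem y h =>
      obtain ⟨w, hw, rfl⟩ := h
      rw [← wordElem_append]
      exact Submodule.subset_span ⟨_, by rw [List.length_append, hv, hw], rfl⟩
    | zero => simp
    | add x y _ _ h1 h2 => rw [mul_add]; exact add_mem h1 h2
    | smul c x _ h => rw [mul_smul_comm]; exact Submodule.smul_mem _ c h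
  | zero => simp
  | add x y _ _ h1 h2 => rw [add_mul]; exact add_mem h1 h2
  | smul c x _ h => rw [smul_mul_assoc]; exact Submodule.smul_mem _ c h

lemma homogD_mul {a b : Fin θ → ℕ} {x y : TV θ} (hx : x ∈ homogD θ a) (hy : y ∈ homogD θ b) :
    x * y ∈ homogD θ (a + b) := by
  induction hx using Submodule.span_induction with
  | mem x h =>
    obtain ⟨v, hv, rfl⟩ := h
    induction hy using Submodule.span_induction with
    | mem y h =>
      obtain ⟨w, hw, rfl⟩ := h
      rw [← wordElem_append]
      exact Submodule.subset_span ⟨_, by rw [degW_append, hv, hw], rfl⟩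
    | zero => simp
    | add x y _ _ h1 h2 => rw [mul_add]; exact add_mem h1 h2
    | smul c x _ h => rw [mul_smul_comm]; exact Submodule.smul_mem _ c h
  | zero => simp
  | add x y _ _ h1 h2 => rw [add_mul]; exact add_mem h1 h2
  | smul c x _ h => rw [smul_mul_assoc]; exact Submodule.smul_mem _ c h

lemma one_mem_homogD : (1 : TV θ) ∈ homogD θ 0 :=
  Submodule.subset_span ⟨[], degW_nil, rfl⟩

lemma gen_mem_homogD (i : Fin θ) : gen θ i ∈ homogD θ (δ θ i) :=
  Submodule.subset_span ⟨[i], degW_singleton i, (wordElem_singleton θ i).symm⟩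

lemma sum_degW (w : List (Fin θ)) : ∑ i, degW θ w i = w.length := by
  induction w with
  | nil => simp [degW_nil]
  | cons i w ih =>
    simp only [degW_cons, Pi.add_apply, Finset.sum_add_distrib, ih, List.length_cons]
    simp [δ, add_comm]

lemma homogD_le_homogTot (d : Fin θ → ℕ) : homogD θ d ≤ homogTot θ (∑ i, d i) :=
  Submodule.span_mono fun _ ⟨w, hw, h⟩ => ⟨w, by rw [← hw, sum_degW], h⟩

/-- The span of the words of length `< n`. -/
def Wlt (θ n : ℕ) : Submodule ℂ (TV θ) :=
  Submodule.span ℂ {x | ∃ w : List (Fin θ), w.length < n ∧ x = wordElem θ w}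

lemma gen_mul_Wlt {n : ℕ} (i : Fin θ) {x : TV θ} (hx : x ∈ Wlt θ n) :
    gen θ i * x ∈ Wlt θ (n + 1) := by
  induction hx using Submodule.span_induction with
  | mem x h =>
    obtain ⟨v, hv, rfl⟩ := h
    rw [← wordElem_cons]
    exact Submodule.subset_span ⟨_, by rw [List.length_cons]; omega, rfl⟩
  | zero => simp
  | add x y _ _ h1 h2 => rw [mul_add]; exact add_mem h1 h2
  | smul c x _ h => rw [mul_smul_comm]; exact Submodule.smul_mem _ c h

lemma Wlt_mul_gen {n : ℕ} (i : Fin θ) {x : TV θ} (hx : x ∈ Wlt θ n) :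
    x * gen θ i ∈ Wlt θ (n + 1) := by
  induction hx using Submodule.span_induction with
  | mem x h =>
    obtain ⟨v, hv, rfl⟩ := h
    rw [← wordElem_singleton, ← wordElem_append]
    exact Submodule.subset_span ⟨_, by simpa using hv, rfl⟩
  | zero => simp
  | add x y _ _ h1 h2 => rw [add_mul]; exact add_mem h1 h2
  | smul c x _ h => rw [smul_mul_assoc]; exact Submodule.smul_mem _ c h

/-- The degree `n` part of the braided tensor square. -/
def homogBT (q : Fin θ → Fin θ → ℂˣ) (n : ℕ) : Submodule ℂ (BT q) :=
  Submodule.span ℂ {x | ∃ v w : List (Fin θ), v.length + w.length = n ∧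
    x = BT.inl q (wordElem θ v) * BT.inr q (wordElem θ w)}

lemma Δ_word_mem_homogBT (w : List (Fin θ)) :
    braidedΔ q (wordElem θ w) ∈ homogBT q w.length := by
  induction w with
  | nil =>
    refine Submodule.subset_span ⟨[], [], rfl, ?_⟩
    simp [wordElem_nil]
  | cons i w ih =>
    rw [wordElem_cons, map_mul, braidedΔ_gen]
    generalize braidedΔ q (wordElem θ w) = y at ih
    induction ih using Submodule.span_induction with
    | mem x h =>
      obtain ⟨a, b, h, rfl⟩ := h
      rw [add_mul]
      refine add_mem ?_ ?_
      · rw [← mul_assoc, ← map_mul, ← wordElem_cons]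
        exact Submodule.subset_span ⟨_, _, by simp only [List.length_cons]; omega, rfl⟩
      · rw [← mul_assoc, ← wordElem_singleton, BT.inr_mul_inl_word, smul_mul_assoc, mul_assoc,
          ← map_mul, ← wordElem_append]
        exact Submodule.smul_mem _ _ (Submodule.subset_span
          ⟨_, _, by simp only [List.length_cons, List.cons_append, List.nil_append]; omega, rfl⟩)
    | zero => simp
    | add x y _ _ h1 h2 => rw [mul_add]; exact add_mem h1 h2
    | smul c x _ h => rw [mul_smul_comm]; exact Submodule.smul_mem _ c h

lemma Δ_mem_homogBT {n : ℕ} {x : TV θ} (hx : x ∈ homogTot θ n) :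
    braidedΔ q x ∈ homogBT q n := by
  induction hx using Submodule.span_induction with
  | mem x h => obtain ⟨v, rfl, rfl⟩ := h; exact Δ_word_mem_homogBT v
  | zero => simp
  | add x y _ _ h1 h2 => rw [map_add]; exact add_mem h1 h2
  | smul c x _ h => rw [map_smul]; exact Submodule.smul_mem _ c h

/-! ### The associated graded ideal -/

/-- The degree `n` part of the ideal of leading terms of `K`. -/
def leadPart (K : Submodule ℂ (TV θ)) (n : ℕ) : Submodule ℂ (TV θ) :=
  homogTot θ n ⊓ (K ⊔ Wlt θ n)

/-- The ideal of leading terms of `K`. -/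
def leadIdeal (K : Submodule ℂ (TV θ)) : Submodule ℂ (TV θ) := ⨆ n, leadPart K n

lemma mem_ideal_of_gen {J : Submodule ℂ (TV θ)}
    (hl : ∀ (i : Fin θ) x, x ∈ J → gen θ i * x ∈ J) (a : TV θ) {x : TV θ} (hx : x ∈ J) :
    a * x ∈ J := by
  induction a using word_induction with
  | hw w =>
    induction w with
    | nil => rwa [wordElem_nil, one_mul]
    | cons i w ih => rw [wordElem_cons, mul_assoc]; exact hl _ _ ih
  | h0 => simp
  | ha y z hy hz => rw [add_mul]; exact add_mem hy hz
  | hs c y hy => rw [smul_mul_assoc]; exact Submodule.smul_mem _ c hy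

lemma mem_ideal_of_gen_right {J : Submodule ℂ (TV θ)}
    (hr : ∀ (i : Fin θ) x, x ∈ J → x * gen θ i ∈ J) (a : TV θ) {x : TV θ} (hx : x ∈ J) :
    x * a ∈ J := by
  induction a using word_induction with
  | hw w =>
    induction w generalizing x with
    | nil => rwa [wordElem_nil, mul_one]
    | cons i w ih => rw [wordElem_cons, ← mul_assoc]; exact ih (hr _ _ hx)
  | h0 => simp
  | ha y z hy hz => rw [mul_add]; exact add_mem hy hz
  | hs c y hy => rw [mul_smul_comm]; exact Submodule.smul_mem _ c hy

lemma exists_lift_functional {K : Submodule ℂ (TV θ)} {f : TV θ →ₗ[ℂ] ℂ}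
    (hf : ∀ x ∈ leadIdeal K, f x = 0) (a : ℕ) :
    ∃ g : TV θ →ₗ[ℂ] ℂ, (∀ x ∈ K, g x = 0) ∧ (∀ x ∈ Wlt θ a, g x = 0) ∧
      ∀ x ∈ homogTot θ a, g x = f x := by
  obtain ⟨g, hg⟩ := exists_factor ((K ⊔ Wlt θ a).mkQ ∘ₗ (homogTot θ a).subtype)
    (f ∘ₗ (homogTot θ a).subtype) (fun x hx => by
      refine hf _ (Submodule.mem_iSup_of_mem a ⟨x.2, ?_⟩)
      simpa using hx)
  refine ⟨g ∘ₗ (K ⊔ Wlt θ a).mkQ, fun x hx => ?_, fun x hx => ?_, fun x hx => hg ⟨x, hx⟩⟩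
  · simp [(Submodule.Quotient.mk_eq_zero (K ⊔ Wlt θ a)).2 (Submodule.mem_sup_left hx)]
  · simp [(Submodule.Quotient.mk_eq_zero (K ⊔ Wlt θ a)).2 (Submodule.mem_sup_right hx)]

lemma leadIdeal_isPreNichols (S : BraidedStr θ q) {K : Submodule ℂ (TV θ)}
    (hl : ∀ a x : TV θ, x ∈ K → a * x ∈ K) (hr : ∀ a x : TV θ, x ∈ K → x * a ∈ K)
    (hΔ : ∀ f g : TV θ →ₗ[ℂ] ℂ, (∀ x ∈ K, f x = 0) → (∀ x ∈ K, g x = 0) →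
      ∀ x ∈ K, evalBT q f g (braidedΔ q x) = 0)
    (h01 : ∀ x ∈ Wfil θ 1, x ∈ K → x = 0) : IsPreNicholsIdeal S (leadIdeal K) where
  mul_left a x hx := by
    refine mem_ideal_of_gen (fun i x hx => ?_) a hx
    unfold leadIdeal at hx
    induction hx using Submodule.iSup_induction' with
    | mem n x hx =>
      refine Submodule.mem_iSup_of_mem (n + 1) ⟨?_, ?_⟩
      · have := homogTot_mul (wordElem_mem_homogTot [i]) hx.1
        rwa [wordElem_singleton, List.length_singleton, add_comm] at this
      · obtain ⟨k, hk, w, hw, rfl⟩ := Submodule.mem_sup.1 hx.2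
        rw [mul_add]
        exact add_mem (Submodule.mem_sup_left (hl _ _ hk))
          (Submodule.mem_sup_right (gen_mul_Wlt i hw))
    | zero => simp
    | add x y _ _ h1 h2 => rw [mul_add]; exact add_mem h1 h2
  mul_right a x hx := by
    refine mem_ideal_of_gen_right (fun i x hx => ?_) a hx
    unfold leadIdeal at hx
    induction hx using Submodule.iSup_induction' with
    | mem n x hx =>
      refine Submodule.mem_iSup_of_mem (n + 1) ⟨?_, ?_⟩
      · have := homogTot_mul hx.1 (wordElem_mem_homogTot [i])
        rwa [wordElem_singleton, List.length_singleton] at this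
      · obtain ⟨k, hk, w, hw, rfl⟩ := Submodule.mem_sup.1 hx.2
        rw [add_mul]
        exact add_mem (Submodule.mem_sup_left (hr _ _ hk))
          (Submodule.mem_sup_right (Wlt_mul_gen i hw))
    | zero => simp
    | add x y _ _ h1 h2 => rw [add_mul]; exact add_mem h1 h2
  homog_ge2 := by
    refine le_antisymm (iSup_le fun n x hx => ?_) (Submodule.span_le.2 fun x hx => hx.1)
    rcases Nat.lt_or_ge n 2 with hn | hn
    · obtain ⟨k, hk, w, hw, e⟩ := Submodule.mem_sup.1 hx.2
      have hw1 : w ∈ Wfil θ 0 := by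
        refine Submodule.span_mono ?_ hw
        rintro _ ⟨v, hv, rfl⟩; exact ⟨v, by omega, rfl⟩
      have hk0 : k = 0 := by
        refine h01 k ?_ hk
        rw [show k = x - w by rw [← e]; abel]
        exact sub_mem (Wfil_mono (by omega) (homogTot_le_Wfil n hx.1)) (Wfil_mono (by omega) hw1)
      have hxw : x = w := by rw [← e, hk0, zero_add]
      have hx0 : x = 0 := by
        apply (wordBasis θ).ext_elem
        intro v
        rw [map_zero, Finsupp.zero_apply]
        change coef v x = 0
        by_cases hv : v.length = n
        · rw [hxw]
          clear hxw e hw1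
          induction hw using Submodule.span_induction with
          | mem x h =>
            obtain ⟨u, hu, rfl⟩ := h
            rw [coef_wordElem, if_neg]
            rintro rfl; omega
          | zero => simp
          | add x y _ _ h1 h2 => rw [map_add, h1, h2, add_zero]
          | smul c x _ h => rw [map_smul, h, smul_zero]
        · exact coef_of_mem_homogTot hx.1 hv
      rw [hx0]; exact Submodule.zero_mem _
    · exact Submodule.subset_span ⟨Submodule.mem_iSup_of_mem n hx, n, hn, hx.1⟩
  coideal x hx := by
    apply mem_mixedSub_of_eval (q := q)
    intro f g hf hg
    rw [S.of_Δ]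
    unfold leadIdeal at hx
    induction hx using Submodule.iSup_induction' with
    | zero => simp
    | add x y _ _ h1 h2 => rw [map_add, map_add, h1, h2, add_zero]
    | mem n x hx =>
      choose F hFK hFW hFf using exists_lift_functional hf
      choose G hGK hGW hGg using exists_lift_functional hg
      have key : ∀ y ∈ homogBT q n, evalBT q f g y =
          ∑ a ∈ Finset.range (n + 1), evalBT q (F a) (G (n - a)) y := by
        intro y hy
        induction hy using Submodule.span_induction with
        | mem y h =>
          obtain ⟨v, w, h, rfl⟩ := h
          simp only [evalBT_inl_mul_inr]
          rw [Finset.sum_eq_single v.length]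
          · rw [hFf _ _ (wordElem_mem_homogTot v), hGg]
            rw [show n - v.length = w.length by omega]
            exact wordElem_mem_homogTot w
          · intro a ha hne
            rcases lt_or_gt_of_ne hne with h' | h'
            · rw [hGW _ _ (Submodule.subset_span ⟨w, by omega, rfl⟩), mul_zero]
            · rw [hFW _ _ (Submodule.subset_span ⟨v, h', rfl⟩), zero_mul]
          · intro h'; exfalso; apply h'; rw [Finset.mem_range]; omega
        | zero => simp
        | add x y _ _ h1 h2 => simp only [map_add, h1, h2, Finset.sum_add_distrib]
        | smul c x _ h => simp only [map_smul, h, Finset.smul_sum]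
      rw [key _ (Δ_mem_homogBT hx.1)]
      refine Finset.sum_eq_zero fun a ha => ?_
      obtain ⟨k, hk, w, hw, rfl⟩ := Submodule.mem_sup.1 hx.2
      rw [map_add, map_add, hΔ _ _ (hFK a) (hGK _) k hk, zero_add]
      clear hx
      induction hw using Submodule.span_induction with
      | mem x h =>
        obtain ⟨u, hu, rfl⟩ := h
        have h1 := Δ_word_mem_homogBT (q := q) u
        generalize braidedΔ q (wordElem θ u) = y at h1
        induction h1 using Submodule.span_induction with
        | mem y h =>
          obtain ⟨v, w, h, rfl⟩ := h
          rw [evalBT_inl_mul_inr]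
          by_cases hva : v.length < a
          · rw [hFW _ _ (Submodule.subset_span ⟨v, hva, rfl⟩), zero_mul]
          · rw [hGW _ _ (Submodule.subset_span ⟨w, by omega, rfl⟩), mul_zero]
        | zero => simp
        | add x y _ _ h1 h2 => rw [map_add, h1, h2, add_zero]
        | smul c x _ h => rw [map_smul, h, smul_zero]
      | zero => simp
      | add x y _ _ h1 h2 => rw [map_add, map_add, h1, h2, add_zero]
      | smul c x _ h => rw [map_smul, map_smul, h, smul_zero]

end

section

variable {θ : ℕ} {q : Fin θ → Fin θ → ℂˣ}

/-! ### Braided subspaces of primitive elements -/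

/-- The braiding matrix of a family of homogeneous elements of degrees `β a`. -/
def diagOf (q : Fin θ → Fin θ → ℂˣ) {m : ℕ} (β : Fin m → Fin θ → ℕ) : Fin m → Fin m → ℂˣ :=
  fun a b => Units.mk0 (qf q (β a) (β b)) (qf_ne_zero q _ _)

lemma qf_diagOf {m : ℕ} (β : Fin m → Fin θ → ℕ) (v w : List (Fin m)) :
    qf (diagOf q β) (degW m v) (degW m w) = qf q (v.map β).sum (w.map β).sum := by
  induction v with
  | nil => simp [degW_nil, qf_zero_left]
  | cons a v ih =>
    rw [degW_cons, qf_add_left, ih, List.map_cons, List.sum_cons, qf_add_left]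
    congr 1
    clear ih
    induction w with
    | nil => simp [degW_nil, qf_zero_right]
    | cons b w ih =>
      rw [degW_cons, qf_add_right, ih, List.map_cons, List.sum_cons, qf_add_right, qf_δ]
      rfl

lemma lift_word_mem_homogD {m : ℕ} {β : Fin m → Fin θ → ℕ} {y : Fin m → TV θ}
    (hy : ∀ a, y a ∈ homogD θ (β a)) (w : List (Fin m)) :
    FreeAlgebra.lift ℂ y (wordElem m w) ∈ homogD θ (w.map β).sum := by
  induction w with
  | nil => rw [wordElem_nil, map_one]; exact one_mem_homogD
  | cons a w ih =>
    rw [wordElem_cons, map_mul, List.map_cons, List.sum_cons]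
    refine homogD_mul ?_ ih
    rw [gen, FreeAlgebra.lift_ι_apply]; exact hy a

/-- The morphism of braided tensor squares induced by a family of homogeneous elements. -/
def liftBT (q : Fin θ → Fin θ → ℂˣ) {m : ℕ} (β : Fin m → Fin θ → ℕ) (y : Fin m → TV θ)
    (hy : ∀ a, y a ∈ homogD θ (β a)) : BT (diagOf q β) →ₐ[ℂ] BT q :=
  AlgHom.ofLinearMap ((BT.of q).toLinearMap ∘ₗ TensorProduct.map
    (FreeAlgebra.lift ℂ y).toLinearMap (FreeAlgebra.lift ℂ y).toLinearMap ∘ₗ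
      (BT.of (diagOf q β)).symm.toLinearMap)
    (by rw [BT.one_def, BT.one_def]; simp) (by
    have hof : ∀ u v : TV m, ((BT.of q).toLinearMap ∘ₗ TensorProduct.map
        (FreeAlgebra.lift ℂ y).toLinearMap (FreeAlgebra.lift ℂ y).toLinearMap ∘ₗ
        (BT.of (diagOf q β)).symm.toLinearMap) (BT.inl _ u * BT.inr _ v) =
        BT.inl q (FreeAlgebra.lift ℂ y u) * BT.inr q (FreeAlgebra.lift ℂ y v) := by
      intro u v; rw [BT.inl_mul_inr, BT.inl_mul_inr]; simp
    intro x z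
    induction x using BT.induction with
    | hw a b =>
      induction z using BT.induction with
      | hw c d =>
        rw [BT.inl_inr_mul_inl_inr _ (wordElem_mem_homogD b) (wordElem_mem_homogD c), map_smul,
          hof, hof, hof, BT.inl_inr_mul_inl_inr q (lift_word_mem_homogD hy b)
          (lift_word_mem_homogD hy c), qf_diagOf]
        simp only [map_mul]
      | h0 => simp
      | ha x y hx hy => simp only [mul_add, map_add, hx, hy]
      | hs c x hx => simp only [mul_smul_comm, map_smul, hx]
    | h0 => simp
    | ha x y hx hy => simp only [add_mul, map_add, hx, hy]
    | hs c x hx => simp only [smul_mul_assoc, map_smul, hx])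

lemma liftBT_inl_mul_inr {m : ℕ} (β : Fin m → Fin θ → ℕ) (y : Fin m → TV θ)
    (hy : ∀ a, y a ∈ homogD θ (β a)) (u v : TV m) :
    liftBT q β y hy (BT.inl _ u * BT.inr _ v) =
      BT.inl q (FreeAlgebra.lift ℂ y u) * BT.inr q (FreeAlgebra.lift ℂ y v) := by
  rw [BT.inl_mul_inr, BT.inl_mul_inr]; simp [liftBT]

lemma evalBT_liftBT {m : ℕ} (β : Fin m → Fin θ → ℕ) (y : Fin m → TV θ)
    (hy : ∀ a, y a ∈ homogD θ (β a)) (f g : TV θ →ₗ[ℂ] ℂ) (x : BT (diagOf q β)) :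
    evalBT q f g (liftBT q β y hy x) = evalBT (diagOf q β)
      (f ∘ₗ (FreeAlgebra.lift ℂ y).toLinearMap) (g ∘ₗ (FreeAlgebra.lift ℂ y).toLinearMap) x := by
  induction x using BT.induction with
  | hw v w => rw [liftBT_inl_mul_inr, evalBT_inl_mul_inr, evalBT_inl_mul_inr]; rfl
  | h0 => simp
  | ha x y hx hy => simp only [map_add, hx, hy]
  | hs c x hx => simp only [map_smul, hx]

section

variable {S : BraidedStr θ q} {I : Submodule ℂ (TV θ)}

/-- The ideal `I ⊗ T(V) + T(V) ⊗ I` of the braided tensor square. -/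
def IsPreNicholsIdeal.mixIdeal (hI : IsPreNicholsIdeal S I) : TwoSidedIdeal (BT q) :=
  TwoSidedIdeal.mk' (mixBT q I : Set (BT q)) (Submodule.zero_mem _)
    (fun h1 h2 => Submodule.add_mem _ h1 h2) (fun h => Submodule.neg_mem _ h)
    (fun h => hI.mixBT_mul_left _ h) (fun h => hI.mixBT_mul_right _ h)

/-- The braided tensor square of the pre-Nichols algebra `T(V)/I`. -/
abbrev IsPreNicholsIdeal.QBT (hI : IsPreNicholsIdeal S I) : Type := hI.mixIdeal.ringCon.Quotient

/-- The projection to the braided tensor square of `T(V)/I`. -/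
def IsPreNicholsIdeal.projBT (hI : IsPreNicholsIdeal S I) : BT q →ₐ[ℂ] hI.QBT :=
  hI.mixIdeal.ringCon.mkₐ ℂ

lemma IsPreNicholsIdeal.projBT_eq_zero (hI : IsPreNicholsIdeal S I) {x : BT q} :
    hI.projBT x = 0 ↔ x ∈ mixBT q I := by
  have : hI.projBT x = 0 ↔ x ∈ hI.mixIdeal := by
    rw [TwoSidedIdeal.mem_iff, ← RingCon.eq]; rfl
  rw [this, IsPreNicholsIdeal.mixIdeal, TwoSidedIdeal.mem_mk']; rfl

/-- `x` is primitive in `T(V)/I`. -/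
def PrimMod (q : Fin θ → Fin θ → ℂˣ) (I : Submodule ℂ (TV θ)) (x : TV θ) : Prop :=
  braidedΔ q x - (BT.inl q x + BT.inr q x) ∈ mixBT q I

lemma IsPreNicholsIdeal.eval_Δ_lift (hI : IsPreNicholsIdeal S I) {m : ℕ}
    {β : Fin m → Fin θ → ℕ} {y : Fin m → TV θ} (hy : ∀ a, y a ∈ homogD θ (β a))
    (hprim : ∀ a, PrimMod q I (y a)) (x : TV m) :
    hI.projBT (braidedΔ q (FreeAlgebra.lift ℂ y x)) =
      hI.projBT (liftBT q β y hy (braidedΔ (diagOf q β) x)) := by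
  have : (hI.projBT.comp (braidedΔ q)).comp (FreeAlgebra.lift ℂ y) =
      (hI.projBT.comp (liftBT q β y hy)).comp (braidedΔ (diagOf q β)) := by
    refine FreeAlgebra.hom_ext (funext fun a => ?_)
    change hI.projBT (braidedΔ q (FreeAlgebra.lift ℂ y (FreeAlgebra.ι ℂ a))) =
      hI.projBT (liftBT q β y hy (braidedΔ (diagOf q β) (gen m a)))
    rw [FreeAlgebra.lift_ι_apply, braidedΔ_gen, ← sub_eq_zero, ← map_sub, hI.projBT_eq_zero]
    have e1 := liftBT_inl_mul_inr (q := q) β y hy (gen m a) 1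
    have e2 := liftBT_inl_mul_inr (q := q) β y hy 1 (gen m a)
    simp only [map_one, mul_one, one_mul, gen, FreeAlgebra.lift_ι_apply] at e1 e2
    rw [map_add, gen, e1, e2]
    exact hprim a
  exact DFunLike.congr_fun this x

theorem IsPreNicholsIdeal.finiteRootSystem (hI : IsPreNicholsIdeal S I) (hGK : FinGK I)
    (hAAH : AAH) {m : ℕ} {β : Fin m → Fin θ → ℕ} {y : Fin m → TV θ}
    (hy : ∀ a, y a ∈ homogD θ (β a)) (hprim : ∀ a, PrimMod q I (y a))
    (hind : ∀ x ∈ Wfil m 1, FreeAlgebra.lift ℂ y x ∈ I → x = 0) :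
    FiniteRootSystem (diagOf q β) := by
  set φ := FreeAlgebra.lift ℂ y with hφ
  set K := I.comap φ.toLinearMap with hK
  have hpre : IsPreNicholsIdeal (braidedStr (diagOf q β)) (leadIdeal K) := by
    refine leadIdeal_isPreNichols _ (fun a x hx => ?_) (fun a x hx => ?_) (fun f g hf hg x hx => ?_)
      (fun x hx hxK => hind x hx hxK)
    · change φ (a * x) ∈ I; rw [map_mul]; exact hI.mul_left _ _ hx
    · change φ (x * a) ∈ I; rw [map_mul]; exact hI.mul_right _ _ hx
    · have hker : ∀ x, (I.mkQ ∘ₗ φ.toLinearMap) x = 0 → x ∈ K := by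
        intro x hx; simpa [K] using hx
      obtain ⟨f', hf'⟩ := exists_factor (I.mkQ ∘ₗ φ.toLinearMap) f
        (fun x hx => hf x (hker x hx))
      obtain ⟨g', hg'⟩ := exists_factor (I.mkQ ∘ₗ φ.toLinearMap) g
        (fun x hx => hg x (hker x hx))
      have ef : f = (f' ∘ₗ I.mkQ) ∘ₗ φ.toLinearMap := LinearMap.ext fun x => (hf' x).symm
      have eg : g = (g' ∘ₗ I.mkQ) ∘ₗ φ.toLinearMap := LinearMap.ext fun x => (hg' x).symm
      rw [ef, eg, ← evalBT_liftBT β y hy]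
      refine evalBT_mixBT (I := I) (fun x hx => ?_) (fun x hx => ?_) ?_
      · simp [(Submodule.Quotient.mk_eq_zero I).2 hx]
      · simp [(Submodule.Quotient.mk_eq_zero I).2 hx]
      · rw [← hI.projBT_eq_zero, ← hI.eval_Δ_lift hy hprim, hI.projBT_eq_zero]
        exact hI.Δ_mem hx
  refine hAAH m _ (braidedStr (diagOf q β)) ?_
  obtain ⟨C, d, hCd⟩ := hGK
  obtain ⟨D, hD⟩ : ∃ D, ∀ a, ∑ i, β a i ≤ D :=
    ⟨∑ a, ∑ i, β a i, fun a => Finset.single_le_sum (f := fun a => ∑ i, β a i)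
      (fun _ _ => Nat.zero_le _) (Finset.mem_univ a)⟩
  have hφW : ∀ n, ∀ x ∈ homogTot m n, φ x ∈ Wfil θ (D * n) := by
    intro n x hx
    induction hx using Submodule.span_induction with
    | mem x h =>
      obtain ⟨w, rfl, rfl⟩ := h
      induction w with
      | nil => rw [wordElem_nil, map_one]; exact wordElem_mem_Wfil (w := []) (Nat.zero_le _)
      | cons a w ih =>
        rw [wordElem_cons, map_mul, List.length_cons, mul_add, mul_one, add_comm]
        refine Wfil_mul ?_ ih
        rw [hφ, gen, FreeAlgebra.lift_ι_apply]
        exact Wfil_mono (hD a) (homogTot_le_Wfil _ (homogD_le_homogTot _ (hy a)))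
    | zero => simp
    | add x y _ _ h1 h2 => rw [map_add]; exact add_mem h1 h2
    | smul c x _ h => rw [map_smul]; exact Submodule.smul_mem _ c h
  have hhom : ∀ n, Module.finrank ℂ ((homogTot m n).map (leadIdeal K).mkQ) ≤
      C * (D * n + 1) ^ d := by
    intro n
    refine le_trans (finrank_map_le_of_inf_ker_le _ (I.mkQ ∘ₗ φ.toLinearMap) _ ?_)
      (le_trans ?_ (hCd (D * n)))
    · intro x hx h0
      rw [Submodule.mkQ_apply, Submodule.Quotient.mk_eq_zero]
      exact Submodule.mem_iSup_of_mem n ⟨hx, Submodule.mem_sup_left (by simpa [K] using h0)⟩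
    · apply Submodule.finrank_mono
      rw [Submodule.map_comp]
      apply Submodule.map_mono
      rintro _ ⟨x, hx, rfl⟩
      exact hφW n x hx
  have hlead : ∀ n, Module.finrank ℂ ((Wfil m n).map (leadIdeal K).mkQ) ≤
      ∑ k ∈ Finset.range (n + 1), C * (D * k + 1) ^ d := by
    intro n
    induction n with
    | zero =>
      have : Wfil m 0 ≤ homogTot m 0 :=
        Submodule.span_mono fun _ ⟨w, hw, h⟩ => ⟨w, Nat.le_zero.1 hw, h⟩
      rw [Finset.sum_range_one]
      exact (Submodule.finrank_mono (Submodule.map_mono this)).trans (hhom 0)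
    | succ n ih =>
      have : Wfil m (n + 1) ≤ Wfil m n ⊔ homogTot m (n + 1) := by
        refine Submodule.span_le.2 ?_
        rintro _ ⟨w, hw, rfl⟩
        rcases Nat.lt_or_ge w.length (n + 1) with h | h
        · exact Submodule.mem_sup_left (wordElem_mem_Wfil (by omega))
        · exact Submodule.mem_sup_right (Submodule.subset_span ⟨w, by omega, rfl⟩)
      rw [Finset.sum_range_succ]
      refine (Submodule.finrank_mono (Submodule.map_mono this)).trans ?_
      rw [Submodule.map_sup]
      exact (Submodule.finrank_add_le_finrank_add_finrank _ _).trans (add_le_add ih (hhom _))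
  refine ⟨C * (D + 1) ^ d, d + 1, fun n => ?_⟩
  have hle : leadIdeal K ≤ Jq (braidedStr (diagOf q β)) := le_sSup hpre
  refine (finrank_map_le_of_inf_ker_le _ (leadIdeal K).mkQ _ (fun x _ h0 => ?_)).trans
    ((hlead n).trans ?_)
  · rw [Submodule.mkQ_apply, Submodule.Quotient.mk_eq_zero] at h0 ⊢
    exact hle h0
  · calc ∑ k ∈ Finset.range (n + 1), C * (D * k + 1) ^ d
        ≤ ∑ k ∈ Finset.range (n + 1), C * ((D + 1) * (n + 1)) ^ d := by
          refine Finset.sum_le_sum fun k hk => ?_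
          rw [Finset.mem_range] at hk
          gcongr
          nlinarith
      _ = C * (D + 1) ^ d * (n + 1) ^ (d + 1) := by
          rw [Finset.sum_const, Finset.card_range, smul_eq_mul, mul_pow]; ring

end

end

/-! ### Dynkin diagrams whose labels are powers of a root of unity -/

/-- The labels of the Dynkin diagram of `q` are `ω ^ D a` (vertices) and `ω ^ E a b` (edges). -/
structure HasDiag {m : ℕ} (ω : ℂ) (q : Fin m → Fin m → ℂˣ) (D : Fin m → ℤ)
    (E : Fin m → Fin m → ℤ) : Prop where
  vertex : ∀ a, (q a a : ℂ) = ω ^ D a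
  edge : ∀ a b, a ≠ b → qtil q a b = ω ^ E a b

/-- The condition for `n ∈ cSet` in terms of exponents of a primitive `N`-th root of unity. -/
abbrev InCSet (N d e : ℤ) (n : ℕ) : Prop := (¬ N ∣ d ∧ N ∣ d * (n + 1)) ∨ N ∣ d * n + e

/-- `c` is the vector of the `-c_{pb}`, `b ≠ p`, for the diagram with exponents `D`, `E`. -/
abbrev IsCartanRow {m : ℕ} (N : ℤ) (D : Fin m → ℤ) (E : Fin m → Fin m → ℤ) (p : Fin m)
    (c : Fin m → ℕ) : Prop :=
  ∀ b, b ≠ p → InCSet N (D p) (E p b) (c b) ∧ ∀ n < c b, ¬ InCSet N (D p) (E p b) n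

/-- `D'`, `E'` are the exponents of the reflection at `p` of the diagram with exponents
`D`, `E`. -/
abbrev IsReflection {m : ℕ} (N : ℤ) (D : Fin m → ℤ) (E : Fin m → Fin m → ℤ) (p : Fin m)
    (c : Fin m → ℕ) (D' : Fin m → ℤ) (E' : Fin m → Fin m → ℤ) : Prop :=
  N ∣ D' p - D p ∧ (∀ b, b ≠ p → N ∣ D' b - (D b + c b * E p b + c b ^ 2 * D p)) ∧
  (∀ b, b ≠ p → N ∣ E' p b + E p b + 2 * c b * D p ∧ N ∣ E' b p + E p b + 2 * c b * D p) ∧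
  ∀ a b, a ≠ p → b ≠ p → a ≠ b →
    N ∣ E' a b - (E a b + c b * E p a + c a * E p b + 2 * c a * c b * D p)

lemma qnum_eq_zero_iff (t : ℂ) (n : ℕ) : qnum t (n + 1) = 0 ↔ t ≠ 1 ∧ t ^ (n + 1) = 1 := by
  have h := geom_sum_mul t (n + 1)
  change qnum t (n + 1) * (t - 1) = _ at h
  constructor
  · intro h0
    rw [h0, zero_mul, eq_comm, sub_eq_zero] at h
    refine ⟨?_, h⟩
    rintro rfl
    simp only [qnum, one_pow, Finset.sum_const, Finset.card_range, nsmul_eq_mul, mul_one] at h0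
    exact Nat.cast_ne_zero.2 (Nat.succ_ne_zero n) h0
  · rintro ⟨h1, h2⟩
    rw [h2, sub_self] at h
    exact (mul_eq_zero.1 h).resolve_right (sub_ne_zero.2 h1)

section

variable {m N : ℕ} {ω : ℂ} {q : Fin m → Fin m → ℂˣ} {D : Fin m → ℤ} {E : Fin m → Fin m → ℤ}

lemma qtil_comm (a b : Fin m) : qtil q a b = qtil q b a := mul_comm _ _

lemma _root_.IsPrimitiveRoot.zpow_eq_zpow_of_dvd (hω : IsPrimitiveRoot ω N) (hN : N ≠ 0) {a b : ℤ}
    (h : (N : ℤ) ∣ a - b) : ω ^ a = ω ^ b := by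
  have := (hω.zpow_eq_one_iff_dvd (a - b)).2 h
  rwa [zpow_sub₀ (hω.ne_zero hN), div_eq_one_iff_eq (zpow_ne_zero _ (hω.ne_zero hN))] at this

lemma HasDiag.mem_cSet (h : HasDiag ω q D E) (hω : IsPrimitiveRoot ω N) (hN : N ≠ 0)
    {a b : Fin m} (hab : a ≠ b) (n : ℕ) : n ∈ cSet q a b ↔ InCSet N (D a) (E a b) n := by
  have hω0 := hω.ne_zero hN
  rw [cSet, Set.mem_ofPred_eq, mul_eq_zero, qnum_eq_zero_iff, h.vertex, h.edge a b hab, sub_eq_zero,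
    eq_comm (a := (1 : ℂ)), InCSet, ne_eq, hω.zpow_eq_one_iff_dvd, ← zpow_natCast, ← zpow_mul,
    ← zpow_natCast, ← zpow_mul, hω.zpow_eq_one_iff_dvd, ← zpow_add₀ hω0, hω.zpow_eq_one_iff_dvd]
  push_cast
  rfl

lemma HasDiag.cij_eq (h : HasDiag ω q D E) (hω : IsPrimitiveRoot ω N) (hN : N ≠ 0)
    {p : Fin m} {c : Fin m → ℕ} (hc : IsCartanRow N D E p c) {b : Fin m} (hb : b ≠ p) :
    cij q p b = -(c b : ℤ) := by
  rw [cij, if_neg hb.symm]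
  have : sInf (cSet q p b) = c b := by
    have hmem : c b ∈ cSet q p b := (h.mem_cSet hω hN hb.symm _).2 (hc b hb).1
    refine le_antisymm (Nat.sInf_le hmem) (not_lt.1 fun hlt => ?_)
    exact (hc b hb).2 _ hlt ((h.mem_cSet hω hN hb.symm _).1 (Nat.sInf_mem ⟨_, hmem⟩))
  rw [this]; rfl

lemma reflectMat_self (p : Fin m) : reflectMat q p p p = q p p := by
  simp only [reflectMat, cij, if_true]
  group

lemma HasDiag.reflect (h : HasDiag ω q D E) (hω : IsPrimitiveRoot ω N) (hN : N ≠ 0)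
    {p : Fin m} {c : Fin m → ℕ} (hc : IsCartanRow N D E p c) {D' : Fin m → ℤ}
    {E' : Fin m → Fin m → ℤ} (hr : IsReflection N D E p c D' E') :
    HasDiag ω (reflectMat q p) D' E' := by
  have hω0 := hω.ne_zero hN
  have hpp := h.vertex p
  have hself : cij q p p = 2 := by simp [cij]
  have hcast : ∀ (a b : Fin m) (z : ℤ), ((q a b ^ z : ℂˣ) : ℂ) = (q a b : ℂ) ^ z := fun a b z =>
    Units.val_zpow_eq_zpow_val _ _
  have hne : ∀ a b, (q a b : ℂ) ≠ 0 := fun a b => (q a b).ne_zero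
  constructor
  · intro a
    by_cases ha : a = p
    · subst ha
      rw [reflectMat_self, hpp]
      exact (hω.zpow_eq_zpow_of_dvd hN hr.1).symm
    · rw [hω.zpow_eq_zpow_of_dvd hN (hr.2.1 a ha)]
      have he := h.edge p a (Ne.symm ha)
      have hca := h.cij_eq hω hN hc ha
      simp only [reflectMat, hca, neg_neg, Units.val_mul, hcast, h.vertex a, hpp, neg_mul_neg]
      rw [mul_assoc (ω ^ D a), ← mul_zpow, mul_comm (q a p : ℂ), ← qtil, he, ← zpow_mul, ← zpow_mul,
        ← zpow_add₀ hω0, ← zpow_add₀ hω0]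
      congr 1; ring
  · have hpb : ∀ b, b ≠ p → qtil (reflectMat q p) p b = ω ^ (-(E p b + 2 * c b * D p)) := by
      intro b hb
      have he := h.edge p b (Ne.symm hb)
      have hcb := h.cij_eq hω hN hc hb
      rw [zpow_neg, zpow_add₀ hω0, ← he, mul_comm (2 * (c b : ℤ)), zpow_mul, ← hpp, qtil, qtil]
      simp only [reflectMat, hcb, hself, neg_neg, Units.val_mul, hcast]
      have h1 := hne p p
      have h2 := hne p b
      have h3 := hne b p
      rw [show (2 : ℤ) * -(c b : ℤ) = -(c b : ℤ) + -(c b : ℤ) by ring,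
        show -(c b : ℤ) * 2 = -(c b : ℤ) + -(c b : ℤ) by ring,
        show (2 * (c b : ℤ)) = c b + c b by ring]
      simp only [zpow_add₀ h1, zpow_neg, zpow_natCast]
      field_simp
    intro a b hab
    by_cases ha : a = p
    · subst ha
      rw [hpb b (Ne.symm hab)]
      refine hω.zpow_eq_zpow_of_dvd hN ?_
      obtain ⟨k, hk⟩ := (hr.2.2.1 b (Ne.symm hab)).1
      exact ⟨-k, by linarith⟩
    · by_cases hb : b = p
      · subst hb
        rw [qtil_comm, hpb a hab]
        refine hω.zpow_eq_zpow_of_dvd hN ?_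
        obtain ⟨k, hk⟩ := (hr.2.2.1 a hab).2
        exact ⟨-k, by linarith⟩
      · rw [hω.zpow_eq_zpow_of_dvd hN (hr.2.2.2 a b ha hb hab)]
        have hea := h.edge p a (Ne.symm ha)
        have heb := h.edge p b (Ne.symm hb)
        have heab := h.edge a b hab
        have hca := h.cij_eq hω hN hc ha
        have hcb := h.cij_eq hω hN hc hb
        rw [zpow_add₀ hω0, zpow_add₀ hω0, zpow_add₀ hω0, mul_comm (c b : ℤ) (E p a),
          mul_comm (c a : ℤ) (E p b), mul_comm (2 * (c a : ℤ) * c b), zpow_mul, zpow_mul, zpow_mul,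
          ← hea, ← heb, ← heab, ← hpp]
        simp only [qtil, reflectMat, hca, hcb, neg_neg, Units.val_mul, hcast, neg_mul_neg]
        rw [show 2 * (c a : ℤ) * c b = c a * c b + c a * c b by ring,
          mul_comm (c b : ℤ) (c a : ℤ), zpow_add₀ (hne p p), mul_zpow, mul_zpow]
        ring

/-- The braiding matrices in the Weyl class of `q`. -/
def Reach (q q' : Fin m → Fin m → ℂˣ) : Prop := ∃ β, ReachRoot q q' β

lemma Reach.refl [NeZero m] (q : Fin m → Fin m → ℂˣ) : Reach q q := ⟨_, ReachRoot.simple 0⟩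

lemma Reach.reflect {q' : Fin m → Fin m → ℂˣ} (h : Reach q q') (p : Fin m) :
    Reach q (reflectMat q' p) := h.elim fun _ h => ⟨_, h.reflect p⟩

lemma not_finiteRootSystem_of_one {q' : Fin m → Fin m → ℂˣ} (hq : Reach q q')
    (h : HasDiag ω q' D E) (hω : IsPrimitiveRoot ω N) (hN : N ≠ 0) {a b : Fin m} (hab : a ≠ b)
    (ha : (N : ℤ) ∣ D a) (hb : ¬ (N : ℤ) ∣ E a b) : ¬ FiniteRootSystem q := by
  intro hF
  obtain ⟨n, hn⟩ := hF.1 q' a hq b hab.symm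
  rw [h.mem_cSet hω hN hab] at hn
  rcases hn with hn | hn
  · exact hn.1 ha
  · exact hb ((Int.dvd_add_right (dvd_mul_of_dvd_left ha _)).1 hn)

lemma not_finite_of_unbounded {R : Set (Fin m → ℤ)} (f : (Fin m → ℤ) → ℤ)
    (h : ∀ n : ℕ, ∃ β ∈ R, (n : ℤ) ≤ f β) : ¬ R.Finite := by
  intro hR
  obtain ⟨M, hM⟩ := (hR.image f).bddAbove
  obtain ⟨β, hβ, hn⟩ := h (M.toNat + 1)
  have := hM ⟨β, hβ, rfl⟩
  push_cast at hn
  have := Int.self_le_toNat M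
  omega

end

lemma sRefl_zero (q : Fin 2 → Fin 2 → ℂˣ) (β : Fin 2 → ℤ) :
    sRefl q 0 β = ![-β 0 - cij q 0 1 * β 1, β 1] := by
  funext k; fin_cases k
  · simp [sRefl, cij]; ring
  · simp [sRefl]

lemma sRefl_one (q : Fin 2 → Fin 2 → ℂˣ) (β : Fin 2 → ℤ) :
    sRefl q 1 β = ![β 0, -β 1 - cij q 1 0 * β 0] := by
  funext k; fin_cases k
  · simp [sRefl]
  · simp [sRefl, cij]; ring

/-- In rank two, if the products of consecutive Cartan entries along the alternating
reflections are at least `4`, then there are infinitely many roots. -/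
lemma not_finiteRootSystem_rank_two {q : Fin 2 → Fin 2 → ℂˣ}
    (P : Fin 2 → ℕ → Set (Fin 2 → Fin 2 → ℂˣ))
    (h0 : ∃ c : ℕ, 1 ≤ c ∧ q ∈ P 0 c)
    (hP0 : ∀ c, ∀ q' ∈ P 0 c, cij q' 0 1 = -(c : ℤ) ∧
      ∃ c' : ℕ, 4 ≤ c * c' ∧ reflectMat q' 0 ∈ P 1 c')
    (hP1 : ∀ c, ∀ q' ∈ P 1 c, cij q' 1 0 = -(c : ℤ) ∧
      ∃ c' : ℕ, 4 ≤ c * c' ∧ reflectMat q' 1 ∈ P 0 c') : ¬ FiniteRootSystem q := by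
  intro hF
  refine not_finite_of_unbounded (fun β => β 0) (fun n => ?_) hF.2
  suffices h : ∃ c q' β, ReachRoot q q' β ∧ q' ∈ P 0 c ∧ (n : ℤ) ≤ β 0 ∧ 2 * β 0 < c * β 1 by
    obtain ⟨c, q', β, h1, h2, h3, h4⟩ := h
    exact ⟨β, ⟨q', h1⟩, h3⟩
  induction n with
  | zero =>
    obtain ⟨c, hc, hq⟩ := h0
    refine ⟨c, q, _, ReachRoot.simple 1, hq, by simp, ?_⟩
    simp only [zero_ne_one, if_false, if_true, mul_zero, mul_one]
    exact_mod_cast hc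
  | succ n ih =>
    obtain ⟨c, q', β, h1, h2, h3, h4⟩ := ih
    obtain ⟨e1, c', hcc, hq'⟩ := hP0 c q' h2
    obtain ⟨e2, c'', hcc', hq''⟩ := hP1 c' _ hq'
    refine ⟨c'', _, _, (h1.reflect 0).reflect 1, hq'', ?_, ?_⟩
    · rw [sRefl_zero, sRefl_one]
      simp only [Matrix.cons_val_zero, e1, e2]
      push_cast; linarith
    · rw [sRefl_zero, sRefl_one]
      simp only [Matrix.cons_val_zero, Matrix.cons_val_one, Matrix.cons_val_fin_one, e1, e2]
      set b0 := β 0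
      set b1 := β 1
      have hb : b0 < -b0 - -(c : ℤ) * b1 := by linarith
      set b0' := -b0 - -(c : ℤ) * b1 with hb0'
      have hb0'pos : 0 < b0' := by omega
      have e : (c : ℤ) * b1 = b0 + b0' := by rw [hb0']; ring
      have hcpos : (0 : ℤ) < c := by
        have : 0 < c := Nat.pos_of_ne_zero (by rintro rfl; simp at hcc)
        exact_mod_cast this
      have hc'pos : (0 : ℤ) < c' := by
        have : 0 < c' := Nat.pos_of_ne_zero (by rintro rfl; simp at hcc)
        exact_mod_cast this
      have k1 : (4 : ℤ) ≤ c * c' := by exact_mod_cast hcc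
      have k2 : (4 : ℤ) ≤ c' * c'' := by exact_mod_cast hcc'
      have s1 : 2 * b1 < c' * b0' := by
        have : (c : ℤ) * (2 * b1) < c * (c' * b0') := by nlinarith
        exact lt_of_mul_lt_mul_left this hcpos.le
      set b1' := -b1 - -(c' : ℤ) * b0' with hb1'
      have e' : (c' : ℤ) * b0' = b1 + b1' := by rw [hb1']; ring
      have hb1'pos : 0 < b1' := by nlinarith
      have : (c' : ℤ) * (2 * b0') < c' * (c'' * b1') := by
        nlinarith [mul_le_mul_of_nonneg_right k2 hb1'pos.le]
      exact lt_of_mul_lt_mul_left this hc'pos.le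

/-! ### Vanishing of primitive elements -/

section

variable {θ : ℕ} {q : Fin θ → Fin θ → ℂˣ} {S : BraidedStr θ q} {I : Submodule ℂ (TV θ)}

lemma primMod_gen (i : Fin θ) : PrimMod q I (gen θ i) := by
  rw [PrimMod, braidedΔ_gen, sub_self]
  exact Submodule.zero_mem _

lemma eq_sum_coef_of_mem_Wfil_one {m : ℕ} {x : TV m} (hx : x ∈ Wfil m 1) :
    x = coef [] x • 1 + ∑ a, coef [a] x • gen m a := by
  induction hx using Submodule.span_induction with
  | mem x h =>
    obtain ⟨w, hw, rfl⟩ := h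
    match w, hw with
    | [], _ => simp only [coef_wordElem]; simp [wordElem_nil]
    | [a], _ => simp only [coef_wordElem]; simp [wordElem_singleton]
  | zero => simp
  | add x y _ _ hx hy =>
    simp only [map_add, add_smul, Finset.sum_add_distrib]
    nth_rewrite 1 [hx]
    nth_rewrite 1 [hy]
    abel
  | smul c x _ hx =>
    simp only [map_smul, smul_eq_mul, mul_smul, ← Finset.smul_sum, ← smul_add]
    rw [← hx]

/-- A primitive element of degree at least two of a pre-Nichols algebra with finite GKdim vanishes
whenever it spans, together with some of the generators, a braided vector space with infinite
root system. -/
lemma IsPreNicholsIdeal.mem_of_primMod (hI : IsPreNicholsIdeal S I) (hGK : FinGK I) (hAAH : AAH)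
    {m : ℕ} {β : Fin (m + 1) → Fin θ → ℕ} {e : Fin m → Fin θ} (he : Function.Injective e)
    (hβ : ∀ a : Fin m, β a.succ = δ θ (e a)) {u : TV θ} (hu : u ∈ homogD θ (β 0))
    (hd : 2 ≤ ∑ k, β 0 k) (hp : PrimMod q I u) (hF : ¬ FiniteRootSystem (diagOf q β)) : u ∈ I := by
  by_contra huI
  let y : Fin (m + 1) → TV θ := Fin.cons u fun a => gen θ (e a)
  refine hF (hI.finiteRootSystem hGK hAAH (y := y) ?_ ?_ ?_)
  · intro a
    induction a using Fin.cases with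
    | zero => exact hu
    | succ a => rw [hβ]; exact gen_mem_homogD _
  · intro a
    induction a using Fin.cases with
    | zero => exact hp
    | succ a => exact primMod_gen _
  · intro x hx hxI
    have hcu : ∀ v : List (Fin θ), v.length ≤ 1 → coef v u = 0 := fun v hv =>
      coef_of_mem_homogTot (homogD_le_homogTot _ hu) (by omega)
    rw [eq_sum_coef_of_mem_Wfil_one hx] at hxI ⊢
    have hgen : ∀ a, FreeAlgebra.lift ℂ y (gen (m + 1) a) = y a := fun a =>
      FreeAlgebra.lift_ι_apply _ _
    simp only [map_add, map_smul, map_one, map_sum, hgen, Fin.sum_univ_succ, y, Fin.cons_zero,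
      Fin.cons_succ] at hxI ⊢
    have hnil : coef [] x = 0 := by
      have := hI.coef_eq_zero hxI (v := []) (by simp)
      simpa [hcu, coef_nil_gen, coef_nil_one] using this
    have hsucc : ∀ a : Fin m, coef [a.succ] x = 0 := by
      intro a
      have := hI.coef_eq_zero hxI (v := [e a]) (by simp)
      simpa [hcu, hnil, ← wordElem_singleton, coef_wordElem, he.eq_iff] using this
    simp only [hnil, hsucc, zero_smul, Finset.sum_const_zero, zero_add, add_zero] at hxI ⊢
    by_cases hc : coef [0] x = 0
    · rw [hc, zero_smul]
    · exact absurd (by simpa [smul_smul, hc] using I.smul_mem (coef [0] x)⁻¹ hxI) huI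

/-- The multidegree `a α_i + b α_j`. -/
def bideg (i j : Fin θ) (a b : ℕ) : Fin θ → ℕ := a • δ θ i + b • δ θ j

lemma sum_bideg (i j : Fin θ) (a b : ℕ) : ∑ k, bideg i j a b k = a + b := by
  simp [bideg, δ, Finset.sum_add_distrib]

lemma qf_smul_left (n : ℕ) (a b : Fin θ → ℕ) : qf q (n • a) b = qf q a b ^ n := by
  induction n with
  | zero => rw [zero_smul, qf_zero_left, pow_zero]
  | succ n ih => rw [add_smul, one_smul, qf_add_left, ih, pow_succ]

lemma qf_smul_right (n : ℕ) (a b : Fin θ → ℕ) : qf q a (n • b) = qf q a b ^ n := by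
  induction n with
  | zero => rw [zero_smul, qf_zero_right, pow_zero]
  | succ n ih => rw [add_smul, one_smul, qf_add_right, ih, pow_succ]

lemma qf_bideg (i j : Fin θ) (a b c d : ℕ) : qf q (bideg i j a b) (bideg i j c d) =
    (q i i : ℂ) ^ (a * c) * (q i j : ℂ) ^ (a * d) * (q j i : ℂ) ^ (b * c) *
      (q j j : ℂ) ^ (b * d) := by
  simp only [bideg, qf_add_left, qf_add_right, qf_smul_left, qf_smul_right, qf_δ]
  ring

lemma hasDiag_diagOf {ω : ℂ} (hω : ω ≠ 0) {i j : Fin θ} {D₁ T D₂ : ℤ} (h₁ : (q i i : ℂ) = ω ^ D₁)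
    (h : qtil q i j = ω ^ T) (h₂ : (q j j : ℂ) = ω ^ D₂) {m : ℕ} (A B : Fin m → ℕ) :
    HasDiag ω (diagOf q fun k => bideg i j (A k) (B k))
      (fun k => A k ^ 2 * D₁ + A k * B k * T + B k ^ 2 * D₂)
      (fun k l => 2 * A k * A l * D₁ + (A k * B l + B k * A l) * T + 2 * B k * B l * D₂) := by
  have hp : ∀ (z : ℤ) (n : ℕ), (ω ^ z) ^ n = ω ^ (n * z) := fun z n => by
    rw [← zpow_natCast, ← zpow_mul, mul_comm]
  have e : ∀ n : ℕ, (q i j : ℂ) ^ n * (q j i : ℂ) ^ n = ω ^ (n * T) := fun n => by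
    rw [← mul_pow, ← qtil, h, hp]
  constructor
  · intro k
    simp only [diagOf, Units.val_mk0, qf_bideg, h₁, h₂, hp]
    rw [mul_assoc (ω ^ _), mul_comm (B k), e, ← zpow_add₀ hω, ← zpow_add₀ hω]
    congr 1; push_cast; ring
  · intro k l _
    have : ∀ x y z w x' y' z' w' : ℂ,
        x * y * z * w * (x' * y' * z' * w') = x * x' * (y * z') * (z * y') * (w * w') := by
      intros; ring
    simp only [qtil, diagOf, Units.val_mk0, qf_bideg, h₁, h₂, hp]
    rw [this, mul_comm (B l), e, mul_comm (q j i ^ _ : ℂ), mul_comm (A l) (B k), e,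
      ← zpow_add₀ hω, ← zpow_add₀ hω, ← zpow_add₀ hω, ← zpow_add₀ hω, ← zpow_add₀ hω]
    congr 1; push_cast; ring

lemma HasDiag.congr {m N : ℕ} {ω : ℂ} {p : Fin m → Fin m → ℂˣ} {D D' : Fin m → ℤ}
    {E E' : Fin m → Fin m → ℤ} (h : HasDiag ω p D E) (hω : IsPrimitiveRoot ω N) (hN : N ≠ 0)
    (hD : ∀ a, (N : ℤ) ∣ D a - D' a) (hE : ∀ a b, a ≠ b → (N : ℤ) ∣ E a b - E' a b) :
    HasDiag ω p D' E' :=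
  ⟨fun a => by rw [h.vertex, hω.zpow_eq_zpow_of_dvd hN (hD a)],
    fun a b hab => by rw [h.edge a b hab, hω.zpow_eq_zpow_of_dvd hN (hE a b hab)]⟩

end

/-! ### Infinite root systems -/

/-- The Dynkin diagram of the vertices `i`, `j` is `(ω ^ D₁, ω ^ T, ω ^ D₂)` for a primitive `N`-th
root of unity `ω`. -/
structure IsRankTwo {θ : ℕ} (q : Fin θ → Fin θ → ℂˣ) (i j : Fin θ) (ω : ℂ) (N D₁ T D₂ : ℕ) :
    Prop where
  ne : i ≠ j
  pos : N ≠ 0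
  prim : IsPrimitiveRoot ω N
  left : (q i i : ℂ) = ω ^ D₁
  edge : (q i j : ℂ) * q j i = ω ^ T
  right : (q j j : ℂ) = ω ^ D₂

section

variable {θ : ℕ} {q : Fin θ → Fin θ → ℂˣ} {S : BraidedStr θ q} {I : Submodule ℂ (TV θ)}
  {i j : Fin θ} {ω : ℂ} {N D₁ T D₂ : ℕ}

lemma IsRankTwo.hasDiag (h : IsRankTwo q i j ω N D₁ T D₂) {m : ℕ} (A B : Fin m → ℕ) :
    HasDiag ω (diagOf q fun k => bideg i j (A k) (B k))
      (fun k => A k ^ 2 * D₁ + A k * B k * T + B k ^ 2 * D₂)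
      (fun k l => 2 * A k * A l * D₁ + (A k * B l + B k * A l) * T + 2 * B k * B l * D₂) :=
  hasDiag_diagOf (h.prim.ne_zero h.pos) (by rw [h.left, zpow_natCast])
    (by rw [qtil, h.edge, zpow_natCast]) (by rw [h.right, zpow_natCast]) A B

/-- The root system of the span of `u` of degree `a α_i + b α_j` and `x_i` is infinite. -/
def InfLeft (q : Fin θ → Fin θ → ℂˣ) (i j : Fin θ) (a b : ℕ) : Prop :=
  ¬ FiniteRootSystem (diagOf q fun k => bideg i j (![a, 1] k) (![b, 0] k))

/-- The root system of the span of `u` of degree `a α_i + b α_j` and `x_j` is infinite. -/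
def InfRight (q : Fin θ → Fin θ → ℂˣ) (i j : Fin θ) (a b : ℕ) : Prop :=
  ¬ FiniteRootSystem (diagOf q fun k => bideg i j (![a, 0] k) (![b, 1] k))

/-- The root system of the span of `u` of degree `a α_i + b α_j`, `x_i` and `x_j` is infinite. -/
def InfBoth (q : Fin θ → Fin θ → ℂˣ) (i j : Fin θ) (a b : ℕ) : Prop :=
  ¬ FiniteRootSystem (diagOf q fun k => bideg i j (![a, 1, 0] k) (![b, 0, 1] k))

lemma IsPreNicholsIdeal.mem_of_inf (hI : IsPreNicholsIdeal S I) (hGK : FinGK I) (hAAH : AAH)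
    (hij : i ≠ j) {a b : ℕ} {u : TV θ} (hu : u ∈ homogD θ (bideg i j a b)) (hp : PrimMod q I u)
    (hab : 2 ≤ a + b) (h : InfLeft q i j a b ∨ InfRight q i j a b ∨ InfBoth q i j a b) :
    u ∈ I := by
  have hab' : 2 ≤ ∑ k, bideg i j a b k := by rwa [sum_bideg]
  rcases h with h | h | h
  · exact hI.mem_of_primMod hGK hAAH (β := fun k => bideg i j (![a, 1] k) (![b, 0] k)) (e := ![i])
      (Function.injective_of_subsingleton _) (fun k => by fin_cases k; simp [bideg]) hu hab' hp h
  · exact hI.mem_of_primMod hGK hAAH (β := fun k => bideg i j (![a, 0] k) (![b, 1] k)) (e := ![j])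
      (Function.injective_of_subsingleton _) (fun k => by fin_cases k; simp [bideg]) hu hab' hp h
  · refine hI.mem_of_primMod hGK hAAH (β := fun k => bideg i j (![a, 1, 0] k) (![b, 0, 1] k))
      (e := ![i, j]) (fun k l hkl => ?_) (fun k => ?_) hu hab' hp h
    · fin_cases k <;> fin_cases l <;> simp_all [hij.symm]
    · fin_cases k <;> simp [bideg]

lemma infRight_ufoSeven_cube (h : IsRankTwo q i j ω 12 4 11 1) : InfRight q i j 3 0 :=
  not_finiteRootSystem_of_one (Reach.refl _) (h.hasDiag _ _) h.prim h.pos zero_ne_one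
    (by decide) (by decide)

lemma infRight_ufoSeven_serre (h : IsRankTwo q i j ω 12 4 11 1) : InfRight q i j 1 2 := by
  have hd := (h.hasDiag ![1, 0] ![2, 1]).congr h.prim h.pos (D' := ![6, 1])
    (E' := fun _ _ => 3) (by decide) (by decide)
  refine not_finiteRootSystem_rank_two ![fun c => {p | c = 1 ∧ (HasDiag ω p ![6, 1] (fun _ _ => 3) ∨
      HasDiag ω p ![1, 10] (fun _ _ => 11) ∨ HasDiag ω p ![6, 10] (fun _ _ => 9))},
    fun c => {p | c = 9 ∧ HasDiag ω p ![6, 1] (fun _ _ => 3) ∨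
      c = 5 ∧ HasDiag ω p ![1, 10] (fun _ _ => 11) ∨
      c = 5 ∧ HasDiag ω p ![6, 10] (fun _ _ => 9)}] ⟨1, le_rfl, rfl, Or.inl hd⟩ ?_ ?_
  · rintro c p ⟨rfl, hp | hp | hp⟩
    · have hc : IsCartanRow (12 : ℕ) ![6, 1] (fun _ _ => 3) 0 ![0, 1] := by decide
      exact ⟨hp.cij_eq h.prim h.pos hc (by decide), 5, by decide,
        Or.inr (Or.inr ⟨rfl, hp.reflect h.prim h.pos hc (by decide)⟩)⟩
    · have hc : IsCartanRow (12 : ℕ) ![1, 10] (fun _ _ => 11) 0 ![0, 1] := by decide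
      exact ⟨hp.cij_eq h.prim h.pos hc (by decide), 5, by decide,
        Or.inr (Or.inl ⟨rfl, hp.reflect h.prim h.pos hc (by decide)⟩)⟩
    · have hc : IsCartanRow (12 : ℕ) ![6, 10] (fun _ _ => 9) 0 ![0, 1] := by decide
      exact ⟨hp.cij_eq h.prim h.pos hc (by decide), 9, by decide,
        Or.inl ⟨rfl, hp.reflect h.prim h.pos hc (by decide)⟩⟩
  · rintro c p (⟨rfl, hp⟩ | ⟨rfl, hp⟩ | ⟨rfl, hp⟩)
    · have hc : IsCartanRow (12 : ℕ) ![6, 1] (fun _ _ => 3) 1 ![9, 0] := by decide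
      exact ⟨hp.cij_eq h.prim h.pos hc (by decide), 1, by decide,
        rfl, Or.inl (hp.reflect h.prim h.pos hc (by decide))⟩
    · have hc : IsCartanRow (12 : ℕ) ![1, 10] (fun _ _ => 11) 1 ![5, 0] := by decide
      exact ⟨hp.cij_eq h.prim h.pos hc (by decide), 1, by decide,
        rfl, Or.inr (Or.inr (hp.reflect h.prim h.pos hc (by decide)))⟩
    · have hc : IsCartanRow (12 : ℕ) ![6, 10] (fun _ _ => 9) 1 ![5, 0] := by decide
      exact ⟨hp.cij_eq h.prim h.pos hc (by decide), 1, by decide,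
        rfl, Or.inr (Or.inl (hp.reflect h.prim h.pos hc (by decide)))⟩

lemma infLeft_ufoEight_square (h : IsRankTwo q i j ω 12 8 3 6) : InfLeft q i j 0 2 :=
  not_finiteRootSystem_of_one (Reach.refl _) (h.hasDiag _ _) h.prim h.pos zero_ne_one
    (by decide) (by decide)

lemma infRight_ufoEight_cube (h : IsRankTwo q i j ω 12 8 3 6) : InfRight q i j 3 0 :=
  not_finiteRootSystem_of_one (Reach.refl _) (h.hasDiag _ _) h.prim h.pos zero_ne_one
    (by decide) (by decide)

lemma infLeft_ufoEight (h : IsRankTwo q i j ω 12 8 3 6) : InfLeft q i j 4 3 :=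
  not_finiteRootSystem_of_one ((Reach.refl _).reflect 1)
    ((h.hasDiag _ _).reflect h.prim h.pos (c := ![2, 0]) (by decide)
      (D' := ![0, 8]) (E' := fun _ _ => 3) (by decide))
    h.prim h.pos zero_ne_one (by decide) (by decide)

lemma infRight_ufoNine_fourth (h : IsRankTwo q i j ω 24 6 1 23) : InfRight q i j 4 0 :=
  not_finiteRootSystem_of_one (Reach.refl _) (h.hasDiag _ _) h.prim h.pos zero_ne_one
    (by decide) (by decide)

lemma infLeft_ufoNine_serre (h : IsRankTwo q i j ω 24 6 1 23) : InfLeft q i j 1 2 :=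
  not_finiteRootSystem_of_one (((Reach.refl _).reflect 0).reflect 1)
    (((h.hasDiag _ _).reflect h.prim h.pos (c := ![0, 5]) (by decide)
      (D' := ![4, 8]) (E' := fun _ _ => 18) (by decide)).reflect h.prim h.pos (c := ![2, 0])
      (by decide) (D' := ![0, 8]) (E' := fun _ _ => 22) (by decide))
    h.prim h.pos zero_ne_one (by decide) (by decide)

lemma infLeft_ufoEleven_cube (h : IsRankTwo q i j ω 30 1 27 20) : InfLeft q i j 0 3 :=
  not_finiteRootSystem_of_one (Reach.refl _) (h.hasDiag _ _) h.prim h.pos zero_ne_one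
    (by decide) (by decide)

lemma infRight_ufoEleven (h : IsRankTwo q i j ω 30 1 27 20) : InfRight q i j 2 2 :=
  not_finiteRootSystem_of_one ((Reach.refl _).reflect 1)
    ((h.hasDiag _ _).reflect h.prim h.pos (c := ![2, 0]) (by decide)
      (D' := ![0, 20]) (E' := fun _ _ => 26) (by decide))
    h.prim h.pos zero_ne_one (by decide) (by decide)

lemma infBoth_ufoEleven_serre (h : IsRankTwo q i j ω 30 1 27 20) : InfBoth q i j 4 1 :=
  not_finiteRootSystem_of_one (((Reach.refl _).reflect 2).reflect 1)
    (((h.hasDiag _ _).reflect h.prim h.pos (c := ![2, 2, 0]) (by decide)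
      (D' := ![10, 15, 20]) (E' := ![![0, 5, 12], ![5, 0, 13], ![12, 13, 0]])
      (by decide)).reflect h.prim h.pos (c := ![1, 0, 1])
      (by decide) (D' := ![0, 15, 18]) (E' := ![![0, 25, 0], ![25, 0, 17], ![0, 17, 0]])
      (by decide))
    h.prim h.pos zero_ne_one (by decide) (by decide)

lemma infLeft_brj_cube (h : IsRankTwo q i j ω 18 1 16 12) : InfLeft q i j 0 3 :=
  not_finiteRootSystem_of_one (Reach.refl _) (h.hasDiag _ _) h.prim h.pos zero_ne_one
    (by decide) (by decide)

lemma infRight_brj (h : IsRankTwo q i j ω 18 1 16 12) : InfRight q i j 2 2 :=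
  not_finiteRootSystem_of_one ((Reach.refl _).reflect 1)
    ((h.hasDiag _ _).reflect h.prim h.pos (c := ![2, 0]) (by decide)
      (D' := ![0, 12]) (E' := fun _ _ => 16) (by decide))
    h.prim h.pos zero_ne_one (by decide) (by decide)

lemma infLeft_brj_serre (h : IsRankTwo q i j ω 18 1 16 12) : InfLeft q i j 3 1 :=
  not_finiteRootSystem_of_one ((Reach.refl _).reflect 0)
    ((h.hasDiag _ _).reflect h.prim h.pos (c := ![0, 5]) (by decide)
      (D' := ![15, 0]) (E' := fun _ _ => 8) (by decide))
    h.prim h.pos one_ne_zero (by decide) (by decide)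

lemma infLeft_gTwo_serre (h : IsRankTwo q i j ω 6 1 3 3) : InfLeft q i j 1 2 := by
  have hd := (h.hasDiag ![1, 1] ![2, 0]).congr h.prim h.pos (D' := ![1, 1])
    (E' := fun _ _ => 2) (by decide) (by decide)
  refine not_finiteRootSystem_rank_two
    (fun _ c => {p | c = 4 ∧ HasDiag ω p ![1, 1] (fun _ _ => 2)}) ⟨4, by decide, rfl, hd⟩ ?_ ?_
  · rintro c p ⟨rfl, hp⟩
    have hc : IsCartanRow (6 : ℕ) ![1, 1] (fun _ _ => 2) 0 ![0, 4] := by decide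
    exact ⟨hp.cij_eq h.prim h.pos hc (by decide), 4, by decide, rfl,
      hp.reflect h.prim h.pos hc (by decide)⟩
  · rintro c p ⟨rfl, hp⟩
    have hc : IsCartanRow (6 : ℕ) ![1, 1] (fun _ _ => 2) 1 ![4, 0] := by decide
    exact ⟨hp.cij_eq h.prim h.pos hc (by decide), 4, by decide, rfl,
      hp.reflect h.prim h.pos hc (by decide)⟩

lemma sRefl_three (p : Fin 3 → Fin 3 → ℂˣ) (k : Fin 3) (β : Fin 3 → ℤ) :
    sRefl p k β = Function.update β k
      (β k - (cij p k 0 * β 0 + cij p k 1 * β 1 + cij p k 2 * β 2)) := by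
  funext l
  by_cases hl : l = k
  · subst hl; simp [sRefl, Fin.sum_univ_three]
  · simp [sRefl, hl]

lemma not_finiteRootSystem_rank_three {p : Fin 3 → Fin 3 → ℂˣ} (hω : IsPrimitiveRoot ω 6)
    (h : HasDiag ω p ![1, 1, 3] ![![0, 5, 0], ![5, 0, 3], ![0, 3, 0]]) :
    ¬ FiniteRootSystem p := by
  set E : Fin 3 → Fin 3 → ℤ := ![![0, 5, 0], ![5, 0, 3], ![0, 3, 0]] with hE
  set D : Fin 3 → ℤ := ![1, 1, 3] with hD
  have c0 : IsCartanRow (6 : ℕ) D E 0 ![0, 1, 0] := by decide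
  have c1 : IsCartanRow (6 : ℕ) D E 1 ![1, 0, 3] := by decide
  have c2 : IsCartanRow (6 : ℕ) D E 2 ![0, 1, 0] := by decide
  have r0 : IsReflection (6 : ℕ) D E 0 ![0, 1, 0] D E := by decide
  have r1 : IsReflection (6 : ℕ) D E 1 ![1, 0, 3] D E := by decide
  have r2 : IsReflection (6 : ℕ) D E 2 ![0, 1, 0] D E := by decide
  have h6 : 6 ≠ 0 := by decide
  have cself : ∀ (p' : Fin 3 → Fin 3 → ℂˣ) k, cij p' k k = 2 := fun p' k => by simp [cij]
  have s0 : ∀ x y z : ℤ, (∃ p', HasDiag ω p' D E ∧ ReachRoot p p' ![x, y, z]) →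
      ∃ p', HasDiag ω p' D E ∧ ReachRoot p p' ![-x + y, y, z] := by
    rintro x y z ⟨p', h1, h2⟩
    refine ⟨_, h1.reflect hω h6 c0 r0, ?_⟩
    convert h2.reflect 0 using 1
    rw [sRefl_three, cself, h1.cij_eq hω h6 c0 (b := 1) (by decide),
      h1.cij_eq hω h6 c0 (b := 2) (by decide)]
    funext k; fin_cases k <;> simp; ring
  have s1 : ∀ x y z : ℤ, (∃ p', HasDiag ω p' D E ∧ ReachRoot p p' ![x, y, z]) →
      ∃ p', HasDiag ω p' D E ∧ ReachRoot p p' ![x, -y + x + 3 * z, z] := by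
    rintro x y z ⟨p', h1, h2⟩
    refine ⟨_, h1.reflect hω h6 c1 r1, ?_⟩
    convert h2.reflect 1 using 1
    rw [sRefl_three, cself, h1.cij_eq hω h6 c1 (b := 0) (by decide),
      h1.cij_eq hω h6 c1 (b := 2) (by decide)]
    funext k; fin_cases k <;> simp; ring
  have s2 : ∀ x y z : ℤ, (∃ p', HasDiag ω p' D E ∧ ReachRoot p p' ![x, y, z]) →
      ∃ p', HasDiag ω p' D E ∧ ReachRoot p p' ![x, y, -z + y] := by
    rintro x y z ⟨p', h1, h2⟩
    refine ⟨_, h1.reflect hω h6 c2 r2, ?_⟩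
    convert h2.reflect 2 using 1
    rw [sRefl_three, cself, h1.cij_eq hω h6 c2 (b := 0) (by decide),
      h1.cij_eq hω h6 c2 (b := 1) (by decide)]
    funext k; fin_cases k <;> simp; ring
  have key : ∀ n : ℕ, ∃ p', HasDiag ω p' D E ∧ ReachRoot p p' ![1 - 2 * n, -4 * n, -2 * n] := by
    intro n
    induction n with
    | zero =>
      refine ⟨p, h, ?_⟩
      convert ReachRoot.simple (0 : Fin 3) using 1
      funext k; fin_cases k <;> simp
    | succ n ih =>
      convert s1 _ _ _ (s2 _ _ _ (s1 _ _ _ (s2 _ _ _ (s1 _ _ _ (s0 _ _ _ ih))))) using 5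
      · push_cast; ring
      · congr 1
        · push_cast; ring
        · congr 1; push_cast; ring
  intro hF
  refine not_finite_of_unbounded (fun β => -β 2) (fun n => ?_) hF.2
  obtain ⟨p', -, h2⟩ := key n
  exact ⟨_, ⟨p', h2⟩, by simp; omega⟩

lemma infBoth_gTwo_serre (h : IsRankTwo q i j ω 6 1 3 3) : InfBoth q i j 4 1 :=
  not_finiteRootSystem_rank_three h.prim
    ((h.hasDiag _ _).congr h.prim h.pos (by decide) (by decide))

lemma infBoth_gTwo (h : IsRankTwo q i j ω 6 1 3 3) : InfBoth q i j 4 3 :=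
  not_finiteRootSystem_rank_three h.prim
    ((h.hasDiag _ _).congr h.prim h.pos (by decide) (by decide))

end

/-! ### Calculus in the braided tensor square -/

lemma mul_mul_of_mul_eq {E : Type*} [Semigroup E] {x y z : E} (h : x * y = z) (w : E) :
    x * (y * w) = z * w := by rw [← mul_assoc, h]

/-- `X` and `Y m` satisfy the relations of `x_i` and `(ad_c x_i)^m x_j`. -/
structure IsAdSeq {E : Type*} [Ring E] [Algebra ℂ E] (Q a : ℂ) (X : E) (Y : ℕ → E) : Prop where
  mul (m : ℕ) : X * Y m = (Q ^ m * a) • (Y m * X) + Y (m + 1)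

/-- `X`, `Y m` and `X'`, `Y' m` satisfy the relations of the two copies of `x_i` and
`(ad_c x_i)^m x_j` in the braided tensor square, with `Q = q_{ii}`, `a = q_{ij}`, `b = q_{ji}`
and `s = q_{jj}`. -/
structure IsBraidedPair {E : Type*} [Ring E] [Algebra ℂ E] (Q a b s : ℂ) (X : E) (Y : ℕ → E)
    (X' : E) (Y' : ℕ → E) : Prop where
  fst : IsAdSeq Q a X Y
  snd : IsAdSeq Q a X' Y'
  XX : X' * X = Q • (X * X')
  XY (m : ℕ) : X' * Y m = (Q ^ m * a) • (Y m * X')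
  YX (k : ℕ) : Y' k * X = (Q ^ k * b) • (X * Y' k)
  YY (k m : ℕ) : Y' k * Y m = (Q ^ (k * m) * a ^ k * b ^ m * s) • (Y m * Y' k)

/-- The elements `D 0` and `D (m + 1) = ad (X + X') (D m)` are the coproducts of
`(ad_c x_i)^m x_j`. -/
structure IsCoproductSeq {E : Type*} [Ring E] [Algebra ℂ E] (Q a : ℂ) (X : E) (Y : ℕ → E)
    (X' : E) (Y' : ℕ → E) (D : ℕ → E) : Prop where
  zero : D 0 = Y 0 + Y' 0
  succ (m : ℕ) : D (m + 1) = (X + X') * D m - (Q ^ m * a) • (D m * (X + X'))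

section

variable {E : Type*} [Ring E] [Algebra ℂ E] {Q a b s : ℂ} {X X' : E} {Y Y' D : ℕ → E}

lemma IsCoproductSeq.one (hD : IsCoproductSeq Q a X Y X' Y' D)
    (h : IsBraidedPair Q a b s X Y X' Y') : D 1 = Y 1 + Y' 1 + (1 - a * b) • (X * Y' 0) := by
  rw [hD.succ 0, hD.zero]
  simp only [mul_add, add_mul, h.fst.mul, h.snd.mul, h.XY, h.YX]
  match_scalars <;> ring

lemma IsCoproductSeq.two (hD : IsCoproductSeq Q a X Y X' Y' D)
    (h : IsBraidedPair Q a b s X Y X' Y') :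
    D 2 = Y 2 + Y' 2 + ((1 + Q) * (1 - Q * (a * b))) • (X * Y' 1) +
      ((1 - a * b) * (1 - Q * (a * b))) • (X * (X * Y' 0)) := by
  rw [hD.succ 1, hD.one h]
  simp only [mul_add, add_mul, h.fst.mul, h.snd.mul, h.XY, h.YX, mul_assoc, smul_mul_assoc,
    mul_smul_comm, mul_mul_of_mul_eq h.XX, Nat.reduceAdd]
  match_scalars <;> ring

lemma IsCoproductSeq.three (hD : IsCoproductSeq Q a X Y X' Y' D)
    (h : IsBraidedPair Q a b s X Y X' Y') :
    D 3 = Y 3 + Y' 3 + ((1 + Q + Q ^ 2) * (1 - Q ^ 2 * (a * b))) • (X * Y' 2) +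
      ((1 + Q + Q ^ 2) * (1 - Q * (a * b)) * (1 - Q ^ 2 * (a * b))) • (X * (X * Y' 1)) +
      ((1 - a * b) * (1 - Q * (a * b)) * (1 - Q ^ 2 * (a * b))) • (X * (X * (X * Y' 0))) := by
  rw [hD.succ 2, hD.two h]
  simp only [mul_add, add_mul, h.fst.mul, h.snd.mul, h.XY, h.YX, mul_assoc, smul_mul_assoc,
    mul_smul_comm, mul_mul_of_mul_eq h.XX, Nat.reduceAdd]
  match_scalars <;> ring

lemma IsCoproductSeq.four (hD : IsCoproductSeq Q a X Y X' Y' D)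
    (h : IsBraidedPair Q a b s X Y X' Y') (ht : Q ^ 3 * (a * b) = 1) : D 4 = Y 4 + Y' 4 := by
  rw [hD.succ 3, hD.three h]
  simp only [mul_add, add_mul, h.fst.mul, h.snd.mul, h.XY, h.YX, mul_assoc, smul_mul_assoc,
    mul_smul_comm, mul_mul_of_mul_eq h.XX, Nat.reduceAdd]
  match_scalars
  all_goals grind

/-- The element `[x_{iij}, x_{ij}]_c`. -/
def zElem (Q a b s : ℂ) (Y : ℕ → E) : E := Y 2 * Y 1 - (Q ^ 2 * a ^ 2 * b * s) • (Y 1 * Y 2)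

/-- The element `[[x_{iij}, x_{ij}]_c, x_{ij}]_c`. -/
def uElem (Q a b s : ℂ) (Y : ℕ → E) : E :=
  zElem Q a b s Y * Y 1 - (Q ^ 3 * a ^ 3 * b ^ 2 * s ^ 2) • (Y 1 * zElem Q a b s Y)

lemma IsCoproductSeq.serre (hD : IsCoproductSeq Q a X Y X' Y' D)
    (h : IsBraidedPair Q a b s X Y X' Y') (hs : a * b * s = 1) :
    D 1 * D 0 - (a * s) • (D 0 * D 1) =
      Y 1 * Y 0 - (a * s) • (Y 0 * Y 1) + (Y' 1 * Y' 0 - (a * s) • (Y' 0 * Y' 1)) := by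
  rw [hD.one h, hD.zero]
  simp only [mul_add, add_mul, h.YY, mul_assoc, smul_mul_assoc, mul_smul_comm,
    mul_mul_of_mul_eq (h.fst.mul _), mul_mul_of_mul_eq (h.YX _), Nat.reduceAdd]
  match_scalars
  all_goals grind

/-- The element `x_{iij} x_j + c q_{ij} x_{ij}^2 + d q_{ij}^2 x_j x_{iij}`. -/
def rElem (a c d : ℂ) (Y : ℕ → E) : E :=
  Y 2 * Y 0 + (c * a) • (Y 1 * Y 1) + (d * a ^ 2) • (Y 0 * Y 2)

lemma IsCoproductSeq.rElem_ufoEleven (hD : IsCoproductSeq Q a X Y X' Y' D)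
    (h : IsBraidedPair Q a b s X Y X' Y') {ω : ℂ}
    (hω : ω ^ 8 = -ω ^ 7 + ω ^ 5 + ω ^ 4 + ω ^ 3 - ω - 1) (hQ : Q = ω) (hab : a * b = -ω ^ 12)
    (hs : s = -ω ^ 5) :
    rElem a (1 - ω ^ 2 - ω ^ 3 - ω ^ 4 + ω ^ 6) (ω ^ 5) D =
      rElem a (1 - ω ^ 2 - ω ^ 3 - ω ^ 4 + ω ^ 6) (ω ^ 5) Y +
        rElem a (1 - ω ^ 2 - ω ^ 3 - ω ^ 4 + ω ^ 6) (ω ^ 5) Y' := by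
  rw [rElem, rElem, rElem, hD.two h, hD.one h, hD.zero]
  simp only [mul_add, add_mul, h.YY, mul_assoc, smul_mul_assoc, mul_smul_comm,
    mul_mul_of_mul_eq (h.fst.mul _), mul_mul_of_mul_eq (h.YX _), Nat.reduceAdd]
  match_scalars
  all_goals grind

lemma IsCoproductSeq.rElem_brj (hD : IsCoproductSeq Q a X Y X' Y' D)
    (h : IsBraidedPair Q a b s X Y X' Y') {ω : ℂ}
    (hω : ω ^ 6 = ω ^ 3 - 1)
    (hQ : Q = ω) (hab : a * b = -ω ^ 7) (hs : s = -ω ^ 3) :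
    rElem a (-ω ^ 2) (ω ^ 3) D =
      rElem a (-ω ^ 2) (ω ^ 3) Y + rElem a (-ω ^ 2) (ω ^ 3) Y' := by
  rw [rElem, rElem, rElem, hD.two h, hD.one h, hD.zero]
  simp only [mul_add, add_mul, h.YY, mul_assoc, smul_mul_assoc, mul_smul_comm,
    mul_mul_of_mul_eq (h.fst.mul _), mul_mul_of_mul_eq (h.YX _), Nat.reduceAdd]
  match_scalars
  all_goals grind

lemma add_sq_of_mul_eq {A B : E} {r : ℂ} (h : B * A = r • (A * B)) (hr : 1 + r = 0) :
    (A + B) * (A + B) = A * A + B * B := by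
  simp only [mul_add, add_mul, h]
  match_scalars
  all_goals grind

lemma add_cube_of_mul_eq {A B : E} {r : ℂ} (h : B * A = r • (A * B)) (hr : 1 + r + r ^ 2 = 0) :
    (A + B) * ((A + B) * (A + B)) = A * (A * A) + B * (B * B) := by
  simp only [mul_add, add_mul, h, mul_assoc, smul_mul_assoc, mul_smul_comm, mul_mul_of_mul_eq h]
  match_scalars
  all_goals grind

lemma add_fourth_of_mul_eq {A B : E} {r : ℂ} (h : B * A = r • (A * B)) (hr : 1 + r ^ 2 = 0) :
    (A + B) * ((A + B) * ((A + B) * (A + B))) = A * (A * (A * A)) + B * (B * (B * B)) := by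
  simp only [mul_add, add_mul, h, mul_assoc, smul_mul_assoc, mul_smul_comm, mul_mul_of_mul_eq h]
  match_scalars
  all_goals grind

end

section

variable {E : Type*} [Ring E] [Algebra ℂ E] {Q a b s : ℂ} {X : E} {Y : ℕ → E}

lemma IsAdSeq.three_eq_zero (h : IsAdSeq Q a X Y) (hQ : 1 + Q + Q ^ 2 = 0)
    (hX : X * (X * X) = 0) : Y 3 = 0 := by
  have e : Y 3 = X * (X * X) * Y 0 - a ^ 3 • (Y 0 * (X * (X * X))) := by
    simp only [mul_add, add_mul, h.mul, mul_assoc, smul_mul_assoc, mul_smul_comm,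
      mul_mul_of_mul_eq (h.mul _), Nat.reduceAdd]
    match_scalars
    all_goals grind
  rw [e, hX, zero_mul, mul_zero, smul_zero, sub_zero]

lemma IsAdSeq.four_eq_zero (h : IsAdSeq Q a X Y) (hQ : 1 + Q ^ 2 = 0)
    (hX : X * (X * (X * X)) = 0) : Y 4 = 0 := by
  have e : Y 4 = X * (X * (X * X)) * Y 0 - a ^ 4 • (Y 0 * (X * (X * (X * X)))) := by
    simp only [mul_add, add_mul, h.mul, mul_assoc, smul_mul_assoc, mul_smul_comm,
      mul_mul_of_mul_eq (h.mul _), Nat.reduceAdd]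
    match_scalars
    all_goals grind
  rw [e, hX, zero_mul, mul_zero, smul_zero, sub_zero]

/-- The element `(ad_c x_i) r` for `r` of degree `m α_i + n α_j`. -/
def adElem (Q a : ℂ) (X : E) (m n : ℕ) (r : E) : E := X * r - (Q ^ m * a ^ n) • (r * X)

lemma adElem_zero (m n : ℕ) : adElem Q a X m n 0 = 0 := by simp [adElem]

/-- The relation `x_{ij} x_j = q_{ij} q_{jj} x_j x_{ij}` and its consequences under `ad_c x_i`. -/
lemma IsAdSeq.serre_one (h : IsAdSeq Q a X Y) (hr : Y 1 * Y 0 - (a * s) • (Y 0 * Y 1) = 0) :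
    Y 2 * Y 0 + ((Q - s) * a) • (Y 1 * Y 1) - (a ^ 2 * s) • (Y 0 * Y 2) = 0 := by
  rw [← adElem_zero (Q := Q) (a := a) (X := X) 1 2, ← hr]
  simp only [adElem, mul_sub, sub_mul, mul_add, add_mul, h.mul, mul_assoc, smul_mul_assoc,
    mul_smul_comm, mul_mul_of_mul_eq (h.mul _), Nat.reduceAdd]
  match_scalars <;> ring

lemma IsAdSeq.serre_two (h : IsAdSeq Q a X Y) (hr : Y 1 * Y 0 - (a * s) • (Y 0 * Y 1) = 0) :
    Y 3 * Y 0 + ((Q ^ 2 + Q - s) * a) • (Y 2 * Y 1) +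
      ((Q ^ 2 - Q * s - s) * a ^ 2) • (Y 1 * Y 2) - (s * a ^ 3) • (Y 0 * Y 3) = 0 := by
  rw [← adElem_zero (Q := Q) (a := a) (X := X) 2 2, ← h.serre_one hr]
  simp only [adElem, mul_sub, sub_mul, mul_add, add_mul, h.mul, mul_assoc, smul_mul_assoc,
    mul_smul_comm, mul_mul_of_mul_eq (h.mul _), Nat.reduceAdd]
  match_scalars <;> ring

lemma IsAdSeq.serre_three (h : IsAdSeq Q a X Y) (hr : Y 1 * Y 0 - (a * s) • (Y 0 * Y 1) = 0)
    (hY : Y 4 = 0) :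
    ((Q ^ 3 + Q ^ 2 + Q - s) * a) • (Y 3 * Y 1) +
      ((Q ^ 4 + Q ^ 3 + Q ^ 2 - (Q ^ 2 + Q + 1) * s) * a ^ 2) • (Y 2 * Y 2) +
      ((Q ^ 3 - (Q ^ 2 + Q + 1) * s) * a ^ 3) • (Y 1 * Y 3) = 0 := by
  rw [← adElem_zero (Q := Q) (a := a) (X := X) 3 2, ← h.serre_two hr]
  simp only [adElem, mul_sub, sub_mul, mul_add, add_mul, h.mul, mul_assoc, smul_mul_assoc,
    mul_smul_comm, mul_mul_of_mul_eq (h.mul _), Nat.reduceAdd, hY, zero_mul, mul_zero]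
  match_scalars <;> ring

lemma IsAdSeq.uElem_ufoSeven (h : IsAdSeq Q a X Y) (hQ : 1 + Q + Q ^ 2 = 0) (ha : a ≠ 0)
    (hs : a * b * s = 1) (hs' : 1 + s ≠ 0) (hX : X * (X * X) = 0)
    (hr : Y 1 * Y 0 - (a * s) • (Y 0 * Y 1) = 0) : uElem Q a b s Y = 0 := by
  have hY := h.three_eq_zero hQ hX
  have hz : zElem Q a b s Y = 0 := by
    have e := h.serre_two hr
    simp only [hY, zero_mul, mul_zero, smul_zero, zero_add, sub_zero] at e
    refine (smul_eq_zero.1 ?_).resolve_left (mul_ne_zero ha hs')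
    rw [← neg_eq_zero, ← e, zElem]
    match_scalars
    all_goals grind
  rw [uElem, hz, zero_mul, mul_zero, smul_zero, sub_zero]

lemma IsAdSeq.uElem_ufoNine (h : IsAdSeq Q a X Y) (ha : a ≠ 0) {ω : ℂ} (hω : ω ^ 8 = ω ^ 4 - 1)
    (hQ : Q = ω ^ 6) (hs : s = ω ^ 3 - ω ^ 7) (hab : a * b = ω) (hX : X * (X * (X * X)) = 0)
    (hr : Y 1 * Y 0 - (a * s) • (Y 0 * Y 1) = 0) : uElem Q a b s Y = 0 := by
  have e : (2 * a ^ 3) • uElem Q a b s Y =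
      ((-ω - ω ^ 2 + 2 * ω ^ 3 - ω ^ 4 + ω ^ 6 - ω ^ 7) * a) •
        (Y 3 * (Y 1 * Y 0 - (a * s) • (Y 0 * Y 1))) +
      ((-1 + ω - ω ^ 3 + 2 * ω ^ 4 - ω ^ 5 - ω ^ 6) * a ^ 6) •
        ((Y 1 * Y 0 - (a * s) • (Y 0 * Y 1)) * Y 3) +
      ((-ω + ω ^ 2 - ω ^ 4 + 2 * ω ^ 5 - ω ^ 6 - ω ^ 7) * a ^ 2) •
        (Y 2 * (Y 2 * Y 0 + ((Q - s) * a) • (Y 1 * Y 1) - (a ^ 2 * s) • (Y 0 * Y 2))) +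
      ((-1 + ω - ω ^ 3 + 2 * ω ^ 4 - ω ^ 5 - ω ^ 6) * a ^ 4) •
        ((Y 2 * Y 0 + ((Q - s) * a) • (Y 1 * Y 1) - (a ^ 2 * s) • (Y 0 * Y 2)) * Y 2) +
      ((-ω + ω ^ 2 - ω ^ 4 + 2 * ω ^ 5 - ω ^ 6 - ω ^ 7) * a ^ 3) •
        (Y 1 * (Y 3 * Y 0 + ((Q ^ 2 + Q - s) * a) • (Y 2 * Y 1) +
          ((Q ^ 2 - Q * s - s) * a ^ 2) • (Y 1 * Y 2) - (s * a ^ 3) • (Y 0 * Y 3))) +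
      ((-1 - ω + 2 * ω ^ 2 - ω ^ 3 + ω ^ 5 - ω ^ 6) * a ^ 2) •
        ((Y 3 * Y 0 + ((Q ^ 2 + Q - s) * a) • (Y 2 * Y 1) +
          ((Q ^ 2 - Q * s - s) * a ^ 2) • (Y 1 * Y 2) - (s * a ^ 3) • (Y 0 * Y 3)) * Y 1) +
      ((2 - ω - ω ^ 2 + 2 * ω ^ 3 - 3 * ω ^ 4 + 2 * ω ^ 5 - ω ^ 6 + ω ^ 7) * a ^ 4) •
        (Y 0 * (((Q ^ 3 + Q ^ 2 + Q - s) * a) • (Y 3 * Y 1) +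
          ((Q ^ 4 + Q ^ 3 + Q ^ 2 - (Q ^ 2 + Q + 1) * s) * a ^ 2) • (Y 2 * Y 2) +
          ((Q ^ 3 - (Q ^ 2 + Q + 1) * s) * a ^ 3) • (Y 1 * Y 3))) +
      (-1 + ω - 2 * ω ^ 2 + ω ^ 3 + 2 * ω ^ 4 - 3 * ω ^ 5 + 3 * ω ^ 6 - 2 * ω ^ 7) •
        ((((Q ^ 3 + Q ^ 2 + Q - s) * a) • (Y 3 * Y 1) +
          ((Q ^ 4 + Q ^ 3 + Q ^ 2 - (Q ^ 2 + Q + 1) * s) * a ^ 2) • (Y 2 * Y 2) +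
          ((Q ^ 3 - (Q ^ 2 + Q + 1) * s) * a ^ 3) • (Y 1 * Y 3)) * Y 0) := by
    simp only [uElem, zElem, mul_sub, sub_mul, mul_add, add_mul, mul_assoc, smul_mul_assoc,
      mul_smul_comm]
    match_scalars
    all_goals grind
  refine (smul_eq_zero.1 ?_).resolve_left (show 2 * a ^ 3 ≠ 0 by simp [ha])
  rw [e, hr, h.serre_one hr, h.serre_two hr,
    h.serre_three hr (h.four_eq_zero (by rw [hQ]; grind) hX)]
  simp only [mul_zero, zero_mul, smul_zero, add_zero]

lemma IsAdSeq.cube_one (h : IsAdSeq Q a X Y) (hr : Y 0 * (Y 0 * Y 0) = 0) :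
    (Y 1 * (Y 0 * Y 0)) +
      (a) • (Y 0 * (Y 1 * Y 0)) +
      (a ^ 2) • (Y 0 * (Y 0 * Y 1)) = 0 := by
  rw [← adElem_zero (Q := Q) (a := a) (X := X) 0 3, ← hr]
  simp only [adElem, mul_add, add_mul, h.mul, mul_assoc, smul_mul_assoc, mul_smul_comm,
    mul_mul_of_mul_eq (h.mul _), Nat.reduceAdd]
  match_scalars <;> ring

lemma IsAdSeq.cube_two (h : IsAdSeq Q a X Y) (hr : Y 0 * (Y 0 * Y 0) = 0) :
    (Y 2 * (Y 0 * Y 0)) +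
      ((1 + Q) * a) • (Y 1 * (Y 1 * Y 0)) +
      ((1 + Q) * a ^ 2) • (Y 1 * (Y 0 * Y 1)) +
      (a ^ 2) • (Y 0 * (Y 2 * Y 0)) +
      ((1 + Q) * a ^ 3) • (Y 0 * (Y 1 * Y 1)) +
      (a ^ 4) • (Y 0 * (Y 0 * Y 2)) = 0 := by
  rw [← adElem_zero (Q := Q) (a := a) (X := X) 1 3, ← h.cube_one hr]
  simp only [adElem, mul_add, add_mul, h.mul, mul_assoc, smul_mul_assoc, mul_smul_comm,
    mul_mul_of_mul_eq (h.mul _), Nat.reduceAdd]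
  match_scalars <;> ring

lemma IsAdSeq.cube_three (h : IsAdSeq Q a X Y) (hr : Y 0 * (Y 0 * Y 0) = 0) :
    (Y 3 * (Y 0 * Y 0)) +
      ((1 + Q + Q ^ 2) * a) • (Y 2 * (Y 1 * Y 0)) +
      ((1 + Q + Q ^ 2) * a ^ 2) • (Y 2 * (Y 0 * Y 1)) +
      ((1 + Q + Q ^ 2) * a ^ 2) • (Y 1 * (Y 2 * Y 0)) +
      ((1 + 2 * Q + 2 * Q ^ 2 + Q ^ 3) * a ^ 3) • (Y 1 * (Y 1 * Y 1)) +
      ((1 + Q + Q ^ 2) * a ^ 4) • (Y 1 * (Y 0 * Y 2)) +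
      (a ^ 3) • (Y 0 * (Y 3 * Y 0)) +
      ((1 + Q + Q ^ 2) * a ^ 4) • (Y 0 * (Y 2 * Y 1)) +
      ((1 + Q + Q ^ 2) * a ^ 5) • (Y 0 * (Y 1 * Y 2)) +
      (a ^ 6) • (Y 0 * (Y 0 * Y 3)) = 0 := by
  rw [← adElem_zero (Q := Q) (a := a) (X := X) 2 3, ← h.cube_two hr]
  simp only [adElem, mul_add, add_mul, h.mul, mul_assoc, smul_mul_assoc, mul_smul_comm,
    mul_mul_of_mul_eq (h.mul _), Nat.reduceAdd]
  match_scalars <;> ring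

lemma IsAdSeq.cube_four (h : IsAdSeq Q a X Y) (hr : Y 0 * (Y 0 * Y 0) = 0) :
    (Y 4 * (Y 0 * Y 0)) +
      ((1 + Q + Q ^ 2 + Q ^ 3) * a) • (Y 3 * (Y 1 * Y 0)) +
      ((1 + Q + Q ^ 2 + Q ^ 3) * a ^ 2) • (Y 3 * (Y 0 * Y 1)) +
      ((1 + Q + 2 * Q ^ 2 + Q ^ 3 + Q ^ 4) * a ^ 2) • (Y 2 * (Y 2 * Y 0)) +
      ((1 + 2 * Q + 3 * Q ^ 2 + 3 * Q ^ 3 + 2 * Q ^ 4 + Q ^ 5) * a ^ 3) • (Y 2 * (Y 1 * Y 1)) +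
      ((1 + Q + 2 * Q ^ 2 + Q ^ 3 + Q ^ 4) * a ^ 4) • (Y 2 * (Y 0 * Y 2)) +
      ((1 + Q + Q ^ 2 + Q ^ 3) * a ^ 3) • (Y 1 * (Y 3 * Y 0)) +
      ((1 + 2 * Q + 3 * Q ^ 2 + 3 * Q ^ 3 + 2 * Q ^ 4 + Q ^ 5) * a ^ 4) • (Y 1 * (Y 2 * Y 1)) +
      ((1 + 2 * Q + 3 * Q ^ 2 + 3 * Q ^ 3 + 2 * Q ^ 4 + Q ^ 5) * a ^ 5) • (Y 1 * (Y 1 * Y 2)) +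
      ((1 + Q + Q ^ 2 + Q ^ 3) * a ^ 6) • (Y 1 * (Y 0 * Y 3)) +
      (a ^ 4) • (Y 0 * (Y 4 * Y 0)) +
      ((1 + Q + Q ^ 2 + Q ^ 3) * a ^ 5) • (Y 0 * (Y 3 * Y 1)) +
      ((1 + Q + 2 * Q ^ 2 + Q ^ 3 + Q ^ 4) * a ^ 6) • (Y 0 * (Y 2 * Y 2)) +
      ((1 + Q + Q ^ 2 + Q ^ 3) * a ^ 7) • (Y 0 * (Y 1 * Y 3)) +
      (a ^ 8) • (Y 0 * (Y 0 * Y 4)) = 0 := by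
  rw [← adElem_zero (Q := Q) (a := a) (X := X) 3 3, ← h.cube_three hr]
  simp only [adElem, mul_add, add_mul, h.mul, mul_assoc, smul_mul_assoc, mul_smul_comm,
    mul_mul_of_mul_eq (h.mul _), Nat.reduceAdd]
  match_scalars <;> ring

lemma IsAdSeq.rElem_one (h : IsAdSeq Q a X Y) {c d : ℂ} (hr : rElem a c d Y = 0) :
    Y 3 * Y 0 + ((Q ^ 2 + c) * a) • (Y 2 * Y 1) + ((Q * c + d) * a ^ 2) • (Y 1 * Y 2) +
      (d * a ^ 3) • (Y 0 * Y 3) = 0 := by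
  rw [← adElem_zero (Q := Q) (a := a) (X := X) 2 2, ← hr]
  simp only [adElem, rElem, mul_add, add_mul, h.mul, mul_assoc, smul_mul_assoc, mul_smul_comm,
    mul_mul_of_mul_eq (h.mul _), Nat.reduceAdd]
  match_scalars <;> ring

lemma IsAdSeq.rElem_two (h : IsAdSeq Q a X Y) {c d : ℂ} (hr : rElem a c d Y = 0)
    (hY : Y 4 = 0) :
    ((Q ^ 3 + Q ^ 2 + c) * a) • (Y 3 * Y 1) +
      ((Q ^ 4 + Q ^ 2 * c + Q * c + d) * a ^ 2) • (Y 2 * Y 2) +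
      ((Q ^ 2 * c + Q * d + d) * a ^ 3) • (Y 1 * Y 3) = 0 := by
  rw [← adElem_zero (Q := Q) (a := a) (X := X) 3 2, ← h.rElem_one hr]
  simp only [adElem, mul_add, add_mul, h.mul, mul_assoc, smul_mul_assoc, mul_smul_comm,
    mul_mul_of_mul_eq (h.mul _), Nat.reduceAdd, hY, zero_mul, mul_zero]
  match_scalars <;> ring

lemma IsAdSeq.uElem_ufoEleven (h : IsAdSeq Q a X Y) (ha : a ≠ 0) {ω c d : ℂ}
    (hω : ω ^ 8 = -ω ^ 7 + ω ^ 5 + ω ^ 4 + ω ^ 3 - ω - 1) (hQ : Q = ω) (hab : a * b = -ω ^ 12)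
    (hs : s = -ω ^ 5) (hc : c = 1 - ω ^ 2 - ω ^ 3 - ω ^ 4 + ω ^ 6) (hd : d = ω ^ 5) (hY : Y 4 = 0)
    (hr : rElem a c d Y = 0) (hr' : Y 0 * (Y 0 * Y 0) = 0) : uElem Q a b s Y = 0 := by
  have h15 : ω ^ 15 = -1 := by
    linear_combination (ω ^ 3 + 1) * (ω ^ 4 - ω ^ 3 + ω ^ 2 - ω + 1) * hω
  have hz : Q ^ 2 * a ^ 2 * b * s = -ω ^ 4 * a := by
    rw [hQ, hs]
    linear_combination -ω ^ 7 * a * hab + ω ^ 4 * a * h15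
  have hu : Q ^ 3 * a ^ 3 * b ^ 2 * s ^ 2 = ω ^ 7 * a := by
    rw [hQ, hs]
    linear_combination ω ^ 13 * a * (a * b - ω ^ 12) * hab + ω ^ 7 * a * (ω ^ 15 - 1) * h15
  have e : (5 * a ^ 3) • uElem Q a b s Y =
      ((8 - 5 * ω + ω ^ 2 - 7 * ω ^ 3 - 5 * ω ^ 5 + 6 * ω ^ 6 + 4 * ω ^ 7) * a ^ 2) •
        (Y 2 * rElem a c d Y) +
      ((7 - 4 * ω + ω ^ 2 - 7 * ω ^ 3 + 3 * ω ^ 4 - 4 * ω ^ 5 + 6 * ω ^ 6 + 2 * ω ^ 7) * a ^ 4) •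
        (rElem a c d Y * Y 2) +
      ((10 + ω - 3 * ω ^ 2 - 4 * ω ^ 3 - 7 * ω ^ 4 - 4 * ω ^ 5 + 2 * ω ^ 6 + 11 * ω ^ 7) * a ^ 3) •
        (Y 1 * (Y 3 * Y 0 + ((Q ^ 2 + c) * a) • (Y 2 * Y 1) + ((Q * c + d) * a ^ 2) • (Y 1 * Y 2) +
          (d * a ^ 3) • (Y 0 * Y 3))) +
      ((1 + 2 * ω - 4 * ω ^ 2 + 3 * ω ^ 3 - 4 * ω ^ 4 + 2 * ω ^ 5 - 4 * ω ^ 6 +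
        5 * ω ^ 7) * a ^ 2) •
        ((Y 3 * Y 0 + ((Q ^ 2 + c) * a) • (Y 2 * Y 1) + ((Q * c + d) * a ^ 2) • (Y 1 * Y 2) +
          (d * a ^ 3) • (Y 0 * Y 3)) * Y 1) +
      ((18 - 3 * ω - 15 * ω ^ 3 - 4 * ω ^ 4 - 8 * ω ^ 5 + 10 * ω ^ 6 + 11 * ω ^ 7) * a ^ 4) •
        (Y 0 * (((Q ^ 3 + Q ^ 2 + c) * a) • (Y 3 * Y 1) +
          ((Q ^ 4 + Q ^ 2 * c + Q * c + d) * a ^ 2) • (Y 2 * Y 2) +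
          ((Q ^ 2 * c + Q * d + d) * a ^ 3) • (Y 1 * Y 3))) +
      (19 + 5 * ω - 7 * ω ^ 2 - 11 * ω ^ 3 - 15 * ω ^ 4 - 5 * ω ^ 5 + 3 * ω ^ 6 + 22 * ω ^ 7) •
        ((((Q ^ 3 + Q ^ 2 + c) * a) • (Y 3 * Y 1) +
          ((Q ^ 4 + Q ^ 2 * c + Q * c + d) * a ^ 2) • (Y 2 * Y 2) +
          ((Q ^ 2 * c + Q * d + d) * a ^ 3) • (Y 1 * Y 3)) * Y 0) +
      (-12 - 5 * ω + ω ^ 2 + 8 * ω ^ 3 + 15 * ω ^ 4 + 5 * ω ^ 5 - 4 * ω ^ 6 - 16 * ω ^ 7) •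
        ((Y 4 * (Y 0 * Y 0)) +
          ((1 + Q + Q ^ 2 + Q ^ 3) * a) • (Y 3 * (Y 1 * Y 0)) +
          ((1 + Q + Q ^ 2 + Q ^ 3) * a ^ 2) • (Y 3 * (Y 0 * Y 1)) +
          ((1 + Q + 2 * Q ^ 2 + Q ^ 3 + Q ^ 4) * a ^ 2) • (Y 2 * (Y 2 * Y 0)) +
          ((1 + 2 * Q + 3 * Q ^ 2 + 3 * Q ^ 3 + 2 * Q ^ 4 + Q ^ 5) * a ^ 3) • (Y 2 * (Y 1 * Y 1)) +
          ((1 + Q + 2 * Q ^ 2 + Q ^ 3 + Q ^ 4) * a ^ 4) • (Y 2 * (Y 0 * Y 2)) +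
          ((1 + Q + Q ^ 2 + Q ^ 3) * a ^ 3) • (Y 1 * (Y 3 * Y 0)) +
          ((1 + 2 * Q + 3 * Q ^ 2 + 3 * Q ^ 3 + 2 * Q ^ 4 + Q ^ 5) * a ^ 4) • (Y 1 * (Y 2 * Y 1)) +
          ((1 + 2 * Q + 3 * Q ^ 2 + 3 * Q ^ 3 + 2 * Q ^ 4 + Q ^ 5) * a ^ 5) • (Y 1 * (Y 1 * Y 2)) +
          ((1 + Q + Q ^ 2 + Q ^ 3) * a ^ 6) • (Y 1 * (Y 0 * Y 3)) +
          (a ^ 4) • (Y 0 * (Y 4 * Y 0)) +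
          ((1 + Q + Q ^ 2 + Q ^ 3) * a ^ 5) • (Y 0 * (Y 3 * Y 1)) +
          ((1 + Q + 2 * Q ^ 2 + Q ^ 3 + Q ^ 4) * a ^ 6) • (Y 0 * (Y 2 * Y 2)) +
          ((1 + Q + Q ^ 2 + Q ^ 3) * a ^ 7) • (Y 0 * (Y 1 * Y 3)) +
          (a ^ 8) • (Y 0 * (Y 0 * Y 4))) := by
    rw [uElem, zElem, hz, hu]
    simp only [rElem, mul_sub, sub_mul, mul_add, add_mul, mul_assoc, smul_mul_assoc,
      mul_smul_comm, hY, zero_mul, mul_zero]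
    clear hz hu h15 hab hs h hr hr'
    subst hQ hc hd
    match_scalars
    all_goals grind
  refine (smul_eq_zero.1 ?_).resolve_left (show 5 * a ^ 3 ≠ 0 by simp [ha])
  rw [e, h.cube_four hr', hr, h.rElem_one hr, h.rElem_two hr hY]
  simp only [mul_zero, zero_mul, smul_zero, add_zero]

lemma IsAdSeq.uElem_brj (h : IsAdSeq Q a X Y) (ha : a ≠ 0) {ω c d : ℂ} (hω : ω ^ 6 = ω ^ 3 - 1)
    (hQ : Q = ω) (hab : a * b = -ω ^ 7) (hs : s = -ω ^ 3) (hc : c = -ω ^ 2) (hd : d = ω ^ 3)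
    (hY : Y 3 = 0) (hY' : Y 4 = 0) (hr : rElem a c d Y = 0) (hr' : Y 0 * (Y 0 * Y 0) = 0) :
    uElem Q a b s Y = 0 := by
  have e : (a ^ 3) • uElem Q a b s Y =
      ((-ω ^ 3 + ω ^ 4) * a ^ 2) •
        (Y 2 * rElem a c d Y) +
      ((-1 + ω) * a ^ 4) •
        (rElem a c d Y * Y 2) +
      (-3 + 2 * ω ^ 2 + 3 * ω ^ 3 - 2 * ω ^ 4 - 2 * ω ^ 5) •
        ((Y 4 * (Y 0 * Y 0)) +
          ((1 + Q + Q ^ 2 + Q ^ 3) * a) • (Y 3 * (Y 1 * Y 0)) +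
          ((1 + Q + Q ^ 2 + Q ^ 3) * a ^ 2) • (Y 3 * (Y 0 * Y 1)) +
          ((1 + Q + 2 * Q ^ 2 + Q ^ 3 + Q ^ 4) * a ^ 2) • (Y 2 * (Y 2 * Y 0)) +
          ((1 + 2 * Q + 3 * Q ^ 2 + 3 * Q ^ 3 + 2 * Q ^ 4 + Q ^ 5) * a ^ 3) • (Y 2 * (Y 1 * Y 1)) +
          ((1 + Q + 2 * Q ^ 2 + Q ^ 3 + Q ^ 4) * a ^ 4) • (Y 2 * (Y 0 * Y 2)) +
          ((1 + Q + Q ^ 2 + Q ^ 3) * a ^ 3) • (Y 1 * (Y 3 * Y 0)) +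
          ((1 + 2 * Q + 3 * Q ^ 2 + 3 * Q ^ 3 + 2 * Q ^ 4 + Q ^ 5) * a ^ 4) • (Y 1 * (Y 2 * Y 1)) +
          ((1 + 2 * Q + 3 * Q ^ 2 + 3 * Q ^ 3 + 2 * Q ^ 4 + Q ^ 5) * a ^ 5) • (Y 1 * (Y 1 * Y 2)) +
          ((1 + Q + Q ^ 2 + Q ^ 3) * a ^ 6) • (Y 1 * (Y 0 * Y 3)) +
          (a ^ 4) • (Y 0 * (Y 4 * Y 0)) +
          ((1 + Q + Q ^ 2 + Q ^ 3) * a ^ 5) • (Y 0 * (Y 3 * Y 1)) +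
          ((1 + Q + 2 * Q ^ 2 + Q ^ 3 + Q ^ 4) * a ^ 6) • (Y 0 * (Y 2 * Y 2)) +
          ((1 + Q + Q ^ 2 + Q ^ 3) * a ^ 7) • (Y 0 * (Y 1 * Y 3)) +
          (a ^ 8) • (Y 0 * (Y 0 * Y 4))) := by
    simp only [uElem, zElem, rElem, mul_sub, sub_mul, mul_add, add_mul, mul_assoc, smul_mul_assoc,
      mul_smul_comm, hY, hY', zero_mul, mul_zero]
    match_scalars
    all_goals grind
  refine (smul_eq_zero.1 ?_).resolve_left (show a ^ 3 ≠ 0 by simp [ha])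
  rw [e, h.cube_four hr', hr]
  simp only [mul_zero, zero_mul, smul_zero, add_zero]

end

section

variable {E : Type*} [Ring E] [Algebra ℂ E] {Q a b s : ℂ} {X X' : E} {Y Y' D : ℕ → E}

lemma IsCoproductSeq.uElem_ufoEight (hD : IsCoproductSeq Q a X Y X' Y' D)
    (h : IsBraidedPair Q a b s X Y X' Y') {ω : ℂ} (hω : ω ^ 4 = ω ^ 2 - 1) (hQ : Q = -ω ^ 2)
    (hab : a * b = ω ^ 3) (hs : s = -1) (hX : X * (X * X) = 0) (hY' : Y' 0 * Y' 0 = 0) :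
    uElem Q a b s D = uElem Q a b s Y + uElem Q a b s Y' := by
  have hY : Y 3 = 0 := h.fst.three_eq_zero (by grind) hX
  have h1 : Y' 1 * Y' 0 = (-a) • (Y' 0 * Y' 1) := by
    rw [← sub_eq_zero, ← adElem_zero (Q := Q) (a := a) (X := X') 0 2, ← hY']
    simp only [adElem, h.snd.mul, add_mul, mul_add, mul_assoc, smul_mul_assoc, mul_smul_comm,
      mul_mul_of_mul_eq (h.snd.mul _)]
    match_scalars <;> ring
  have h2 : Y' 2 * Y' 0 = (-(1 + Q) * a) • (Y' 1 * Y' 1) - a ^ 2 • (Y' 0 * Y' 2) := by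
    have e := h.snd.serre_one (s := -1) (by rw [h1]; match_scalars; ring)
    rw [← sub_eq_zero, ← e]
    match_scalars <;> ring
  rw [uElem, uElem, uElem, zElem, zElem, zElem, hD.one h, hD.two h]
  simp only [mul_sub, sub_mul, mul_add, add_mul, h.YY, mul_assoc, smul_mul_assoc, mul_smul_comm,
    mul_mul_of_mul_eq (h.YX _), mul_mul_of_mul_eq (h.YY _ _), mul_mul_of_mul_eq (h.fst.mul _),
    h1, h2, mul_mul_of_mul_eq h1, mul_mul_of_mul_eq h2, mul_mul_of_mul_eq hY', hY', hY,
    Nat.reduceAdd, zero_mul, mul_zero]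
  match_scalars
  all_goals grind

lemma IsCoproductSeq.uElem_gTwo (hD : IsCoproductSeq Q a X Y X' Y' D)
    (h : IsBraidedPair Q a b s X Y X' Y') (hQ : Q ^ 2 = Q - 1) (hab : a * b = -1) (hs : s = -1)
    (ha : a ≠ 0) (hY : Y 4 = 0) (hr : Y 1 * Y 0 - (a * s) • (Y 0 * Y 1) = 0)
    (hr' : Y' 1 * Y' 0 - (a * s) • (Y' 0 * Y' 1) = 0) :
    uElem Q a b s D = uElem Q a b s Y + uElem Q a b s Y' := by
  have h1 : Y' 1 * Y' 0 = (-a) • (Y' 0 * Y' 1) := by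
    rw [sub_eq_zero.1 hr', hs, mul_neg_one]
  have h2 : Y' 2 * Y' 0 = (-(1 + Q) * a) • (Y' 1 * Y' 1) - a ^ 2 • (Y' 0 * Y' 2) := by
    rw [← sub_eq_zero, ← h.snd.serre_one hr', hs]
    match_scalars <;> ring
  have h3 : Y 3 * Y 1 = (-a ^ 2) • (Y 1 * Y 3) - ((2 + 2 * Q) / 3 * a) • (Y 2 * Y 2) := by
    have hq : 2 * Q - 1 ≠ 0 := by
      intro hq
      have : (3 : ℂ) = 0 := by linear_combination -(2 * Q - 1) * hq + 4 * hQ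
      norm_num at this
    rw [← sub_eq_zero]
    refine (smul_eq_zero.1 ?_).resolve_left (mul_ne_zero ha hq)
    rw [← h.fst.serre_three hr hY, hs]
    match_scalars
    all_goals grind
  rw [uElem, uElem, uElem, zElem, zElem, zElem, hD.one h, hD.two h]
  simp only [mul_sub, sub_mul, mul_add, add_mul, h.YY, mul_assoc, smul_mul_assoc, mul_smul_comm,
    mul_mul_of_mul_eq (h.YX _), mul_mul_of_mul_eq (h.YY _ _), mul_mul_of_mul_eq (h.fst.mul _),
    h1, h2, mul_mul_of_mul_eq h1, mul_mul_of_mul_eq h2, mul_mul_of_mul_eq h3, hY,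
    Nat.reduceAdd, zero_mul]
  match_scalars
  all_goals grind

end

/-! ### The relation in the pre-Nichols algebra -/

section

variable {θ : ℕ} {q : Fin θ → Fin θ → ℂˣ} {S : BraidedStr θ q} {I : Submodule ℂ (TV θ)}
  {i j : Fin θ} {ω : ℂ}

lemma map_uElem {A B : Type*} [Ring A] [Ring B] [Algebra ℂ A] [Algebra ℂ B]
    (f : A →ₐ[ℂ] B) (Q a b s : ℂ) (Y : ℕ → A) :
    f (uElem Q a b s Y) = uElem Q a b s fun m => f (Y m) := by
  simp [uElem, zElem]

lemma map_rElem {A B : Type*} [Ring A] [Ring B] [Algebra ℂ A] [Algebra ℂ B]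
    (f : A →ₐ[ℂ] B) (a c d : ℂ) (Y : ℕ → A) :
    f (rElem a c d Y) = rElem a c d fun m => f (Y m) := by
  simp [rElem]

lemma bideg_add (a b c d : ℕ) :
    bideg i j a b + bideg i j c d = bideg i j (a + c) (b + d) := by
  simp only [bideg, add_smul]
  abel

lemma mul_mem_bideg {a b c d m n : ℕ} {x y : TV θ} (hx : x ∈ homogD θ (bideg i j a b))
    (hy : y ∈ homogD θ (bideg i j c d)) (hm : a + c = m := by rfl) (hn : b + d = n := by rfl) :
    x * y ∈ homogD θ (bideg i j m n) := by
  subst hm hn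
  rw [← bideg_add]
  exact homogD_mul hx hy

lemma left_mem_bideg (i j : Fin θ) : gen θ i ∈ homogD θ (bideg i j 1 0) := by
  simpa [bideg] using gen_mem_homogD i

lemma adpow_succ (q : Fin θ → Fin θ → ℂˣ) (i j : Fin θ) (m : ℕ) :
    adpow q i j (m + 1) = gen θ i * adpow q i j m -
      ((q i i : ℂ) ^ m * q i j) • (adpow q i j m * gen θ i) := by
  have h : (fun k => m * δ θ i k + δ θ j k) = bideg i j m 1 := by
    funext k
    simp [bideg]
  have h' : δ θ i = bideg i j 1 0 := by simp [bideg]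
  rw [adpow, ad1, brk, h, h', qf_bideg]
  simp

lemma adpow_mem_bideg (q : Fin θ → Fin θ → ℂˣ) (i j : Fin θ) (m : ℕ) :
    adpow q i j m ∈ homogD θ (bideg i j m 1) := by
  induction m with
  | zero => simpa [bideg, adpow] using gen_mem_homogD j
  | succ m ih =>
    rw [adpow_succ]
    exact sub_mem (mul_mem_bideg (left_mem_bideg i j) ih (add_comm _ _))
      (Submodule.smul_mem _ _ (mul_mem_bideg ih (left_mem_bideg i j)))

lemma zElem_adpow_mem (Q a b s : ℂ) :
    zElem Q a b s (adpow q i j) ∈ homogD θ (bideg i j 3 2) :=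
  sub_mem (mul_mem_bideg (adpow_mem_bideg q i j 2) (adpow_mem_bideg q i j 1))
    (Submodule.smul_mem _ _ (mul_mem_bideg (adpow_mem_bideg q i j 1) (adpow_mem_bideg q i j 2)))

lemma uElem_adpow_mem (Q a b s : ℂ) :
    uElem Q a b s (adpow q i j) ∈ homogD θ (bideg i j 4 3) :=
  sub_mem (mul_mem_bideg (zElem_adpow_mem Q a b s) (adpow_mem_bideg q i j 1))
    (Submodule.smul_mem _ _ (mul_mem_bideg (adpow_mem_bideg q i j 1) (zElem_adpow_mem Q a b s)))

lemma rElem_adpow_mem (a c d : ℂ) : rElem a c d (adpow q i j) ∈ homogD θ (bideg i j 2 2) :=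
  add_mem (add_mem (mul_mem_bideg (adpow_mem_bideg q i j 2) (adpow_mem_bideg q i j 0))
    (Submodule.smul_mem _ _ (mul_mem_bideg (adpow_mem_bideg q i j 1) (adpow_mem_bideg q i j 1))))
    (Submodule.smul_mem _ _ (mul_mem_bideg (adpow_mem_bideg q i j 0) (adpow_mem_bideg q i j 2)))

lemma serre_adpow_mem (c : ℂ) : adpow q i j 1 * adpow q i j 0 - c • (adpow q i j 0 * adpow q i j 1)
    ∈ homogD θ (bideg i j 1 2) :=
  sub_mem (mul_mem_bideg (adpow_mem_bideg q i j 1) (adpow_mem_bideg q i j 0))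
    (Submodule.smul_mem _ _ (mul_mem_bideg (adpow_mem_bideg q i j 0) (adpow_mem_bideg q i j 1)))

namespace IsPreNicholsIdeal

/-- The first copy of `T(V)/I` in its braided tensor square. -/
def fst (hI : IsPreNicholsIdeal S I) : TV θ →ₐ[ℂ] hI.QBT := hI.projBT.comp (BT.inl q)

/-- The second copy of `T(V)/I` in its braided tensor square. -/
def snd (hI : IsPreNicholsIdeal S I) : TV θ →ₐ[ℂ] hI.QBT := hI.projBT.comp (BT.inr q)

/-- The coproduct of `T(V)` with values in the braided tensor square of `T(V)/I`. -/
def comul (hI : IsPreNicholsIdeal S I) : TV θ →ₐ[ℂ] hI.QBT := hI.projBT.comp (braidedΔ q)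

lemma primMod_iff (hI : IsPreNicholsIdeal S I) {x : TV θ} :
    PrimMod q I x ↔ hI.comul x = hI.fst x + hI.snd x := by
  rw [PrimMod, ← hI.projBT_eq_zero, map_sub, map_add, sub_eq_zero]
  rfl

lemma fst_eq_zero (hI : IsPreNicholsIdeal S I) {x : TV θ} : hI.fst x = 0 ↔ x ∈ I := by
  change hI.projBT (BT.inl q x) = 0 ↔ _
  rw [hI.projBT_eq_zero]
  refine ⟨fun h => ?_, fun h => ?_⟩
  · have := sliceR_mem (f := coef []) (fun y hy => hI.coef_eq_zero hy (by simp)) h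
    rwa [sliceR_inl, coef_nil_one, one_smul] at this
  · have := inl_mul_inr_mem_mixBT_left (q := q) h 1
    rwa [map_one, mul_one] at this

lemma snd_eq_zero (hI : IsPreNicholsIdeal S I) {x : TV θ} (h : x ∈ I) : hI.snd x = 0 := by
  change hI.projBT (BT.inr q x) = 0
  rw [hI.projBT_eq_zero]
  have := inl_mul_inr_mem_mixBT_right (q := q) 1 h
  rwa [map_one, one_mul] at this

lemma snd_mul_fst (hI : IsPreNicholsIdeal S I) {a b c d : ℕ} {x y : TV θ}
    (hx : x ∈ homogD θ (bideg i j a b)) (hy : y ∈ homogD θ (bideg i j c d)) :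
    hI.snd x * hI.fst y = ((q i i : ℂ) ^ (a * c) * (q i j : ℂ) ^ (a * d) * (q j i : ℂ) ^ (b * c) *
      (q j j : ℂ) ^ (b * d)) • (hI.fst y * hI.snd x) := by
  simp only [fst, snd, AlgHom.comp_apply, ← map_mul, ← qf_bideg, BT.inr_mul_inl q hx hy, map_smul]

lemma isAdSeq {E : Type*} [Ring E] [Algebra ℂ E] (f : TV θ →ₐ[ℂ] E) :
    IsAdSeq (q i i) (q i j) (f (gen θ i)) fun m => f (adpow q i j m) where
  mul m := by simp [adpow_succ]

lemma isBraidedPair (hI : IsPreNicholsIdeal S I) (i j : Fin θ) :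
    IsBraidedPair (q i i) (q i j) (q j i) (q j j) (hI.fst (gen θ i))
      (fun m => hI.fst (adpow q i j m)) (hI.snd (gen θ i)) fun m => hI.snd (adpow q i j m) where
  fst := isAdSeq _
  snd := isAdSeq _
  XX := by simpa using hI.snd_mul_fst (left_mem_bideg i j) (left_mem_bideg i j)
  XY m := by simpa using hI.snd_mul_fst (left_mem_bideg i j) (adpow_mem_bideg q i j m)
  YX k := by simpa using hI.snd_mul_fst (adpow_mem_bideg q i j k) (left_mem_bideg i j)
  YY k m := by simpa using hI.snd_mul_fst (adpow_mem_bideg q i j k) (adpow_mem_bideg q i j m)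

lemma comul_gen (hI : IsPreNicholsIdeal S I) (i : Fin θ) :
    hI.comul (gen θ i) = hI.fst (gen θ i) + hI.snd (gen θ i) :=
  hI.primMod_iff.1 (primMod_gen i)

lemma isCoproductSeq (hI : IsPreNicholsIdeal S I) (i j : Fin θ) :
    IsCoproductSeq (q i i) (q i j) (hI.fst (gen θ i)) (fun m => hI.fst (adpow q i j m))
      (hI.snd (gen θ i)) (fun m => hI.snd (adpow q i j m)) fun m => hI.comul (adpow q i j m) where
  zero := hI.comul_gen j
  succ m := by rw [adpow_succ, map_sub, map_mul, map_smul, map_mul, comul_gen]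

lemma primMod_gen_sq (hI : IsPreNicholsIdeal S I) (h : 1 + (q j j : ℂ) = 0) :
    PrimMod q I (gen θ j * gen θ j) := by
  rw [hI.primMod_iff]
  simp only [map_mul, comul_gen]
  exact add_sq_of_mul_eq (hI.isBraidedPair j j).XX h

lemma primMod_gen_cube (hI : IsPreNicholsIdeal S I) (h : 1 + (q j j : ℂ) + (q j j : ℂ) ^ 2 = 0) :
    PrimMod q I (gen θ j * (gen θ j * gen θ j)) := by
  rw [hI.primMod_iff]
  simp only [map_mul, comul_gen]
  exact add_cube_of_mul_eq (hI.isBraidedPair j j).XX h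

lemma primMod_gen_fourth (hI : IsPreNicholsIdeal S I) (h : 1 + (q j j : ℂ) ^ 2 = 0) :
    PrimMod q I (gen θ j * (gen θ j * (gen θ j * gen θ j))) := by
  rw [hI.primMod_iff]
  simp only [map_mul, comul_gen]
  exact add_fourth_of_mul_eq (hI.isBraidedPair j j).XX h

lemma primMod_serre (hI : IsPreNicholsIdeal S I) (h : (q i j : ℂ) * q j i * q j j = 1) :
    PrimMod q I (adpow q i j 1 * adpow q i j 0 -
      ((q i j : ℂ) * q j j) • (adpow q i j 0 * adpow q i j 1)) := by
  rw [hI.primMod_iff]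
  simp only [map_sub, map_mul, map_smul]
  exact (hI.isCoproductSeq i j).serre (hI.isBraidedPair i j) h

end IsPreNicholsIdeal

/-- The element `[[x_{iij}, x_{ij}]_c, x_{ij}]_c` of `T(V)`. -/
def target (q : Fin θ → Fin θ → ℂˣ) (i j : Fin θ) : TV θ :=
  uElem (q i i : ℂ) (q i j) (q j i) (q j j) (adpow q i j)

lemma brk_brk_eq_target (q : Fin θ → Fin θ → ℂˣ) (i j : Fin θ) :
    brk q (δ θ i + δ θ i + δ θ i + δ θ j + δ θ j) (δ θ i + δ θ j)
      (brk q (δ θ i + δ θ i + δ θ j) (δ θ i + δ θ j) (xw q [i, i, j]) (xw q [i, j]))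
      (xw q [i, j]) = target q i j := by
  have hx1 : xw q [i, j] = adpow q i j 1 := by
    rw [xw, xw, adpow, adpow, degW_singleton]
    · simp
    · simp
  have hx2 : xw q [i, i, j] = adpow q i j 2 := by
    rw [xw, adpow, hx1, degW_cons, degW_singleton]
    · simp
      rfl
    · simp
  have h1 : δ θ i + δ θ j = bideg i j 1 1 := by simp [bideg]
  have h2 : δ θ i + δ θ i + δ θ j = bideg i j 2 1 := by simp [bideg, two_smul]
  have h3 : δ θ i + δ θ i + δ θ i + δ θ j + δ θ j = bideg i j 3 2 := by
    rw [bideg]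
    abel
  rw [hx1, hx2, h3, h2, h1, brk, brk, qf_bideg, qf_bideg]
  simp [target, uElem, zElem]

end

section

lemma pow_half_of_isPrimitiveRoot {ω : ℂ} {n : ℕ} (h : IsPrimitiveRoot ω (2 * n)) (hn : 0 < n) :
    ω ^ n = -1 := by
  refine (sq_eq_one_iff.1 ?_).resolve_left (h.pow_ne_one_of_pos_of_lt hn.ne' (by omega))
  rw [← pow_mul, mul_comm, h.pow_eq_one]

lemma isPrimitiveRoot_neg_of_odd {ζ : ℂ} {n : ℕ} (h : IsPrimitiveRoot ζ n) (hn : Odd n) :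
    IsPrimitiveRoot (-ζ) (2 * n) := by
  have h1 : orderOf (-1 : ℂ) = 2 := by
    rw [orderOf_neg_one]
    simp [ringChar.eq_zero]
  rw [IsPrimitiveRoot.iff_orderOf, neg_eq_neg_one_mul,
    (Commute.all _ _).orderOf_mul_eq_mul_orderOf_of_coprime, h1, ← h.eq_orderOf]
  rw [h1, ← h.eq_orderOf]
  exact hn.coprime_two_left

lemma inv_eq_pow_of_isPrimitiveRoot {ζ : ℂ} {n : ℕ} (h : IsPrimitiveRoot ζ (n + 1)) :
    ζ⁻¹ = ζ ^ n :=
  inv_eq_of_mul_eq_one_right ((pow_succ' ζ n).symm.trans h.pow_eq_one)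

variable {θ : ℕ} {q : Fin θ → Fin θ → ℂˣ} {S : BraidedStr θ q} {I : Submodule ℂ (TV θ)}
  {i j : Fin θ} {ω : ℂ}

lemma target_eq_zero_iff (hI : IsPreNicholsIdeal S I) : uElem (q i i : ℂ) (q i j) (q j i) (q j j)
    (fun m => hI.fst (adpow q i j m)) = 0 ↔ target q i j ∈ I := by
  rw [← hI.fst_eq_zero, target, map_uElem]

lemma target_mem_ufoSeven (hI : IsPreNicholsIdeal S I) (hGK : FinGK I) (hAAH : AAH)
    (h : IsRankTwo q i j ω 12 4 11 1) : target q i j ∈ I := by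
  have h6 : ω ^ 6 = -1 := pow_half_of_isPrimitiveRoot (n := 6) h.prim (by decide)
  have h2 : ω ^ 2 ≠ -1 := fun e => h.prim.pow_ne_one_of_pos_of_lt (l := 4) (by decide)
    (by decide) (by linear_combination (ω ^ 2 - 1) * e)
  have hω : ω ^ 4 = ω ^ 2 - 1 := by
    refine mul_left_cancel₀ (sub_ne_zero.2 h2) ?_
    linear_combination h6
  have hQ : 1 + (q i i : ℂ) + (q i i : ℂ) ^ 2 = 0 := by rw [h.left]; grind
  have hs : (q i j : ℂ) * q j i * q j j = 1 := by rw [h.edge, h.right]; grind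
  have hX : gen θ i * (gen θ i * gen θ i) ∈ I :=
    hI.mem_of_inf hGK hAAH h.ne (mul_mem_bideg (left_mem_bideg i j)
      (mul_mem_bideg (left_mem_bideg i j) (left_mem_bideg i j))) (hI.primMod_gen_cube hQ)
      (by decide) (.inr (.inl (infRight_ufoSeven_cube h)))
  have hr := hI.mem_of_inf hGK hAAH h.ne (serre_adpow_mem _) (hI.primMod_serre hs) (by decide)
    (.inr (.inl (infRight_ufoSeven_serre h)))
  rw [← hI.fst_eq_zero] at hX hr
  simp only [map_mul, map_sub, map_smul] at hX hr
  rw [← target_eq_zero_iff hI]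
  refine (hI.isBraidedPair i j).fst.uElem_ufoSeven hQ (Units.ne_zero _) hs ?_ hX hr
  rw [h.right]
  exact fun e => h2 (by grind)

lemma target_mem_ufoEight (hI : IsPreNicholsIdeal S I) (hGK : FinGK I) (hAAH : AAH)
    (h : IsRankTwo q i j ω 12 8 3 6) : target q i j ∈ I := by
  have h6 : ω ^ 6 = -1 := pow_half_of_isPrimitiveRoot (n := 6) h.prim (by decide)
  have h2 : ω ^ 2 ≠ -1 := fun e => h.prim.pow_ne_one_of_pos_of_lt (l := 4) (by decide)
    (by decide) (by linear_combination (ω ^ 2 - 1) * e)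
  have hω : ω ^ 4 = ω ^ 2 - 1 := by
    refine mul_left_cancel₀ (sub_ne_zero.2 h2) ?_
    linear_combination h6
  have hX : gen θ i * (gen θ i * gen θ i) ∈ I :=
    hI.mem_of_inf hGK hAAH h.ne (mul_mem_bideg (left_mem_bideg i j)
      (mul_mem_bideg (left_mem_bideg i j) (left_mem_bideg i j)))
      (hI.primMod_gen_cube (by rw [h.left]; grind))
      (by decide) (.inr (.inl (infRight_ufoEight_cube h)))
  have hY : adpow q i j 0 * adpow q i j 0 ∈ I :=
    hI.mem_of_inf hGK hAAH h.ne (mul_mem_bideg (adpow_mem_bideg q i j 0) (adpow_mem_bideg q i j 0))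
      (hI.primMod_gen_sq (by rw [h.right, h6]; ring))
      (by decide) (.inl (infLeft_ufoEight_square h))
  have hY' := hI.snd_eq_zero hY
  rw [← hI.fst_eq_zero] at hX
  rw [map_mul] at hY'
  simp only [map_mul] at hX
  refine hI.mem_of_inf hGK hAAH h.ne (uElem_adpow_mem _ _ _ _) ?_ (by decide)
    (.inl (infLeft_ufoEight h))
  rw [hI.primMod_iff, target]
  simp only [map_uElem]
  exact (hI.isCoproductSeq i j).uElem_ufoEight (hI.isBraidedPair i j) hω
    (by rw [h.left]; grind) h.edge (by rw [h.right, h6]) hX hY'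

lemma target_mem_ufoNine (hI : IsPreNicholsIdeal S I) (hGK : FinGK I) (hAAH : AAH)
    (h : IsRankTwo q i j ω 24 6 1 23) : target q i j ∈ I := by
  have h12 : ω ^ 12 = -1 := pow_half_of_isPrimitiveRoot (n := 12) h.prim (by decide)
  have h4 : ω ^ 4 ≠ -1 := fun e => h.prim.pow_ne_one_of_pos_of_lt (l := 8) (by decide)
    (by decide) (by linear_combination (ω ^ 4 - 1) * e)
  have hω : ω ^ 8 = ω ^ 4 - 1 := by
    refine mul_left_cancel₀ (sub_ne_zero.2 h4) ?_
    linear_combination h12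
  have hX : gen θ i * (gen θ i * (gen θ i * gen θ i)) ∈ I :=
    hI.mem_of_inf hGK hAAH h.ne (mul_mem_bideg (left_mem_bideg i j) (mul_mem_bideg
      (left_mem_bideg i j) (mul_mem_bideg (left_mem_bideg i j) (left_mem_bideg i j))))
      (hI.primMod_gen_fourth (by rw [h.left]; grind))
      (by decide) (.inr (.inl (infRight_ufoNine_fourth h)))
  have hr := hI.mem_of_inf hGK hAAH h.ne (serre_adpow_mem _)
    (hI.primMod_serre (by rw [h.edge, h.right]; grind)) (by decide)
    (.inl (infLeft_ufoNine_serre h))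
  rw [← hI.fst_eq_zero] at hX hr
  simp only [map_mul, map_sub, map_smul] at hX hr
  rw [← target_eq_zero_iff hI]
  exact (hI.isBraidedPair i j).fst.uElem_ufoNine (Units.ne_zero _) hω h.left
    (by rw [h.right]; grind) (by rw [h.edge, pow_one]) hX hr

lemma target_mem_ufoEleven (hI : IsPreNicholsIdeal S I) (hGK : FinGK I) (hAAH : AAH)
    (h : IsRankTwo q i j ω 30 1 27 20) : target q i j ∈ I := by
  have h15 : ω ^ 15 = -1 := pow_half_of_isPrimitiveRoot (n := 15) h.prim (by decide)
  have h5 : ω ^ 5 + 1 ≠ 0 := fun e => h.prim.pow_ne_one_of_pos_of_lt (l := 10) (by decide)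
    (by decide) (by linear_combination (ω ^ 5 - 1) * e)
  have h3 : ω ^ 3 + 1 ≠ 0 := fun e => h.prim.pow_ne_one_of_pos_of_lt (l := 6) (by decide)
    (by decide) (by linear_combination (ω ^ 3 - 1) * e)
  have hω : ω ^ 8 = -ω ^ 7 + ω ^ 5 + ω ^ 4 + ω ^ 3 - ω - 1 := by
    refine mul_left_cancel₀ (mul_ne_zero h5 h3) ?_
    linear_combination (ω + 1) * h15
  have hab : (q i j : ℂ) * q j i = -ω ^ 12 := by
    rw [h.edge]
    linear_combination ω ^ 12 * h15
  have hs : (q j j : ℂ) = -ω ^ 5 := by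
    rw [h.right]
    linear_combination ω ^ 5 * h15
  have hc : 1 + (q j j : ℂ) + (q j j : ℂ) ^ 2 = 0 := by
    rw [hs]
    refine (mul_eq_zero.1 ?_).resolve_left h5
    linear_combination h15
  have hQ : (q i i : ℂ) = ω := by rw [h.left, pow_one]
  have hY : adpow q i j 4 ∈ I := by
    refine hI.mem_of_inf hGK hAAH h.ne (adpow_mem_bideg q i j 4) ?_ (by decide)
      (.inr (.inr (infBoth_ufoEleven_serre h)))
    rw [hI.primMod_iff]
    refine (hI.isCoproductSeq i j).four (hI.isBraidedPair i j) ?_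
    rw [hQ, hab]
    linear_combination -h15
  have hr : rElem (q i j) (1 - ω ^ 2 - ω ^ 3 - ω ^ 4 + ω ^ 6) (ω ^ 5) (adpow q i j) ∈ I := by
    refine hI.mem_of_inf hGK hAAH h.ne (rElem_adpow_mem _ _ _) ?_ (by decide)
      (.inr (.inl (infRight_ufoEleven h)))
    rw [hI.primMod_iff]
    simp only [map_rElem]
    exact (hI.isCoproductSeq i j).rElem_ufoEleven (hI.isBraidedPair i j) hω hQ hab hs
  have hr' : adpow q i j 0 * (adpow q i j 0 * adpow q i j 0) ∈ I :=
    hI.mem_of_inf hGK hAAH h.ne (mul_mem_bideg (adpow_mem_bideg q i j 0)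
      (mul_mem_bideg (adpow_mem_bideg q i j 0) (adpow_mem_bideg q i j 0)))
      (hI.primMod_gen_cube hc)
      (by decide) (.inl (infLeft_ufoEleven_cube h))
  rw [← hI.fst_eq_zero] at hY hr hr'
  rw [map_rElem] at hr
  simp only [map_mul] at hr'
  rw [← target_eq_zero_iff hI]
  exact (hI.isBraidedPair i j).fst.uElem_ufoEleven (Units.ne_zero _) hω hQ hab hs rfl rfl hY hr hr'

lemma target_mem_brj (hI : IsPreNicholsIdeal S I) (hGK : FinGK I) (hAAH : AAH)
    (h : IsRankTwo q i j ω 18 1 16 12) : target q i j ∈ I := by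
  have h9 : ω ^ 9 = -1 := pow_half_of_isPrimitiveRoot (n := 9) h.prim (by decide)
  have h3 : ω ^ 3 + 1 ≠ 0 := fun e => h.prim.pow_ne_one_of_pos_of_lt (l := 6) (by decide)
    (by decide) (by linear_combination (ω ^ 3 - 1) * e)
  have hω : ω ^ 6 = ω ^ 3 - 1 := by
    refine mul_left_cancel₀ h3 ?_
    linear_combination h9
  have hab : (q i j : ℂ) * q j i = -ω ^ 7 := by
    rw [h.edge]
    linear_combination ω ^ 7 * h9
  have hs : (q j j : ℂ) = -ω ^ 3 := by
    rw [h.right]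
    linear_combination ω ^ 3 * h9
  have hQ : (q i i : ℂ) = ω := by rw [h.left, pow_one]
  have hY : adpow q i j 3 ∈ I := by
    refine hI.mem_of_inf hGK hAAH h.ne (adpow_mem_bideg q i j 3) ?_ (by decide)
      (.inl (infLeft_brj_serre h))
    have ht : 1 - (q i i : ℂ) ^ 2 * (q i j * q j i) = 0 := by
      rw [hQ, hab]
      linear_combination h9
    rw [hI.primMod_iff, (hI.isCoproductSeq i j).three (hI.isBraidedPair i j), ht]
    simp
  have hY' : adpow q i j 4 ∈ I := by
    rw [adpow_succ]
    exact sub_mem (hI.mul_left _ _ hY) (I.smul_mem _ (hI.mul_right _ _ hY))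
  have hr : rElem (q i j) (-ω ^ 2) (ω ^ 3) (adpow q i j) ∈ I := by
    refine hI.mem_of_inf hGK hAAH h.ne (rElem_adpow_mem _ _ _) ?_ (by decide)
      (.inr (.inl (infRight_brj h)))
    rw [hI.primMod_iff]
    simp only [map_rElem]
    exact (hI.isCoproductSeq i j).rElem_brj (hI.isBraidedPair i j) hω hQ hab hs
  have hr' : adpow q i j 0 * (adpow q i j 0 * adpow q i j 0) ∈ I :=
    hI.mem_of_inf hGK hAAH h.ne (mul_mem_bideg (adpow_mem_bideg q i j 0)
      (mul_mem_bideg (adpow_mem_bideg q i j 0) (adpow_mem_bideg q i j 0)))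
      (hI.primMod_gen_cube (by rw [hs]; grind))
      (by decide) (.inl (infLeft_brj_cube h))
  rw [← hI.fst_eq_zero] at hY hY' hr hr'
  rw [map_rElem] at hr
  simp only [map_mul] at hr'
  rw [← target_eq_zero_iff hI]
  exact (hI.isBraidedPair i j).fst.uElem_brj (Units.ne_zero _) hω hQ hab hs rfl rfl hY hY' hr hr'

lemma target_mem_gTwo (hI : IsPreNicholsIdeal S I) (hGK : FinGK I) (hAAH : AAH)
    (h : IsRankTwo q i j ω 6 1 3 3) : target q i j ∈ I := by
  have h3 : ω ^ 3 = -1 := pow_half_of_isPrimitiveRoot (n := 3) h.prim (by decide)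
  have h1 : ω + 1 ≠ 0 := fun e => h.prim.pow_ne_one_of_pos_of_lt (l := 2) (by decide)
    (by decide) (by linear_combination (ω - 1) * e)
  have hQ : (q i i : ℂ) = ω := by rw [h.left, pow_one]
  have hω : (q i i : ℂ) ^ 2 = q i i - 1 := by
    rw [hQ]
    refine mul_left_cancel₀ h1 ?_
    linear_combination h3
  have hab : (q i j : ℂ) * q j i = -1 := by rw [h.edge, h3]
  have hs : (q j j : ℂ) = -1 := by rw [h.right, h3]
  have hY : adpow q i j 4 ∈ I := by
    refine hI.mem_of_inf hGK hAAH h.ne (adpow_mem_bideg q i j 4) ?_ (by decide)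
      (.inr (.inr (infBoth_gTwo_serre h)))
    rw [hI.primMod_iff]
    refine (hI.isCoproductSeq i j).four (hI.isBraidedPair i j) ?_
    rw [hQ, hab, h3]
    ring
  have hr := hI.mem_of_inf hGK hAAH h.ne (serre_adpow_mem _)
    (hI.primMod_serre (by rw [hab, hs]; ring)) (by decide) (.inl (infLeft_gTwo_serre h))
  have hr' := hI.snd_eq_zero hr
  rw [← hI.fst_eq_zero] at hY hr
  simp only [map_mul, map_sub, map_smul] at hr hr'
  refine hI.mem_of_inf hGK hAAH h.ne (uElem_adpow_mem _ _ _ _) ?_ (by decide)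
    (.inr (.inr (infBoth_gTwo h)))
  rw [hI.primMod_iff, target]
  simp only [map_uElem]
  exact (hI.isCoproductSeq i j).uElem_gTwo (hI.isBraidedPair i j) hω hab hs (Units.ne_zero _)
    hY hr hr'

end

/-- Lemma 3.13: if the rank-two Dynkin diagram
`(q_{ii}, q̃_{ij}, q_{jj})` of vertices `i, j` is one of the listed diagrams of types
`ufo(7)`, `ufo(8)`, `ufo(9)`, `ufo(11)`, `brj(2,3)`, `G₂`, then
`[x_{3α_i+2α_j}, x_{ij}]_c = 0` in every finite-GKdim pre-Nichols algebra of `q`,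
where `x_{3α_i+2α_j} = [x_{iij}, x_{ij}]_c`. -/
theorem statement_16 (θ : ℕ) (q : Fin θ → Fin θ → ℂˣ) (S : BraidedStr θ q)
    (hconn : (dynkin q).Connected)
    (hfd : FiniteDimensional ℂ (TV θ ⧸ Jq S))
    (hAAH : AAH)
    (I : Submodule ℂ (TV θ)) (hI : IsPreNicholsIdeal S I) (hGK : FinGK I)
    (i j : Fin θ) (hij : i ≠ j)
    (hyp :
      -- ufo(7)
      (∃ ζ : ℂ, IsPrimitiveRoot ζ 12 ∧
        (q i i : ℂ) = -(ζ⁻¹) ^ 2 ∧ qtil q i j = ζ⁻¹ ∧ (q j j : ℂ) = ζ) ∨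
      -- ufo(8)
      (∃ ζ : ℂ, IsPrimitiveRoot ζ 12 ∧
        (q i i : ℂ) = -ζ ^ 2 ∧ qtil q i j = ζ ^ 3 ∧ (q j j : ℂ) = -1) ∨
      -- ufo(9)
      (∃ ζ : ℂ, IsPrimitiveRoot ζ 24 ∧
        (q i i : ℂ) = ζ ^ 6 ∧ qtil q i j = ζ ∧ (q j j : ℂ) = ζ⁻¹) ∨
      -- ufo(11)
      (∃ ζ : ℂ, IsPrimitiveRoot ζ 15 ∧
        (q i i : ℂ) = -ζ ∧ qtil q i j = -(ζ⁻¹) ^ 3 ∧ (q j j : ℂ) = ζ ^ 5) ∨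
      -- brj(2,3)
      (∃ ζ : ℂ, IsPrimitiveRoot ζ 9 ∧
        (q i i : ℂ) = -ζ ∧ qtil q i j = (ζ⁻¹) ^ 2 ∧ (q j j : ℂ) = ζ ^ 3) ∨
      -- G₂
      (∃ ζ : ℂ, IsPrimitiveRoot ζ 6 ∧
        (q i i : ℂ) = ζ ∧ qtil q i j = -1 ∧ (q j j : ℂ) = -1)) :
    brk q (δ θ i + δ θ i + δ θ i + δ θ j + δ θ j) (δ θ i + δ θ j)
      (brk q (δ θ i + δ θ i + δ θ j) (δ θ i + δ θ j) (xw q [i, i, j]) (xw q [i, j]))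
      (xw q [i, j]) ∈ I := by
  rw [brk_brk_eq_target]
  rcases hyp with ⟨ζ, hζ, h1, h2, h3⟩ | ⟨ζ, hζ, h1, h2, h3⟩ | ⟨ζ, hζ, h1, h2, h3⟩ |
    ⟨ζ, hζ, h1, h2, h3⟩ | ⟨ζ, hζ, h1, h2, h3⟩ | ⟨ζ, hζ, h1, h2, h3⟩ <;>
    rw [qtil] at h2
  · have h6 : ζ ^ 6 = -1 := pow_half_of_isPrimitiveRoot (n := 6) hζ (by decide)
    have hi : ζ⁻¹ = ζ ^ 11 := inv_eq_pow_of_isPrimitiveRoot hζ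
    exact target_mem_ufoSeven hI hGK hAAH ⟨hij, by decide, hζ, by rw [h1, hi]; grind,
      by rw [h2, hi], by rw [h3, pow_one]⟩
  · have h6 : ζ ^ 6 = -1 := pow_half_of_isPrimitiveRoot (n := 6) hζ (by decide)
    exact target_mem_ufoEight hI hGK hAAH ⟨hij, by decide, hζ, by rw [h1]; grind,
      h2, by rw [h3, h6]⟩
  · have hi : ζ⁻¹ = ζ ^ 23 := inv_eq_pow_of_isPrimitiveRoot hζ
    exact target_mem_ufoNine hI hGK hAAH ⟨hij, by decide, hζ, h1, by rw [h2, pow_one],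
      by rw [h3, hi]⟩
  · have hω : IsPrimitiveRoot (-ζ) 30 := isPrimitiveRoot_neg_of_odd hζ (by decide)
    have h15 := hζ.pow_eq_one
    have hi : ζ⁻¹ = ζ ^ 14 := inv_eq_pow_of_isPrimitiveRoot hζ
    exact target_mem_ufoEleven hI hGK hAAH ⟨hij, by decide, hω, by rw [h1, pow_one],
      by rw [h2, hi]; grind, by rw [h3]; grind⟩
  · have hω : IsPrimitiveRoot (-ζ) 18 := isPrimitiveRoot_neg_of_odd hζ (by decide)
    have h9 := hζ.pow_eq_one
    have hi : ζ⁻¹ = ζ ^ 8 := inv_eq_pow_of_isPrimitiveRoot hζ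
    exact target_mem_brj hI hGK hAAH ⟨hij, by decide, hω, by rw [h1, pow_one],
      by rw [h2, hi]; grind, by rw [h3]; grind⟩
  · have h3' : ζ ^ 3 = -1 := pow_half_of_isPrimitiveRoot (n := 3) hζ (by decide)
    exact target_mem_gTwo hI hGK hAAH ⟨hij, by decide, hζ, by rw [h1, pow_one],
      by rw [h2, h3'], by rw [h3, h3']⟩

end PreNicholsPaper
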